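/- Let R ↦ v_R be the family of positive normalized first eigenfunctions on Γ_R, which depends analytically on R ∈ (0,∞), and let w_R = ∂_R v_R denote its derivative with respect to R. Then there exists a constant C such that for all R ≥ 1: ‖w_R‖_{H¹(Γ_R)} ≤ C e^{−Rω}, where ω=√(π²−λ₁(Γ)). -/

import Mathlib

/-!
The eigenfunctions `v_R` and `v_r`, `r = R - h`, are compared on the smaller guide `Γ_r`. There `v_R`
solves `-Δv = λ₁(Γ_R) v` with Dirichlet conditions on the walls, and its only defect is a Neumann
datum on the two ends of size `F`. Three ingredients give the bound.

* Decay in the arms. The sine coefficients of `v_R` on the cross sections of an arm are multiples of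
  `cosh (κ_k (R - x))`, `κ_k = √(k²π² - λ₁(Γ_R))` (`coef_eq`). Normalisation bounds them at the start
  of the arm, so near the end they are `O(e^{-Rω})`; as the derivative vanishes at the end, the datum
  at distance `h` is `F = O(h e^{-Rω})` (`flux_near`), and the mass of `v_R` outside `Γ_r` is
  `O(h e^{-Rω})` as well (`mass_tail`).

* A spectral gap uniform in `R`. Cutting the guide into the corner square and the two arms with Neumann
  conditions shows that the energy is at least `π²` on functions of mean zero on the corner square
  (`Reg.bracket`). Since `λ₁(Γ_r) ≤ λ₁(Γ) < π²`, testing the equations of `v_R` and `v_r` with the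
  combination `v_R - β v_r` of vanishing corner mean, together with a trace inequality, gives
  `‖v_R - v_r‖_{H¹(Γ_r)} ≤ C h e^{-Rω}` (`diff_est`, `diff_est'`). Green's identity is available without
  any regularity at the walls and the reentrant corner by testing with truncations `G_ε(v)` which vanish
  near the walls (`trunc_identity`, `weak_identity`).

* Limit `h → 0`. The difference quotients converge pointwise to `w_R`, and the `H¹` norm is lower
  semicontinuous (`fatou_H1`). Where `w_R` is not differentiable, `fderiv` is zero, so no regularity
  of `w_R` is needed.

The facts `λ₁(Γ) < π²` and `λ₁(Γ_R) ≤ λ₁(Γ)` are proved too. The second holds because the removed parts of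
the arms carry energy at least `π²` (`lamR_le_of_trial`), and the first by an explicit trial function
`a(x) s(y) + s(x) a(y)` with piecewise polynomial profiles (`exists_trial`).
-/

noncomputable section
open MeasureTheory Set Real

/-- The interval `I = (-1,0)`. -/
def II : Set ℝ := Set.Ioo (-1) 0

/-- The broken guide `Γ = {x ∈ ℝ² : -1 < min(x₁,x₂) < 0}`. -/
def Gam : Set (ℝ × ℝ) := {p | -1 < min p.1 p.2 ∧ min p.1 p.2 < 0}

/-- The box `□_L = {x : max(|x₁+1|,|x₂+1|) < L}`. -/
def Box (L : ℝ) : Set (ℝ × ℝ) := {p | |p.1 + 1| < L ∧ |p.2 + 1| < L}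

/-- The finite guide `Γ_R = Γ ∩ □_{R+1}`. -/
def GamR (R : ℝ) : Set (ℝ × ℝ) := Gam ∩ Box (R + 1)

/-- The Neumann part `Σ_R = ∂Γ_R ∩ ∂□_{R+1}` of the boundary. -/
def Sig (R : ℝ) : Set (ℝ × ℝ) := frontier (GamR R) ∩ frontier (Box (R + 1))

/-- The Dirichlet part `∂Γ_R ∖ Σ_R` of the boundary. -/
def DirB (R : ℝ) : Set (ℝ × ℝ) := frontier (GamR R) \ Sig R

/-- Squared gradient `|∇u|² = (∂₁u)² + (∂₂u)²`. -/
def gradSq2 (u : ℝ × ℝ → ℝ) (p : ℝ × ℝ) : ℝ :=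
  (fderiv ℝ u p (1, 0)) ^ 2 + (fderiv ℝ u p (0, 1)) ^ 2

/-- Admissible functions for the mixed problem on `Γ_R`: `C¹` up to the boundary
(modelled by a globally `C¹` extension) vanishing on the Dirichlet part. -/
def AdmR (R : ℝ) (u : ℝ × ℝ → ℝ) : Prop :=
  ContDiff ℝ 1 u ∧ ∀ p ∈ DirB R, u p = 0

/-- First Rayleigh quotient `λ₁(Γ_R)` of the mixed Dirichlet–Neumann Laplacian on `Γ_R`. -/
def lamR (R : ℝ) : ℝ :=
  sInf {r | ∃ u : ℝ × ℝ → ℝ, AdmR R u ∧ (∫ p in GamR R, (u p) ^ 2) ≠ 0 ∧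
    r = (∫ p in GamR R, gradSq2 u p) / ∫ p in GamR R, (u p) ^ 2}

/-- First Rayleigh quotient `λ₁(Γ)` of the Dirichlet Laplacian on the broken guide `Γ`. -/
def lamG : ℝ :=
  sInf {r | ∃ u : ℝ × ℝ → ℝ, ContDiff ℝ 1 u ∧ HasCompactSupport u ∧ tsupport u ⊆ Gam ∧
    (∫ p in Gam, (u p) ^ 2) ≠ 0 ∧
    r = (∫ p in Gam, gradSq2 u p) / ∫ p in Gam, (u p) ^ 2}

/-- `ω = √(π² − λ₁(Γ))`. -/
def omega : ℝ := Real.sqrt (π ^ 2 - lamG)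

/-- Partial derivative `∂₁`. -/
def pd1 (u : ℝ × ℝ → ℝ) : ℝ × ℝ → ℝ := fun p => fderiv ℝ u p (1, 0)

/-- Partial derivative `∂₂`. -/
def pd2 (u : ℝ × ℝ → ℝ) : ℝ × ℝ → ℝ := fun p => fderiv ℝ u p (0, 1)

/-- Laplacian `Δ = ∂₁² + ∂₂²`. -/
def lap2 (u : ℝ × ℝ → ℝ) (p : ℝ × ℝ) : ℝ := pd1 (pd1 u) p + pd2 (pd2 u) p

/-- The open segments `Σ_R¹ = {R} × I` and `Σ_R² = I × {R}` (for `R ≥ 0`). -/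
def SigSeg (R : ℝ) : Set (ℝ × ℝ) := ({R} ×ˢ II) ∪ (II ×ˢ {R})

/-- `v` is the positive normalized first eigenfunction of the mixed Dirichlet–Neumann
Laplacian on `Γ_R`: smooth in `Γ_R` and up to the Neumann boundary, continuous up to the
closure, vanishing on the Dirichlet part, with vanishing normal derivative on `Σ_R`,
satisfying `-Δv = λ₁(Γ_R) v` in `Γ_R`, positive, and `L²`-normalized. -/
def IsFirstEF (R : ℝ) (v : ℝ × ℝ → ℝ) : Prop :=
  (∃ U : Set (ℝ × ℝ), IsOpen U ∧ GamR R ∪ SigSeg R ⊆ U ∧ ContDiffOn ℝ (⊤ : ℕ∞) v U) ∧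
  ContinuousOn v (closure (GamR R)) ∧
  (∀ p ∈ DirB R, v p = 0) ∧
  (∀ t ∈ II, pd1 v (R, t) = 0) ∧
  (∀ t ∈ II, pd2 v (t, R) = 0) ∧
  (∀ p ∈ GamR R, -(lap2 v p) = lamR R * v p) ∧
  (∀ p ∈ GamR R, 0 < v p) ∧
  (∫ p in GamR R, (v p) ^ 2) = 1

open Filter

/-! ### Poincaré inequalities on the unit interval -/

/-- Dirichlet–Poincaré inequality on the unit interval, with the sharp constant `π²`. The
comparison function `cos (k (t + 1/2))` with `k < π` is positive on the closed interval, so no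
information about `P'` at the end points is needed. -/
lemma poincare_dirichlet {P P' : ℝ → ℝ} (hc : ContinuousOn P (Icc (-1) 0)) (h0 : P (-1) = 0)
    (h1 : P 0 = 0) (hd : ∀ t ∈ Ioo (-1 : ℝ) 0, HasDerivAt P (P' t) t)
    (hi : IntegrableOn (fun t => P' t ^ 2) (Ioo (-1) 0)) :
    π ^ 2 * ∫ t in Ioo (-1 : ℝ) 0, P t ^ 2 ≤ ∫ t in Ioo (-1 : ℝ) 0, P' t ^ 2 := by
  have hPi : IntegrableOn (fun t => P t ^ 2) (Icc (-1) 0) :=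
    (hc.pow 2).integrableOn_compact isCompact_Icc
  have hi' : IntegrableOn (fun t => P' t ^ 2) (Icc (-1) 0) := by
    rwa [integrableOn_Icc_iff_integrableOn_Ioo]
  have key : ∀ k ∈ Ioo (0 : ℝ) π,
      k ^ 2 * ∫ t in Ioo (-1 : ℝ) 0, P t ^ 2 ≤ ∫ t in Ioo (-1 : ℝ) 0, P' t ^ 2 := by
    intro k hk
    have hcos : ∀ t ∈ Icc (-1 : ℝ) 0, 0 < cos (k * (t + 1 / 2)) := by
      intro t ht
      apply cos_pos_of_mem_Ioo
      constructor <;> nlinarith [ht.1, ht.2, hk.1, hk.2]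
    have hT : ∀ t ∈ Icc (-1 : ℝ) 0, HasDerivAt (fun t => k * tan (k * (t + 1 / 2)))
        (k ^ 2 + (k * tan (k * (t + 1 / 2))) ^ 2) t := by
      intro t ht
      have hne := (hcos t ht).ne'
      have h1 : HasDerivAt (fun t : ℝ => k * (t + 1 / 2)) k t := by
        simpa using ((hasDerivAt_id t).add_const (1 / 2 : ℝ)).const_mul k
      have h2 := ((hasDerivAt_tan hne).comp t h1).const_mul k
      refine h2.congr_deriv ?_
      rw [tan_eq_sin_div_cos]
      have hs := sin_sq_add_cos_sq (k * (t + 1 / 2))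
      generalize sin (k * (t + 1 / 2)) = x at *
      generalize cos (k * (t + 1 / 2)) = y at *
      field_simp
      linear_combination (-(k ^ 2)) * hs
    have hg := intervalIntegral.sub_le_integral_of_hasDeriv_right_of_le
      (g := fun t => -(k * tan (k * (t + 1 / 2)) * P t ^ 2))
      (g' := fun t => -((k ^ 2 + (k * tan (k * (t + 1 / 2))) ^ 2) * P t ^ 2
        + k * tan (k * (t + 1 / 2)) * (2 * P t * P' t)))
      (φ := fun t => P' t ^ 2 - k ^ 2 * P t ^ 2) (a := -1) (b := 0) (by norm_num)
      (ContinuousOn.neg (ContinuousOn.mul (fun t ht => (hT t ht).continuousAt.continuousWithinAt)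
        (hc.pow 2)))
      (fun t ht => by
        have := ((hT t (Ioo_subset_Icc_self ht)).mul ((hd t ht).pow 2)).neg.hasDerivWithinAt
          (s := Ioi t)
        refine this.congr_deriv ?_
        simp)
      (hi'.sub (hPi.const_mul _))
      (fun t ht => by nlinarith [sq_nonneg (P' t + k * tan (k * (t + 1 / 2)) * P t)])
    simp only [h0, h1] at hg
    rw [intervalIntegral.integral_of_le (by norm_num), integral_Ioc_eq_integral_Ioo,
      integral_sub hi ((hPi.mono_set Ioo_subset_Icc_self).const_mul _),
      integral_const_mul] at hg
    norm_num at hg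
    exact hg
  have ht : Filter.Tendsto (fun k : ℝ => k ^ 2 * ∫ t in Ioo (-1 : ℝ) 0, P t ^ 2) (nhdsWithin π (Iio π))
      (nhds (π ^ 2 * ∫ t in Ioo (-1 : ℝ) 0, P t ^ 2)) :=
    Filter.Tendsto.mono_left (Continuous.tendsto (by fun_prop) π) nhdsWithin_le_nhds
  refine le_of_tendsto ht ?_
  filter_upwards [Ioo_mem_nhdsLT pi_pos] with k hk using key k hk

/-- Wirtinger (Neumann–Poincaré) inequality on the unit interval, deduced from the Dirichlet one
applied to the primitive of `g - ∫ g`. -/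
lemma poincare_neumann {g g' : ℝ → ℝ} (hc : ContinuousOn g (Icc (-1) 0))
    (hd : ∀ t ∈ Ioo (-1 : ℝ) 0, HasDerivAt g (g' t) t)
    (hi : IntegrableOn (fun t => g' t ^ 2) (Ioo (-1) 0)) :
    π ^ 2 * ((∫ t in Ioo (-1 : ℝ) 0, g t ^ 2) - (∫ t in Ioo (-1 : ℝ) 0, g t) ^ 2)
      ≤ ∫ t in Ioo (-1 : ℝ) 0, g' t ^ 2 := by
  set m := ∫ t in Ioo (-1 : ℝ) 0, g t with hm
  set u : ℝ → ℝ := fun t => g t - m with hu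
  have huc : ContinuousOn u (Icc (-1) 0) := hc.sub continuousOn_const
  have hgi : IntegrableOn g (Ioo (-1) 0) :=
    (hc.integrableOn_compact isCompact_Icc).mono_set Ioo_subset_Icc_self
  have hg2i : IntegrableOn (fun t => g t ^ 2) (Ioo (-1) 0) :=
    ((hc.pow 2).integrableOn_compact isCompact_Icc).mono_set Ioo_subset_Icc_self
  have hu2i : IntegrableOn (fun t => u t ^ 2) (Ioo (-1) 0) :=
    ((huc.pow 2).integrableOn_compact isCompact_Icc).mono_set Ioo_subset_Icc_self
  have hvol : (volume.real (Ioo (-1 : ℝ) 0)) = 1 := by simp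
  have hconst : ∀ c : ℝ, IntegrableOn (fun _ : ℝ => c) (Ioo (-1 : ℝ) 0) := fun c =>
    integrableOn_const (by simp)
  have hu0 : ∫ t in Ioo (-1 : ℝ) 0, u t = 0 := by
    rw [hu, integral_sub hgi (hconst m), setIntegral_const, hvol, ← hm]; simp
  have hu2 : ∫ t in Ioo (-1 : ℝ) 0, u t ^ 2 = (∫ t in Ioo (-1 : ℝ) 0, g t ^ 2) - m ^ 2 := by
    have : ∀ t, u t ^ 2 = g t ^ 2 - (2 * m * g t - m ^ 2) := fun t => by simp only [hu]; ring
    simp_rw [this]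
    have h2 : IntegrableOn (fun t => 2 * m * g t - m ^ 2) (Ioo (-1) 0) :=
      Integrable.sub (hgi.const_mul _) (hconst _)
    rw [integral_sub hg2i h2, integral_sub (hgi.const_mul _) (hconst _),
      integral_const_mul, setIntegral_const, hvol, ← hm]
    simp; ring
  set P : ℝ → ℝ := fun t => ∫ s in (-1 : ℝ)..t, u s with hP
  have huI : IntegrableOn u (Icc (-1) 0) := huc.integrableOn_compact isCompact_Icc
  have hPc : ContinuousOn P (Icc (-1) 0) := by
    have := intervalIntegral.continuousOn_primitive_interval (μ := volume) (f := u)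
      (a := -1) (b := 0) (by rwa [uIcc_of_le (by norm_num : (-1 : ℝ) ≤ 0)])
    rwa [uIcc_of_le (by norm_num : (-1 : ℝ) ≤ 0)] at this
  have hPm : P (-1) = 0 := by simp [hP]
  have hP0 : P 0 = 0 := by
    simp only [hP]
    rw [intervalIntegral.integral_of_le (by norm_num), integral_Ioc_eq_integral_Ioo, hu0]
  have hPd : ∀ t ∈ Ioo (-1 : ℝ) 0, HasDerivAt P (u t) t := by
    intro t ht
    have hn : Icc (-1 : ℝ) 0 ∈ nhds t := Icc_mem_nhds ht.1 ht.2
    refine intervalIntegral.integral_hasDerivAt_right ?_ ?_ (huc.continuousAt hn)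
    · refine IntegrableOn.intervalIntegrable ?_
      rw [uIcc_of_le ht.1.le]
      exact huI.mono_set (Icc_subset_Icc_right ht.2.le)
    · exact huc.stronglyMeasurableAtFilter_nhdsWithin measurableSet_Icc t |>.filter_mono
        (by rw [nhdsWithin_eq_nhds.2 hn])
  have h1 := poincare_dirichlet hPc hPm hP0 hPd hu2i
  have hi' : IntegrableOn (fun t => g' t ^ 2) (Icc (-1) 0) := by
    rwa [integrableOn_Icc_iff_integrableOn_Ioo]
  have hP2 : IntegrableOn (fun t => P t ^ 2) (Icc (-1) 0) :=
    (hPc.pow 2).integrableOn_compact isCompact_Icc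
  have hu2' : IntegrableOn (fun t => u t ^ 2) (Icc (-1) 0) :=
    (huc.pow 2).integrableOn_compact isCompact_Icc
  have hsum : IntegrableOn (fun t => π ^ 2 / 2 * P t ^ 2 + 1 / (2 * π ^ 2) * g' t ^ 2)
      (Icc (-1) 0) := Integrable.add (hP2.const_mul _) (hi'.const_mul _)
  have hg := intervalIntegral.sub_le_integral_of_hasDeriv_right_of_le
      (g := fun t => -(P t * u t)) (g' := fun t => -(u t * u t + P t * g' t))
      (φ := fun t => π ^ 2 / 2 * P t ^ 2 + 1 / (2 * π ^ 2) * g' t ^ 2 - u t ^ 2)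
      (a := -1) (b := 0) (by norm_num) (hPc.mul huc).neg
      (fun t ht => by
        exact ((hPd t ht).mul ((hd t ht).sub_const m)).neg.hasDerivWithinAt)
      (Integrable.sub hsum hu2')
      (fun t ht => by
        have h2 : 0 ≤ (π * P t + g' t / π) ^ 2 / 2 := by positivity
        have h3 : (π * P t + g' t / π) ^ 2 / 2
          = π ^ 2 / 2 * P t ^ 2 + 1 / (2 * π ^ 2) * g' t ^ 2 + P t * g' t := by
          field_simp; ring
        nlinarith)
  simp only [hPm, hP0] at hg
  rw [intervalIntegral.integral_of_le (by norm_num), integral_Ioc_eq_integral_Ioo,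
      integral_sub (hsum.mono_set Ioo_subset_Icc_self) hu2i,
      integral_add ((hP2.mono_set Ioo_subset_Icc_self).const_mul _) (hi.const_mul _),
      integral_const_mul, integral_const_mul] at hg
  rw [← hu2]
  have h4 : 0 < π ^ 2 := by positivity
  have h5 : (∫ t in Ioo (-1 : ℝ) 0, u t ^ 2) ≤ 1 / π ^ 2 * ∫ t in Ioo (-1 : ℝ) 0, g' t ^ 2 := by
    have : 1 / (2 * π ^ 2) = 1 / π ^ 2 / 2 := by field_simp
    rw [this] at hg
    linarith
  calc _ ≤ π ^ 2 * (1 / π ^ 2 * ∫ t in Ioo (-1 : ℝ) 0, g' t ^ 2) := by gcongr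
    _ = _ := by field_simp

/-- The squared mean over a set of finite measure is controlled by the mean square. -/
lemma sq_integral_le {α : Type*} [MeasurableSpace α] {μ : Measure α} [IsFiniteMeasure μ] {f : α → ℝ}
    (hf : Integrable f μ) (hf2 : Integrable (fun x => f x ^ 2) μ) :
    (∫ x, f x ∂μ) ^ 2 ≤ μ.real univ * ∫ x, f x ^ 2 ∂μ := by
  rcases eq_or_ne (μ.real univ) 0 with h0 | h0
  · have : μ = 0 := by
      rw [measureReal_def, ENNReal.toReal_eq_zero_iff] at h0
      simpa using h0
    simp [this]
  · have hpos : 0 < μ.real univ := lt_of_le_of_ne measureReal_nonneg (Ne.symm h0)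
    set c := (∫ x, f x ∂μ) / μ.real univ with hc
    have h := integral_nonneg (μ := μ) (f := fun x => (f x - c) ^ 2) (fun x => sq_nonneg _)
    have e : ∀ x, (f x - c) ^ 2 = f x ^ 2 - (2 * c * f x - c ^ 2) := fun x => by ring
    simp_rw [e] at h
    have h3 : Integrable (fun x => 2 * c * f x - c ^ 2) μ :=
      Integrable.sub (hf.const_mul _) (integrable_const _)
    rw [integral_sub hf2 h3,
      integral_sub (hf.const_mul _) (integrable_const _), integral_const_mul, integral_const] at h
    have h2 : ∫ x, f x ∂μ = c * μ.real univ := by rw [hc]; field_simp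
    rw [h2] at h ⊢
    simp only [smul_eq_mul] at h
    nlinarith [mul_nonneg hpos.le h]

/-! ### A smooth truncation of the positive part -/

/-- The `C¹` truncation `G_ε(z) = m² / (m + ε)` with `m = (z - ε)⁺`: it vanishes for `z ≤ ε` and
converges to `z⁺` as `ε → 0`. -/
def Gt (ε z : ℝ) : ℝ := max (z - ε) 0 ^ 2 / (max (z - ε) 0 + ε)

/-- The derivative of the truncation `Gt ε`. -/
def Gt' (ε z : ℝ) : ℝ := 1 - ε ^ 2 / (max (z - ε) 0 + ε) ^ 2

lemma Gt_of_le {ε z : ℝ} (h : z ≤ ε) : Gt ε z = 0 := by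
  simp [Gt, max_eq_right (sub_nonpos.2 h)]

lemma Gt'_of_le {ε z : ℝ} (hε : 0 < ε) (h : z ≤ ε) : Gt' ε z = 0 := by
  simp [Gt', max_eq_right (sub_nonpos.2 h), hε.ne']

lemma Gt_nonneg {ε : ℝ} (hε : 0 < ε) (z : ℝ) : 0 ≤ Gt ε z := by
  have : 0 ≤ max (z - ε) 0 := le_max_right _ _
  unfold Gt; positivity

lemma Gt_le {ε z : ℝ} (hε : 0 < ε) (hz : 0 ≤ z) : Gt ε z ≤ z := by
  have h0 : 0 ≤ max (z - ε) 0 := le_max_right _ _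
  have h1 : max (z - ε) 0 ≤ z := max_le (by linarith) hz
  unfold Gt
  rw [div_le_iff₀ (by positivity)]
  nlinarith

lemma Gt'_nonneg {ε : ℝ} (hε : 0 < ε) (z : ℝ) : 0 ≤ Gt' ε z := by
  have h0 : 0 ≤ max (z - ε) 0 := le_max_right _ _
  unfold Gt'
  rw [sub_nonneg, div_le_one (by positivity)]
  nlinarith

lemma Gt'_le_one {ε : ℝ} (z : ℝ) : Gt' ε z ≤ 1 := by
  unfold Gt'
  have : 0 ≤ ε ^ 2 / (max (z - ε) 0 + ε) ^ 2 := by positivity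
  linarith

lemma continuous_Gt {ε : ℝ} (hε : 0 < ε) : Continuous (Gt ε) := by
  unfold Gt
  refine Continuous.div (by fun_prop) (by fun_prop) fun z => ?_
  have h0 : 0 ≤ max (z - ε) 0 := le_max_right _ _
  positivity

lemma continuous_Gt' {ε : ℝ} (hε : 0 < ε) : Continuous (Gt' ε) := by
  unfold Gt'
  refine continuous_const.sub (Continuous.div (by fun_prop) (by fun_prop) fun z => ?_)
  have h0 : 0 ≤ max (z - ε) 0 := le_max_right _ _
  positivity

lemma hasDerivAt_Gt {ε : ℝ} (hε : 0 < ε) (z : ℝ) : HasDerivAt (Gt ε) (Gt' ε z) z := by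
  have hne : ∀ y, y ≠ ε → HasDerivAt (Gt ε) (Gt' ε y) y := by
    intro y hy
    rcases lt_or_gt_of_ne hy with h | h
    · rw [Gt'_of_le hε h.le]
      refine (hasDerivAt_const y (0 : ℝ)).congr_of_eventuallyEq ?_
      filter_upwards [Iio_mem_nhds h] with t ht using Gt_of_le (le_of_lt ht)
    · have e : (fun t : ℝ => (t - ε) ^ 2 / t) =ᶠ[nhds y] Gt ε := by
        filter_upwards [Ioi_mem_nhds h] with t ht
        have ht' : ε < t := ht
        simp [Gt, max_eq_left (sub_nonneg.2 ht'.le)]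
      have hy0 : y ≠ 0 := by linarith
      have h1 : HasDerivAt (fun t : ℝ => t - ε) 1 y := (hasDerivAt_id y).sub_const ε
      have h2 := (h1.pow 2).div (hasDerivAt_id y) hy0
      refine (h2.congr_of_eventuallyEq e.symm).congr_deriv ?_
      simp only [Gt', max_eq_left (sub_nonneg.2 h.le), id]
      simp
      field_simp
      ring
  by_cases hz : z = ε
  · subst hz
    exact hasDerivAt_of_hasDerivAt_of_ne hne (continuous_Gt hε).continuousAt
      (continuous_Gt' hε).continuousAt
  · exact hne z hz

lemma tendsto_Gt {z : ℝ} (hz : 0 ≤ z) {e : ℕ → ℝ} (he : ∀ n, 0 < e n)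
    (hl : Filter.Tendsto e Filter.atTop (nhds 0)) :
    Filter.Tendsto (fun n => Gt (e n) z) Filter.atTop (nhds z) := by
  -- `z - 3 ε ≤ G_ε(z) ≤ z`
  refine tendsto_of_tendsto_of_tendsto_of_le_of_le (g := fun n => z - 3 * e n) (h := fun _ => z) ?_
    tendsto_const_nhds (fun n => ?_) (fun n => Gt_le (he n) hz)
  · simpa using tendsto_const_nhds.sub (hl.const_mul 3)
  · have h0 : 0 ≤ max (z - e n) 0 := le_max_right _ _
    have h1 : z - e n ≤ max (z - e n) 0 := le_max_left _ _
    have hp := he n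
    have : max (z - e n) 0 - e n ≤ Gt (e n) z := by
      unfold Gt
      rw [le_div_iff₀ (by positivity)]
      nlinarith
    show z - 3 * e n ≤ _
    linarith

lemma tendsto_Gt' {z : ℝ} (hz : 0 < z) {e : ℕ → ℝ}
    (hl : Filter.Tendsto e Filter.atTop (nhds 0)) :
    Filter.Tendsto (fun n => Gt' (e n) z) Filter.atTop (nhds 1) := by
  unfold Gt'
  have h1 : Filter.Tendsto (fun n => max (z - e n) 0 + e n) Filter.atTop (nhds z) := by
    have := ((tendsto_const_nhds (x := z)).sub hl).max (tendsto_const_nhds (x := (0 : ℝ)))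
    simpa [max_eq_left hz.le] using this.add hl
  have h2 := (hl.pow 2).div (h1.pow 2) (by positivity)
  simpa using (tendsto_const_nhds (x := (1 : ℝ))).sub h2

/-! ### Geometry of the finite guides -/

/-- The closed finite guide, in coordinates. -/
def KK (r : ℝ) : Set (ℝ × ℝ) := {p | p ∈ Icc ((-1 : ℝ), (-1 : ℝ)) (r, r) ∧ (p.1 ≤ 0 ∨ p.2 ≤ 0)}

lemma mem_Gam {p : ℝ × ℝ} : p ∈ Gam ↔ -1 < p.1 ∧ -1 < p.2 ∧ (p.1 < 0 ∨ p.2 < 0) := by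
  simp [Gam, and_assoc]

lemma mem_GamR {r : ℝ} (hr : 0 < r) {p : ℝ × ℝ} :
    p ∈ GamR r ↔ -1 < p.1 ∧ -1 < p.2 ∧ p.1 < r ∧ p.2 < r ∧ (p.1 < 0 ∨ p.2 < 0) := by
  simp only [GamR, mem_inter_iff, mem_Gam, Box, mem_ofPred_eq, abs_lt]
  constructor
  · rintro ⟨⟨h1, h2, h3⟩, ⟨h4, h5⟩, h6, h7⟩
    exact ⟨h1, h2, by linarith, by linarith, h3⟩
  · rintro ⟨h1, h2, h3, h4, h5⟩
    exact ⟨⟨h1, h2, h5⟩, ⟨by linarith, by linarith⟩, by linarith, by linarith⟩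

lemma mem_KK {r : ℝ} {p : ℝ × ℝ} :
    p ∈ KK r ↔ -1 ≤ p.1 ∧ -1 ≤ p.2 ∧ p.1 ≤ r ∧ p.2 ≤ r ∧ (p.1 ≤ 0 ∨ p.2 ≤ 0) := by
  simp [KK, Prod.le_def, and_assoc]

lemma isOpen_Gam : IsOpen Gam := by
  have : Gam = {p : ℝ × ℝ | -1 < min p.1 p.2} ∩ {p | min p.1 p.2 < 0} := rfl
  rw [this]
  exact (isOpen_lt (by fun_prop) (by fun_prop)).inter (isOpen_lt (by fun_prop) (by fun_prop))

lemma isOpen_Box (L : ℝ) : IsOpen (Box L) := by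
  have : Box L = {p : ℝ × ℝ | |p.1 + 1| < L} ∩ {p | |p.2 + 1| < L} := rfl
  rw [this]
  exact (isOpen_lt (by fun_prop) (by fun_prop)).inter (isOpen_lt (by fun_prop) (by fun_prop))

lemma isOpen_GamR (r : ℝ) : IsOpen (GamR r) := isOpen_Gam.inter (isOpen_Box _)

lemma measurableSet_GamR (r : ℝ) : MeasurableSet (GamR r) := (isOpen_GamR r).measurableSet

lemma isClosed_KK (r : ℝ) : IsClosed (KK r) := by
  have : KK r = Icc ((-1 : ℝ), (-1 : ℝ)) (r, r) ∩ ({p | p.1 ≤ 0} ∪ {p | p.2 ≤ 0}) := rfl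
  rw [this]
  exact isClosed_Icc.inter ((isClosed_le (by fun_prop) (by fun_prop)).union
    (isClosed_le (by fun_prop) (by fun_prop)))

lemma isCompact_KK (r : ℝ) : IsCompact (KK r) :=
  isCompact_Icc.of_isClosed_subset (isClosed_KK r) fun _ h => h.1

lemma GamR_subset_KK {r : ℝ} (hr : 0 < r) : GamR r ⊆ KK r := by
  intro p hp
  rw [mem_GamR hr] at hp
  rw [mem_KK]
  exact ⟨hp.1.le, hp.2.1.le, hp.2.2.1.le, hp.2.2.2.1.le, hp.2.2.2.2.imp le_of_lt le_of_lt⟩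

lemma GamR_mono {r R : ℝ} (hr : 0 < r) (h : r ≤ R) : GamR r ⊆ GamR R := by
  intro p hp
  rw [mem_GamR hr] at hp
  rw [mem_GamR (hr.trans_le h)]
  exact ⟨hp.1, hp.2.1, by linarith, by linarith, hp.2.2.2.2⟩

lemma KK_mono {r R : ℝ} (h : r ≤ R) : KK r ⊆ KK R := by
  intro p hp
  rw [mem_KK] at hp ⊢
  exact ⟨hp.1, hp.2.1, by linarith, by linarith, hp.2.2.2.2⟩

lemma KK_subset_closure {r : ℝ} (hr : 0 < r) : KK r ⊆ closure (GamR r) := by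
  -- the guide is star-shaped with respect to `(-1/2, -1/2)`
  intro p hp
  rw [mem_KK] at hp
  have ht : Filter.Tendsto (fun t : ℝ => ((1 - t) * p.1 - t / 2, (1 - t) * p.2 - t / 2))
      (nhdsWithin 0 (Ioi 0)) (nhds p) := by
    have : ContinuousAt (fun t : ℝ => ((1 - t) * p.1 - t / 2, (1 - t) * p.2 - t / 2)) 0 := by
      fun_prop
    have h := this.tendsto
    simp only [sub_zero, one_mul, zero_div, Prod.mk.eta] at h
    exact h.mono_left nhdsWithin_le_nhds
  refine mem_closure_of_tendsto ht ?_
  filter_upwards [Ioo_mem_nhdsGT (zero_lt_one' ℝ)] with t ht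
  obtain ⟨h1, h2, h3, h4, h5⟩ := hp
  obtain ⟨t0, t1⟩ := ht
  rw [mem_GamR hr]
  refine ⟨?_, ?_, ?_, ?_, h5.imp (fun h => ?_) (fun h => ?_)⟩ <;> simp only <;> nlinarith

lemma GamR_subset_box {r : ℝ} (hr : 0 < r) : GamR r ⊆ Icc ((-1 : ℝ), (-1 : ℝ)) (r, r) :=
  fun _ hp => (GamR_subset_KK hr hp).1

lemma volume_GamR_lt_top {r : ℝ} (hr : 0 < r) : volume (GamR r) < ⊤ :=
  (measure_mono (GamR_subset_box hr)).trans_lt isCompact_Icc.measure_lt_top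

lemma KK_diff_Gam_subset_DirB {r : ℝ} (hr : 0 < r) {p : ℝ × ℝ} (hp : p ∈ KK r) (hG : p ∉ Gam)
    (h1 : p.1 < r) (h2 : p.2 < r) : p ∈ DirB r := by
  have hB : p ∈ Box (r + 1) := by
    rw [mem_KK] at hp
    constructor <;> rw [abs_lt] <;> constructor <;> linarith
  have hf : p ∈ frontier (GamR r) := by
    rw [(isOpen_GamR r).frontier_eq]
    exact ⟨KK_subset_closure hr hp, fun h => hG h.1⟩
  refine ⟨hf, fun h => ?_⟩
  have := h.2
  rw [(isOpen_Box _).frontier_eq] at this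
  exact this.2 hB

lemma DirB_not_mem_Gam {r : ℝ} {p : ℝ × ℝ} (hp : p ∈ DirB r) : p ∉ Gam := by
  intro hG
  obtain ⟨hf, hS⟩ := hp
  have hf' := hf
  rw [(isOpen_GamR r).frontier_eq] at hf'
  have hB : p ∉ Box (r + 1) := fun h => hf'.2 ⟨hG, h⟩
  refine hS ⟨hf, ?_⟩
  rw [(isOpen_Box _).frontier_eq]
  exact ⟨closure_mono inter_subset_right hf'.1, hB⟩

/-- The corners at the Neumann ends belong to `Σ_r`, so the boundary condition there comes from
continuity. -/
lemma eq_zero_of_continuousOn {r : ℝ} (hr : 0 < r) {v : ℝ × ℝ → ℝ} (hc : ContinuousOn v (KK r))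
    (h0 : ∀ p ∈ DirB r, v p = 0) {p : ℝ × ℝ} (hp : p ∈ KK r) (hG : p ∉ Gam) : v p = 0 := by
  by_cases h1 : p.1 < r
  · by_cases h2 : p.2 < r
    · exact h0 p (KK_diff_Gam_subset_DirB hr hp hG h1 h2)
    · -- the corners at the Neumann end are limits of Dirichlet points
      have hp' := mem_KK.1 hp
      have e2 : p.2 = r := le_antisymm hp'.2.2.2.1 (not_lt.1 h2)
      have hs : ∀ t ∈ Ioo 0 r, ((p.1, p.2 - t) : ℝ × ℝ) ∈ KK r ∧ v (p.1, p.2 - t) = 0 := by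
        intro t ht
        obtain ⟨t0, t1⟩ := ht
        have hK : ((p.1, p.2 - t) : ℝ × ℝ) ∈ KK r := by
          rw [mem_KK]
          refine ⟨hp'.1, by simp only; linarith, hp'.2.2.1, by simp only; linarith, ?_⟩
          left; simp only; rcases hp'.2.2.2.2 with h | h <;> linarith
        refine ⟨hK, h0 _ (KK_diff_Gam_subset_DirB hr hK ?_ h1 (by simp only; linarith))⟩
        intro hm
        rw [mem_Gam] at hG hm
        simp only at hm
        exact hG ⟨hm.1, by linarith, by rcases hm.2.2 with h | h; exacts [Or.inl h, by linarith]⟩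
      have ht : Filter.Tendsto (fun t : ℝ => ((p.1, p.2 - t) : ℝ × ℝ)) (nhdsWithin 0 (Ioi 0))
          (nhdsWithin p (KK r)) := by
        refine tendsto_nhdsWithin_iff.2 ⟨?_, ?_⟩
        · have : ContinuousAt (fun t : ℝ => ((p.1, p.2 - t) : ℝ × ℝ)) 0 := by fun_prop
          have h := this.tendsto
          simp only [sub_zero, Prod.mk.eta] at h
          exact h.mono_left nhdsWithin_le_nhds
        · filter_upwards [Ioo_mem_nhdsGT hr] with t ht using (hs t ht).1
      refine tendsto_nhds_unique ((hc p hp).tendsto.comp ht) ?_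
      refine tendsto_const_nhds.congr' ?_
      filter_upwards [Ioo_mem_nhdsGT hr] with t ht using (hs t ht).2.symm
  · have hp' := mem_KK.1 hp
    have e1 : p.1 = r := le_antisymm hp'.2.2.1 (not_lt.1 h1)
    have h2 : p.2 < r := by rcases hp'.2.2.2.2 with h | h <;> linarith
    have hs : ∀ t ∈ Ioo 0 r, ((p.1 - t, p.2) : ℝ × ℝ) ∈ KK r ∧ v (p.1 - t, p.2) = 0 := by
      intro t ht
      obtain ⟨t0, t1⟩ := ht
      have hK : ((p.1 - t, p.2) : ℝ × ℝ) ∈ KK r := by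
        rw [mem_KK]
        refine ⟨by simp only; linarith, hp'.2.1, by simp only; linarith, hp'.2.2.2.1, ?_⟩
        right; simp only; rcases hp'.2.2.2.2 with h | h <;> linarith
      refine ⟨hK, h0 _ (KK_diff_Gam_subset_DirB hr hK ?_ (by simp only; linarith) h2)⟩
      intro hm
      rw [mem_Gam] at hG hm
      simp only at hm
      exact hG ⟨by linarith, hm.2.1, by rcases hm.2.2 with h | h; exacts [by linarith, Or.inr h]⟩
    have ht : Filter.Tendsto (fun t : ℝ => ((p.1 - t, p.2) : ℝ × ℝ)) (nhdsWithin 0 (Ioi 0))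
        (nhdsWithin p (KK r)) := by
      refine tendsto_nhdsWithin_iff.2 ⟨?_, ?_⟩
      · have : ContinuousAt (fun t : ℝ => ((p.1 - t, p.2) : ℝ × ℝ)) 0 := by fun_prop
        have h := this.tendsto
        simp only [sub_zero, Prod.mk.eta] at h
        exact h.mono_left nhdsWithin_le_nhds
      · filter_upwards [Ioo_mem_nhdsGT hr] with t ht using (hs t ht).1
    refine tendsto_nhds_unique ((hc p hp).tendsto.comp ht) ?_
    refine tendsto_const_nhds.congr' ?_
    filter_upwards [Ioo_mem_nhdsGT hr] with t ht using (hs t ht).2.symm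

/-- A nonnegative solution of `-Δg = μ g` in the finite guide `Γ_r`, regular up to the ends,
vanishing on the closed Dirichlet walls, whose normal derivative at the ends is bounded by `F`.
Both `v_r` (with `F = 0`) and the restriction of `v_R`, `R > r`, are of this kind. -/
structure Good (r μ F : ℝ) (g : ℝ × ℝ → ℝ) : Prop where
  diff : ∀ p ∈ KK r ∩ Gam, ContDiffAt ℝ 2 g p
  cont : ContinuousOn g (KK r)
  zero : ∀ p ∈ KK r, p ∉ Gam → g p = 0
  pos : ∀ p ∈ GamR r, 0 < g p
  eqn : ∀ p ∈ GamR r, lap2 g p = -μ * g p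
  bd1 : ∀ t ∈ Ioo (-1 : ℝ) 0, |pd1 g (r, t)| ≤ F
  bd2 : ∀ t ∈ Ioo (-1 : ℝ) 0, |pd2 g (t, r)| ≤ F

lemma KK_inter_Gam_subset {r : ℝ} (hr : 0 < r) : KK r ∩ Gam ⊆ GamR r ∪ SigSeg r := by
  rintro p ⟨hK, hG⟩
  rw [mem_KK] at hK
  rw [mem_Gam] at hG
  by_cases h1 : p.1 < r
  · by_cases h2 : p.2 < r
    · exact Or.inl ((mem_GamR hr).2 ⟨hG.1, hG.2.1, h1, h2, hG.2.2⟩)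
    · refine Or.inr (Or.inr ⟨⟨hG.1, ?_⟩, le_antisymm hK.2.2.2.1 (not_lt.1 h2)⟩)
      rcases hG.2.2 with h | h <;> linarith
  · refine Or.inr (Or.inl ⟨le_antisymm hK.2.2.1 (not_lt.1 h1), ⟨hG.2.1, ?_⟩⟩)
    rcases hG.2.2 with h | h <;> linarith

lemma IsFirstEF.good {r : ℝ} (hr : 0 < r) {v : ℝ × ℝ → ℝ} (h : IsFirstEF r v) :
    Good r (lamR r) 0 v := by
  obtain ⟨⟨U, hU, hsub, hC⟩, hc, h0, hb1, hb2, heq, hpos, -⟩ := h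
  have hc' := hc.mono (KK_subset_closure hr)
  refine ⟨fun p hp => ?_, hc', fun p hp hG => eq_zero_of_continuousOn hr hc' h0 hp hG, hpos,
    fun p hp => ?_, fun t ht => ?_, fun t ht => ?_⟩
  · exact (hC.contDiffAt (hU.mem_nhds (hsub (KK_inter_Gam_subset hr hp)))).of_le (WithTop.coe_le_coe.2 (le_top : (2 : ℕ∞) ≤ ⊤))
  · have := heq p hp; linarith
  · rw [hb1 t ht]; simp
  · rw [hb2 t ht]; simp

lemma seg1_mem {r t : ℝ} (hr : 0 < r) (ht : t ∈ Ioo (-1 : ℝ) 0) : ((r, t) : ℝ × ℝ) ∈ KK r ∩ Gam := by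
  constructor
  · rw [mem_KK]; exact ⟨by simp only; linarith, ht.1.le, le_rfl, by simp only; linarith [ht.2], Or.inr ht.2.le⟩
  · rw [mem_Gam]; exact ⟨by simp only; linarith, ht.1, Or.inr ht.2⟩

lemma seg2_mem {r t : ℝ} (hr : 0 < r) (ht : t ∈ Ioo (-1 : ℝ) 0) : ((t, r) : ℝ × ℝ) ∈ KK r ∩ Gam := by
  constructor
  · rw [mem_KK]; exact ⟨ht.1.le, by simp only; linarith, by simp only; linarith [ht.2], le_rfl, Or.inl ht.2.le⟩
  · rw [mem_Gam]; exact ⟨ht.1, by simp only; linarith, Or.inl ht.2⟩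

lemma Good.restrict {r R μ F F' : ℝ} (hr : 0 < r) (hR : r ≤ R) {g : ℝ × ℝ → ℝ} (h : Good R μ F g)
    (h1 : ∀ t ∈ Ioo (-1 : ℝ) 0, |pd1 g (r, t)| ≤ F')
    (h2 : ∀ t ∈ Ioo (-1 : ℝ) 0, |pd2 g (t, r)| ≤ F') : Good r μ F' g :=
  ⟨fun p hp => h.diff p ⟨KK_mono hR hp.1, hp.2⟩, h.cont.mono (KK_mono hR),
    fun p hp => h.zero p (KK_mono hR hp), fun p hp => h.pos p (GamR_mono hr hR hp),
    fun p hp => h.eqn p (GamR_mono hr hR hp), h1, h2⟩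

lemma Good.nonneg {r μ F : ℝ} (hr : 0 < r) {g : ℝ × ℝ → ℝ} (h : Good r μ F g) {p : ℝ × ℝ}
    (hp : p ∈ KK r) : 0 ≤ g p := by
  have hc : ContinuousOn g (closure (GamR r)) :=
    h.cont.mono (closure_minimal (GamR_subset_KK hr) (isClosed_KK r))
  have := hc.image_closure
  have h2 : g p ∈ closure (g '' GamR r) := this ⟨p, KK_subset_closure hr hp, rfl⟩
  have h3 : closure (g '' GamR r) ⊆ Ici 0 := by
    refine closure_minimal ?_ isClosed_Ici
    rintro _ ⟨q, hq, rfl⟩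
    exact (h.pos q hq).le
  exact h3 h2

/-! Reflection across the diagonal. -/

lemma swap_mem_KK {r : ℝ} {p : ℝ × ℝ} : p.swap ∈ KK r ↔ p ∈ KK r := by
  simp only [mem_KK, Prod.fst_swap, Prod.snd_swap]; tauto

lemma swap_mem_Gam {p : ℝ × ℝ} : p.swap ∈ Gam ↔ p ∈ Gam := by
  simp only [mem_Gam, Prod.fst_swap, Prod.snd_swap]; tauto

lemma swap_mem_GamR {r : ℝ} (hr : 0 < r) {p : ℝ × ℝ} : p.swap ∈ GamR r ↔ p ∈ GamR r := by
  simp only [mem_GamR hr, Prod.fst_swap, Prod.snd_swap]; tauto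

/-- The reflection across the diagonal as a continuous linear equivalence. -/
def swapL : (ℝ × ℝ) ≃L[ℝ] (ℝ × ℝ) := ContinuousLinearEquiv.prodComm ℝ ℝ ℝ

lemma swapL_apply (p : ℝ × ℝ) : swapL p = p.swap := rfl

lemma pd1_swap (g : ℝ × ℝ → ℝ) (p : ℝ × ℝ) : pd1 (g ∘ Prod.swap) p = pd2 g p.swap := by
  have := swapL.comp_right_fderiv (f := g) (x := p)
  simp only [pd1, pd2]
  have e : (g ∘ Prod.swap) = g ∘ swapL := rfl
  rw [e, this]
  rfl

lemma pd2_swap (g : ℝ × ℝ → ℝ) (p : ℝ × ℝ) : pd2 (g ∘ Prod.swap) p = pd1 g p.swap := by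
  have := swapL.comp_right_fderiv (f := g) (x := p)
  simp only [pd1, pd2]
  have e : (g ∘ Prod.swap) = g ∘ swapL := rfl
  rw [e, this]
  rfl

lemma lap2_swap (g : ℝ × ℝ → ℝ) (p : ℝ × ℝ) : lap2 (g ∘ Prod.swap) p = lap2 g p.swap := by
  have e1 : pd1 (g ∘ Prod.swap) = pd2 g ∘ Prod.swap := funext fun p => pd1_swap g p
  have e2 : pd2 (g ∘ Prod.swap) = pd1 g ∘ Prod.swap := funext fun p => pd2_swap g p
  simp only [lap2, e1, e2, pd1_swap, pd2_swap]
  ring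

lemma Good.swap {r μ F : ℝ} (hr : 0 < r) {g : ℝ × ℝ → ℝ} (h : Good r μ F g) :
    Good r μ F (g ∘ Prod.swap) := by
  refine ⟨fun p hp => ?_, ?_, fun p hp hG => ?_, fun p hp => ?_, fun p hp => ?_, fun t ht => ?_,
    fun t ht => ?_⟩
  · exact ContDiffAt.comp p (h.diff p.swap ⟨swap_mem_KK.2 hp.1, swap_mem_Gam.2 hp.2⟩)
      (swapL.contDiff.contDiffAt)
  · exact h.cont.comp continuous_swap.continuousOn fun p hp => swap_mem_KK.2 hp
  · exact h.zero _ (swap_mem_KK.2 hp) fun hh => hG (swap_mem_Gam.1 hh)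
  · exact h.pos _ ((swap_mem_GamR hr).2 hp)
  · rw [lap2_swap]; exact h.eqn _ ((swap_mem_GamR hr).2 hp)
  · rw [pd1_swap]; exact h.bd2 t ht
  · rw [pd2_swap]; exact h.bd1 t ht

lemma setIntegral_GamR_swap {r : ℝ} (hr : 0 < r) (f : ℝ × ℝ → ℝ) :
    ∫ p in GamR r, f p.swap = ∫ p in GamR r, f p := by
  have hm : MeasurePreserving (Prod.swap : ℝ × ℝ → ℝ × ℝ) volume volume :=
    Measure.measurePreserving_swap
  have := hm.setIntegral_preimage_emb (MeasurableEquiv.prodComm.measurableEmbedding) f (GamR r)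
  rw [← this]
  congr 2
  ext p
  exact (swap_mem_GamR hr).symm

/-! ### Green's identity on the finite guide -/

/-- The scalar product `∇f · ∇g`. -/
def dot (f g : ℝ × ℝ → ℝ) (p : ℝ × ℝ) : ℝ := pd1 f p * pd1 g p + pd2 f p * pd2 g p

lemma pd1_contDiffAt {g : ℝ × ℝ → ℝ} {p : ℝ × ℝ} (h : ContDiffAt ℝ 2 g p) :
    ContDiffAt ℝ 1 (pd1 g) p :=
  (h.fderiv_right (m := 1) (by norm_num)).clm_apply contDiffAt_const

lemma pd2_contDiffAt {g : ℝ × ℝ → ℝ} {p : ℝ × ℝ} (h : ContDiffAt ℝ 2 g p) :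
    ContDiffAt ℝ 1 (pd2 g) p :=
  (h.fderiv_right (m := 1) (by norm_num)).clm_apply contDiffAt_const

lemma lap2_continuousAt {g : ℝ × ℝ → ℝ} {p : ℝ × ℝ} (h : ContDiffAt ℝ 2 g p) :
    ContinuousAt (lap2 g) p := by
  have h1 : ContDiffAt ℝ 0 (pd1 (pd1 g)) p :=
    ((pd1_contDiffAt h).fderiv_right (m := 0) (by norm_num)).clm_apply contDiffAt_const
  have h2 : ContDiffAt ℝ 0 (pd2 (pd2 g)) p :=
    ((pd2_contDiffAt h).fderiv_right (m := 0) (by norm_num)).clm_apply contDiffAt_const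
  exact h1.continuousAt.add h2.continuousAt

lemma box_inter_Gam {r : ℝ} {p : ℝ × ℝ} (hp : p ∈ Icc ((-1 : ℝ), (-1 : ℝ)) (r, r)) (hG : p ∈ Gam) :
    p ∈ KK r := by
  rw [mem_Gam] at hG
  exact ⟨hp, hG.2.2.imp le_of_lt le_of_lt⟩

/-- Near a point of the closed box outside the guide, `f` is small on the guide. -/
lemma Good.eventually_lt {r μ F : ℝ} {f : ℝ × ℝ → ℝ} (hf : Good r μ F f) {ε : ℝ} (hε : 0 < ε)
    {p : ℝ × ℝ} (hG : p ∉ Gam) :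
    ∀ᶠ q in nhdsWithin p (Icc ((-1 : ℝ), (-1 : ℝ)) (r, r)), q ∈ Gam → q ∈ KK r ∧ f q ≤ ε := by
  by_cases hK : p ∈ KK r
  · have h1 : ∀ᶠ q in nhdsWithin p (KK r), f q < ε :=
      (hf.cont p hK).eventually_lt tendsto_const_nhds (by rw [hf.zero p hK hG]; exact hε)
    rw [eventually_nhdsWithin_iff] at h1 ⊢
    filter_upwards [h1] with q hq hqI hqG
    have := box_inter_Gam hqI hqG
    exact ⟨this, (hq this).le⟩
  · have h1 : ∀ᶠ q in nhds p, q ∉ KK r := (isClosed_KK r).isOpen_compl.mem_nhds hK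
    rw [eventually_nhdsWithin_iff]
    filter_upwards [h1] with q hq hqI hqG
    exact absurd (box_inter_Gam hqI hqG) hq

/-- A function vanishing where `f ≤ ε` extends continuously by zero from the guide to the closed
box. -/
lemma Good.continuousOn_indicator {r μ F : ℝ} {f : ℝ × ℝ → ℝ} (hf : Good r μ F f) {ε : ℝ}
    (hε : 0 < ε) {Φ : ℝ × ℝ → ℝ} (hc : ∀ p ∈ KK r ∩ Gam, ContinuousAt Φ p)
    (h0 : ∀ p, f p ≤ ε → Φ p = 0) :
    ContinuousOn (Gam.indicator Φ) (Icc ((-1 : ℝ), (-1 : ℝ)) (r, r)) := by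
  intro p hp
  by_cases hG : p ∈ Gam
  · have h1 : ContinuousAt (Gam.indicator Φ) p := by
      refine (hc p ⟨box_inter_Gam hp hG, hG⟩).congr ?_
      filter_upwards [isOpen_Gam.mem_nhds hG] with q hq
      rw [indicator_of_mem hq]
    exact h1.continuousWithinAt
  · refine (continuousWithinAt_const (b := (0 : ℝ))).congr_of_eventuallyEq ?_
      (indicator_of_notMem hG _)
    filter_upwards [hf.eventually_lt hε hG] with q hq
    by_cases hqG : q ∈ Gam
    · rw [indicator_of_mem hqG]; exact h0 q (hq hqG).2
    · rw [indicator_of_notMem hqG]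

lemma Good.hasFDerivAt_indicator {r μ F : ℝ} (hr : 0 < r) {f : ℝ × ℝ → ℝ} (hf : Good r μ F f)
    {ε : ℝ} (hε : 0 < ε) {Φ : ℝ × ℝ → ℝ} {Φ' : ℝ × ℝ → (ℝ × ℝ →L[ℝ] ℝ)}
    (hd : ∀ p ∈ GamR r, HasFDerivAt Φ (Φ' p) p)
    (h0 : ∀ p, f p ≤ ε → Φ p = 0) {p : ℝ × ℝ} (hp : p ∈ Ioo (-1) r ×ˢ Ioo (-1) r) :
    HasFDerivAt (Gam.indicator Φ) (Gam.indicator Φ' p) p := by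
  have hpI : Icc ((-1 : ℝ), (-1 : ℝ)) (r, r) ∈ nhds p := by
    refine Filter.mem_of_superset ((isOpen_Ioo.prod isOpen_Ioo).mem_nhds hp) ?_
    rw [Icc_prod_eq]
    exact prod_mono Ioo_subset_Icc_self Ioo_subset_Icc_self
  by_cases hG : p ∈ Gam
  · rw [indicator_of_mem hG]
    refine (hd p ?_).congr_of_eventuallyEq ?_
    · rw [mem_GamR hr]
      exact ⟨hp.1.1, hp.2.1, hp.1.2, hp.2.2, (mem_Gam.1 hG).2.2⟩
    · filter_upwards [isOpen_Gam.mem_nhds hG] with q hq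
      rw [indicator_of_mem hq]
  · rw [indicator_of_notMem hG]
    refine (hasFDerivAt_const (0 : ℝ) p).congr_of_eventuallyEq ?_
    have := hf.eventually_lt hε hG
    rw [nhdsWithin_eq_nhds.2 hpI] at this
    filter_upwards [this] with q hq
    by_cases hqG : q ∈ Gam
    · rw [indicator_of_mem hqG]; exact h0 q (hq hqG).2
    · rw [indicator_of_notMem hqG]

lemma box_inter_Gam_ae {r : ℝ} (hr : 0 < r) :
    (Icc ((-1 : ℝ), (-1 : ℝ)) (r, r) ∩ Gam : Set (ℝ × ℝ)) =ᵐ[volume] GamR r := by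
  have h1 : (Ioo (-1 : ℝ) r ×ˢ Ioo (-1 : ℝ) r : Set (ℝ × ℝ)) =ᵐ[volume]
      (Icc (-1 : ℝ) r ×ˢ Icc (-1 : ℝ) r : Set (ℝ × ℝ)) :=
    Measure.set_prod_ae_eq Ioo_ae_eq_Icc Ioo_ae_eq_Icc
  have h2 : (Ioo (-1 : ℝ) r ×ˢ Ioo (-1 : ℝ) r : Set (ℝ × ℝ)) ∩ Gam = GamR r := by
    ext p
    simp only [mem_inter_iff, mem_prod, mem_Ioo, mem_Gam, mem_GamR hr]
    tauto
  rw [Icc_prod_eq, ← h2]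
  exact h1.symm.inter (Filter.EventuallyEq.refl _ _)

/-- Integral of an edge term of the box over the part of the edge lying in the guide. -/
lemma integral_edge {r : ℝ} (hr : 0 < r) (φ : ℝ → ℝ) (h0 : ∀ t, t ∉ Ioo (-1 : ℝ) 0 → φ t = 0) :
    ∫ t in (-1 : ℝ)..r, φ t = ∫ t in Ioo (-1 : ℝ) 0, φ t := by
  rw [intervalIntegral.integral_of_le (by linarith)]
  refine (setIntegral_eq_of_subset_of_forall_sdiff_eq_zero measurableSet_Ioc
    (fun t ht => ⟨ht.1, by linarith [ht.2]⟩) fun t ht => h0 t ht.2)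

/-- Green's identity tested with the truncated function `G_ε(f)`, which vanishes near the
Dirichlet walls. -/
lemma trunc_identity {r μ F μ' F' : ℝ} (hr : 0 < r) {f g : ℝ × ℝ → ℝ} (hf : Good r μ F f)
    (hg : Good r μ' F' g) {ε : ℝ} (hε : 0 < ε) :
    IntegrableOn (fun p => Gt' ε (f p) * dot f g p + Gt ε (f p) * lap2 g p) (GamR r) ∧
    ∫ p in GamR r, (Gt' ε (f p) * dot f g p + Gt ε (f p) * lap2 g p) =
      (∫ t in Ioo (-1 : ℝ) 0, Gt ε (f (t, r)) * pd2 g (t, r)) +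
      ∫ t in Ioo (-1 : ℝ) 0, Gt ε (f (r, t)) * pd1 g (r, t) := by
  have hsub : GamR r ⊆ KK r ∩ Gam := fun p hp => ⟨GamR_subset_KK hr hp, hp.1⟩
  set D : ℝ × ℝ → ℝ := fun p => Gt' ε (f p) * dot f g p + Gt ε (f p) * lap2 g p with hD
  have hfd : ∀ p ∈ KK r ∩ Gam, ContDiffAt ℝ 1 f p := fun p hp => (hf.diff p hp).of_le (by norm_num)
  have hpf1 : ∀ p ∈ KK r ∩ Gam, ContinuousAt (pd1 f) p := fun p hp =>
    (pd1_contDiffAt (hf.diff p hp)).continuousAt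
  have hpf2 : ∀ p ∈ KK r ∩ Gam, ContinuousAt (pd2 f) p := fun p hp =>
    (pd2_contDiffAt (hf.diff p hp)).continuousAt
  have hpg1 : ∀ p ∈ KK r ∩ Gam, ContDiffAt ℝ 1 (pd1 g) p := fun p hp =>
    (pd1_contDiffAt (hg.diff p hp))
  have hpg2 : ∀ p ∈ KK r ∩ Gam, ContDiffAt ℝ 1 (pd2 g) p := fun p hp =>
    (pd2_contDiffAt (hg.diff p hp))
  have hGf : ∀ p ∈ KK r ∩ Gam, ContinuousAt (fun p => Gt ε (f p)) p := fun p hp =>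
    (continuous_Gt hε).continuousAt.comp (hfd p hp).continuousAt
  have hGf' : ∀ p ∈ KK r ∩ Gam, ContinuousAt (fun p => Gt' ε (f p)) p := fun p hp =>
    (continuous_Gt' hε).continuousAt.comp (hfd p hp).continuousAt
  have hDc : ContinuousOn (Gam.indicator D) (Icc ((-1 : ℝ), (-1 : ℝ)) (r, r)) := by
    refine hf.continuousOn_indicator hε (fun p hp => ?_) (fun p hp => ?_)
    · exact ((hGf' p hp).mul (((hpf1 p hp).mul (hpg1 p hp).continuousAt).add
        ((hpf2 p hp).mul (hpg2 p hp).continuousAt))).add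
        ((hGf p hp).mul (lap2_continuousAt (hg.diff p hp)))
    · simp [hD, Gt_of_le hp, Gt'_of_le hε hp]
  have hDi : IntegrableOn (Gam.indicator D) (Icc ((-1 : ℝ), (-1 : ℝ)) (r, r)) :=
    hDc.integrableOn_compact isCompact_Icc
  have hDi' : IntegrableOn D (GamR r) := by
    have h1 := hDi.mono_set (inter_subset_left (t := Gam))
    rw [integrableOn_indicator_iff isOpen_Gam.measurableSet, ← inter_assoc, inter_comm Gam,
      inter_assoc, inter_self] at h1
    exact h1.congr_set_ae (box_inter_Gam_ae hr).symm
  refine ⟨hDi', ?_⟩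
  have hderiv : ∀ (G : ℝ × ℝ → ℝ), (∀ p ∈ KK r ∩ Gam, ContDiffAt ℝ 1 G p) → ∀ p ∈ GamR r,
      HasFDerivAt (fun p => Gt ε (f p) * G p)
        (Gt ε (f p) • fderiv ℝ G p + G p • (Gt' ε (f p) • fderiv ℝ f p)) p := by
    intro G hG p hp
    have h1 : HasFDerivAt f (fderiv ℝ f p) p :=
      ((hfd p (hsub hp)).differentiableAt (by norm_num)).hasFDerivAt
    have h2 : HasFDerivAt G (fderiv ℝ G p) p :=
      ((hG p (hsub hp)).differentiableAt (by norm_num)).hasFDerivAt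
    exact ((hasDerivAt_Gt hε (f p)).comp_hasFDerivAt p h1).mul h2
  have h0 : ∀ (G : ℝ × ℝ → ℝ) p, f p ≤ ε → Gt ε (f p) * G p = 0 := fun G p hp => by
    simp [Gt_of_le hp]
  have hdiv := integral_divergence_prod_Icc_of_hasFDerivAt_of_le
    (Gam.indicator fun p => Gt ε (f p) * pd1 g p) (Gam.indicator fun p => Gt ε (f p) * pd2 g p)
    (Gam.indicator fun p => Gt ε (f p) • fderiv ℝ (pd1 g) p + pd1 g p • (Gt' ε (f p) • fderiv ℝ f p))
    (Gam.indicator fun p => Gt ε (f p) • fderiv ℝ (pd2 g) p + pd2 g p • (Gt' ε (f p) • fderiv ℝ f p))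
    ((-1 : ℝ), (-1 : ℝ)) (r, r) (by constructor <;> simp only <;> linarith)
    (hf.continuousOn_indicator hε (fun p hp => (hGf p hp).mul (hpg1 p hp).continuousAt) (h0 _))
    (hf.continuousOn_indicator hε (fun p hp => (hGf p hp).mul (hpg2 p hp).continuousAt) (h0 _))
    (fun p hp => hf.hasFDerivAt_indicator hr hε (hderiv _ hpg1) (h0 _) hp)
    (fun p hp => hf.hasFDerivAt_indicator hr hε (hderiv _ hpg2) (h0 _) hp)
  have hform : ∀ p, (Gam.indicator (fun p => Gt ε (f p) • fderiv ℝ (pd1 g) p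
        + pd1 g p • (Gt' ε (f p) • fderiv ℝ f p)) p) (1, 0)
      + (Gam.indicator (fun p => Gt ε (f p) • fderiv ℝ (pd2 g) p
        + pd2 g p • (Gt' ε (f p) • fderiv ℝ f p)) p) (0, 1) = Gam.indicator D p := by
    intro p
    by_cases hG : p ∈ Gam
    · simp only [indicator_of_mem hG, hD, dot, lap2]
      simp only [pd1, pd2, add_apply, smul_apply,
        smul_eq_mul]
      ring
    · simp [indicator_of_notMem hG]
  simp only [hform] at hdiv
  have hdiv := hdiv hDi
  rw [setIntegral_indicator isOpen_Gam.measurableSet, setIntegral_congr_set (box_inter_Gam_ae hr)]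
    at hdiv
  rw [hdiv]
  have hbot : ∀ t : ℝ, ((t, -1) : ℝ × ℝ) ∉ Gam := fun t h => by
    rw [mem_Gam] at h; exact lt_irrefl _ h.2.1
  have hleft : ∀ t : ℝ, ((-1, t) : ℝ × ℝ) ∉ Gam := fun t h => by
    rw [mem_Gam] at h; exact lt_irrefl _ h.1
  simp only [indicator_of_notMem (hbot _), indicator_of_notMem (hleft _),
    intervalIntegral.integral_zero, sub_zero]
  rw [integral_edge hr, integral_edge hr]
  · congr 1
    · refine setIntegral_congr_fun measurableSet_Ioo fun t ht => ?_
      exact indicator_of_mem (seg2_mem hr ht).2 _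
    · refine setIntegral_congr_fun measurableSet_Ioo fun t ht => ?_
      exact indicator_of_mem (seg1_mem hr ht).2 _
  · intro t ht
    refine indicator_of_notMem (fun h => ht ?_) _
    rw [mem_Gam] at h
    exact ⟨h.2.1, h.2.2.resolve_left (by simp only; linarith)⟩
  · intro t ht
    refine indicator_of_notMem (fun h => ht ?_) _
    rw [mem_Gam] at h
    exact ⟨h.1, h.2.2.resolve_right (by simp only; linarith)⟩

/-- Fatou's lemma for pointwise limits with uniformly bounded integrals. -/
lemma lintegral_le_of_tendsto {α : Type*} [MeasurableSpace α] {μ : Measure α}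
    {f : ℕ → α → ENNReal} {g : α → ENNReal} {C : ENNReal} (hf : ∀ n, AEMeasurable (f n) μ)
    (hb : ∀ᶠ n in atTop, ∫⁻ x, f n x ∂μ ≤ C)
    (hl : ∀ᵐ x ∂μ, Tendsto (fun n => f n x) atTop (nhds (g x))) : ∫⁻ x, g x ∂μ ≤ C := by
  calc ∫⁻ x, g x ∂μ = ∫⁻ x, liminf (fun n => f n x) atTop ∂μ :=
        lintegral_congr_ae (hl.mono fun x hx => hx.liminf_eq.symm)
    _ ≤ liminf (fun n => ∫⁻ x, f n x ∂μ) atTop := lintegral_liminf_le' hf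
    _ ≤ C := liminf_le_of_frequently_le' hb.frequently

lemma gradSq2_eq_dot (f : ℝ × ℝ → ℝ) (p : ℝ × ℝ) : gradSq2 f p = dot f f p := by
  simp only [gradSq2, dot, pd1, pd2]; ring

lemma dot_self_nonneg (f : ℝ × ℝ → ℝ) (p : ℝ × ℝ) : 0 ≤ dot f f p := by
  simp only [dot]; nlinarith [sq_nonneg (pd1 f p), sq_nonneg (pd2 f p)]

lemma abs_dot_le (f g : ℝ × ℝ → ℝ) (p : ℝ × ℝ) : |dot f g p| ≤ dot f f p + dot g g p := by
  simp only [dot]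
  rw [abs_le]
  constructor <;> nlinarith [sq_nonneg (pd1 f p + pd1 g p), sq_nonneg (pd2 f p + pd2 g p),
    sq_nonneg (pd1 f p - pd1 g p), sq_nonneg (pd2 f p - pd2 g p),
    sq_nonneg (pd1 f p), sq_nonneg (pd2 f p), sq_nonneg (pd1 g p), sq_nonneg (pd2 g p)]

lemma Good.dot_continuousOn {r μ F μ' F' : ℝ} (hr : 0 < r) {f g : ℝ × ℝ → ℝ} (hf : Good r μ F f)
    (hg : Good r μ' F' g) : ContinuousOn (dot f g) (GamR r) := by
  intro p hp
  have hp' : p ∈ KK r ∩ Gam := ⟨GamR_subset_KK hr hp, hp.1⟩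
  exact (((pd1_contDiffAt (hf.diff p hp')).continuousAt.mul
    (pd1_contDiffAt (hg.diff p hp')).continuousAt).add
    ((pd2_contDiffAt (hf.diff p hp')).continuousAt.mul
    (pd2_contDiffAt (hg.diff p hp')).continuousAt)).continuousWithinAt

lemma integrableOn_of_KK {r : ℝ} (hr : 0 < r) {φ : ℝ × ℝ → ℝ} (h : ContinuousOn φ (KK r)) :
    IntegrableOn φ (GamR r) :=
  (h.integrableOn_compact (isCompact_KK r)).mono_set (GamR_subset_KK hr)

lemma Good.exists_bound {r μ F : ℝ} {f : ℝ × ℝ → ℝ} (hf : Good r μ F f) :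
    ∃ M, 0 ≤ M ∧ ∀ p ∈ KK r, |f p| ≤ M := by
  obtain ⟨M, hM⟩ := (isCompact_KK r).exists_bound_of_continuousOn hf.cont
  exact ⟨max M 0, le_max_right _ _, fun p hp => (hM p hp).trans (le_max_left _ _)⟩

/-- The truncation levels `1 / (n + 1)`. -/
def en (n : ℕ) : ℝ := 1 / ((n : ℝ) + 1)

lemma en_pos (n : ℕ) : 0 < en n := by unfold en; positivity

lemma en_tendsto : Tendsto en atTop (nhds 0) := tendsto_one_div_add_atTop_nhds_zero_nat

lemma edge_norm_le {ψ : ℝ → ℝ} {B : ℝ} (h : ∀ t ∈ Ioo (-1 : ℝ) 0, |ψ t| ≤ B) :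
    |∫ t in Ioo (-1 : ℝ) 0, ψ t| ≤ B := by
  have := norm_setIntegral_le_of_norm_le_const (μ := volume) (s := Ioo (-1 : ℝ) 0) (f := ψ) (C := B)
    (by simp) h
  simpa using this

/-- Finite energy: testing the equation with the truncated solution and letting `ε → 0`. -/
lemma Good.grad_integrable {r μ F : ℝ} (hr : 0 < r) {f : ℝ × ℝ → ℝ} (hf : Good r μ F f) :
    IntegrableOn (dot f f) (GamR r) := by
  obtain ⟨M, hM0, hM⟩ := hf.exists_bound
  have hmeas : AEStronglyMeasurable (dot f f) (volume.restrict (GamR r)) :=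
    (hf.dot_continuousOn hr hf).aestronglyMeasurable (measurableSet_GamR r)
  have hGfc : ∀ n, ContinuousOn (fun p => Gt (en n) (f p)) (KK r) := fun n =>
    (continuous_Gt (en_pos n)).comp_continuousOn hf.cont
  have hGfc' : ∀ n, ContinuousOn (fun p => Gt' (en n) (f p)) (GamR r) := fun n =>
    (continuous_Gt' (en_pos n)).comp_continuousOn (hf.cont.mono (GamR_subset_KK hr))
  have hlapc : IntegrableOn (fun p => |μ| * f p ^ 2) (GamR r) :=
    integrableOn_of_KK hr (continuousOn_const.mul (hf.cont.pow 2))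
  set C : ℝ := (F * M + F * M) + ∫ p in GamR r, |μ| * f p ^ 2 with hC
  have hF0 : 0 ≤ F := (abs_nonneg _).trans (hf.bd1 (-1/2) (by norm_num))
  have hb : ∀ n, ∫⁻ p in GamR r, ENNReal.ofReal (Gt' (en n) (f p) * dot f f p) ≤ ENNReal.ofReal C := by
    intro n
    obtain ⟨hi, he⟩ := trunc_identity hr hf hf (en_pos n)
    have hl : IntegrableOn (fun p => Gt (en n) (f p) * (-μ * f p)) (GamR r) :=
      integrableOn_of_KK hr ((hGfc n).mul (continuousOn_const.mul hf.cont))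
    have hlap : EqOn (fun p => Gt (en n) (f p) * (-μ * f p)) (fun p => Gt (en n) (f p) * lap2 f p)
        (GamR r) := fun p hp => by simp only [hf.eqn p hp]
    have hl' : IntegrableOn (fun p => Gt (en n) (f p) * lap2 f p) (GamR r) :=
      hl.congr_fun hlap (measurableSet_GamR r)
    have hd : IntegrableOn (fun p => Gt' (en n) (f p) * dot f f p) (GamR r) := by
      refine (hi.sub hl').congr (Eventually.of_forall fun p => ?_)
      simp
    rw [← ofReal_integral_eq_lintegral_ofReal hd (Eventually.of_forall fun p =>
      mul_nonneg (Gt'_nonneg (en_pos n) _) (dot_self_nonneg f p))]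
    apply ENNReal.ofReal_le_ofReal
    rw [integral_add hd hl', ← setIntegral_congr_fun (measurableSet_GamR r) hlap] at he
    have h1 : |∫ t in Ioo (-1 : ℝ) 0, Gt (en n) (f (t, r)) * pd2 f (t, r)| ≤ F * M := by
      refine edge_norm_le fun t ht => ?_
      have hk := (seg2_mem hr ht).1
      rw [abs_mul, abs_of_nonneg (Gt_nonneg (en_pos n) _), mul_comm]
      exact mul_le_mul (hf.bd2 t ht) ((Gt_le (en_pos n) (hf.nonneg hr hk)).trans
        ((le_abs_self _).trans (hM _ hk))) (Gt_nonneg (en_pos n) _) hF0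
    have h2 : |∫ t in Ioo (-1 : ℝ) 0, Gt (en n) (f (r, t)) * pd1 f (r, t)| ≤ F * M := by
      refine edge_norm_le fun t ht => ?_
      have hk := (seg1_mem hr ht).1
      rw [abs_mul, abs_of_nonneg (Gt_nonneg (en_pos n) _), mul_comm]
      exact mul_le_mul (hf.bd1 t ht) ((Gt_le (en_pos n) (hf.nonneg hr hk)).trans
        ((le_abs_self _).trans (hM _ hk))) (Gt_nonneg (en_pos n) _) hF0
    have h3 : -∫ p in GamR r, Gt (en n) (f p) * (-μ * f p) ≤ ∫ p in GamR r, |μ| * f p ^ 2 := by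
      rw [← integral_neg]
      refine setIntegral_mono_on hl.neg hlapc (measurableSet_GamR r) fun p hp => ?_
      have hk := hf.nonneg hr (GamR_subset_KK hr hp)
      have hg1 := Gt_le (en_pos n) hk
      have hg0 := Gt_nonneg (en_pos n) (f p)
      calc -(Gt (en n) (f p) * (-μ * f p)) = μ * (Gt (en n) (f p) * f p) := by ring
        _ ≤ |μ| * (Gt (en n) (f p) * f p) := by gcongr; exact le_abs_self μ
        _ ≤ |μ| * (f p * f p) := by gcongr
        _ = _ := by ring
    rw [hC]
    linarith [le_abs_self (∫ t in Ioo (-1 : ℝ) 0, Gt (en n) (f (t, r)) * pd2 f (t, r)),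
      le_abs_self (∫ t in Ioo (-1 : ℝ) 0, Gt (en n) (f (r, t)) * pd1 f (r, t))]
  have hlim : ∫⁻ p in GamR r, ENNReal.ofReal (dot f f p) ≤ ENNReal.ofReal C := by
    refine lintegral_le_of_tendsto (f := fun n p => ENNReal.ofReal (Gt' (en n) (f p) * dot f f p))
      (fun n => ?_) (Eventually.of_forall hb) ?_
    · exact ((((hGfc' n).aestronglyMeasurable (measurableSet_GamR r)).mul hmeas).aemeasurable).ennreal_ofReal
    · refine (ae_restrict_iff' (measurableSet_GamR r)).2 (Eventually.of_forall fun p hp => ?_)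
      refine (ENNReal.continuous_ofReal.tendsto _).comp ?_
      simpa using (tendsto_Gt' (hf.pos p hp) en_tendsto).mul_const (dot f f p)
  exact (lintegral_ofReal_ne_top_iff_integrable hmeas
    (Eventually.of_forall fun p => dot_self_nonneg f p)).1 (ne_top_of_le_ne_top ENNReal.ofReal_ne_top hlim)

lemma Good.dot_integrable {r μ F μ' F' : ℝ} (hr : 0 < r) {f g : ℝ × ℝ → ℝ} (hf : Good r μ F f)
    (hg : Good r μ' F' g) : IntegrableOn (dot f g) (GamR r) :=
  ((hf.grad_integrable hr).add (hg.grad_integrable hr)).mono'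
    ((hf.dot_continuousOn hr hg).aestronglyMeasurable (measurableSet_GamR r))
    (Eventually.of_forall fun p => abs_dot_le f g p)

/-- Green's identity on the finite guide. -/
lemma weak_identity {r μ F μ' F' : ℝ} (hr : 0 < r) {f g : ℝ × ℝ → ℝ} (hf : Good r μ F f)
    (hg : Good r μ' F' g) :
    ∫ p in GamR r, dot f g p = μ' * (∫ p in GamR r, f p * g p) +
      ((∫ t in Ioo (-1 : ℝ) 0, f (t, r) * pd2 g (t, r)) +
      ∫ t in Ioo (-1 : ℝ) 0, f (r, t) * pd1 g (r, t)) := by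
  obtain ⟨M, hM0, hM⟩ := hf.exists_bound
  have hF0 : 0 ≤ F' := (abs_nonneg _).trans (hg.bd1 (-1/2) (by norm_num))
  have hfg : IntegrableOn (fun p => f p * g p) (GamR r) :=
    integrableOn_of_KK hr (hf.cont.mul hg.cont)
  have hL : Tendsto (fun n => ∫ p in GamR r, (Gt' (en n) (f p) * dot f g p + Gt (en n) (f p) * lap2 g p))
      atTop (nhds (∫ p in GamR r, (dot f g p + f p * lap2 g p))) := by
    refine tendsto_integral_of_dominated_convergence
      (fun p => |dot f g p| + |μ'| * |f p * g p|) (fun n => (trunc_identity hr hf hg (en_pos n)).1.1)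
      ((hf.dot_integrable hr hg).abs.add (hfg.abs.const_mul _)) (fun n => ?_) ?_
    · refine (ae_restrict_iff' (measurableSet_GamR r)).2 (Eventually.of_forall fun p hp => ?_)
      have hk := hf.nonneg hr (GamR_subset_KK hr hp)
      refine (norm_add_le _ _).trans (add_le_add ?_ ?_)
      · rw [norm_mul, Real.norm_eq_abs, Real.norm_eq_abs, abs_of_nonneg (Gt'_nonneg (en_pos n) _)]
        exact mul_le_of_le_one_left (abs_nonneg _) (Gt'_le_one _)
      · rw [hg.eqn p hp, norm_mul, Real.norm_eq_abs, Real.norm_eq_abs,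
          abs_of_nonneg (Gt_nonneg (en_pos n) _), abs_mul, abs_neg, abs_mul, abs_of_nonneg hk]
        calc Gt (en n) (f p) * (|μ'| * |g p|) ≤ f p * (|μ'| * |g p|) := by
              gcongr; exact Gt_le (en_pos n) hk
          _ = _ := by ring
    · refine (ae_restrict_iff' (measurableSet_GamR r)).2 (Eventually.of_forall fun p hp => ?_)
      have h1 := (tendsto_Gt' (hf.pos p hp) en_tendsto).mul_const (dot f g p)
      rw [one_mul] at h1
      exact h1.add ((tendsto_Gt (hf.pos p hp).le en_pos en_tendsto).mul_const _)
  have hE : ∀ (γ : ℝ → ℝ × ℝ) (ψ : ℝ → ℝ), (∀ t ∈ Ioo (-1 : ℝ) 0, γ t ∈ KK r) → Continuous γ →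
      (∀ t ∈ Ioo (-1 : ℝ) 0, |ψ t| ≤ F') → ContinuousOn ψ (Ioo (-1) 0) →
      Tendsto (fun n => ∫ t in Ioo (-1 : ℝ) 0, Gt (en n) (f (γ t)) * ψ t) atTop
        (nhds (∫ t in Ioo (-1 : ℝ) 0, f (γ t) * ψ t)) := by
    intro γ ψ hγ hγc hψ hψc
    refine tendsto_integral_of_dominated_convergence (fun _ => M * F') (fun n => ?_)
      (integrableOn_const (by simp)) (fun n => ?_) ?_
    · refine (ContinuousOn.mul ?_ hψc).aestronglyMeasurable measurableSet_Ioo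
      exact (continuous_Gt (en_pos n)).comp_continuousOn (hf.cont.comp hγc.continuousOn hγ)
    · refine (ae_restrict_iff' measurableSet_Ioo).2 (Eventually.of_forall fun t ht => ?_)
      have hk := hγ t ht
      rw [norm_mul, Real.norm_eq_abs, Real.norm_eq_abs, abs_of_nonneg (Gt_nonneg (en_pos n) _)]
      exact mul_le_mul ((Gt_le (en_pos n) (hf.nonneg hr hk)).trans
        ((le_abs_self _).trans (hM _ hk))) (hψ t ht) (abs_nonneg _) hM0
    · refine (ae_restrict_iff' measurableSet_Ioo).2 (Eventually.of_forall fun t ht => ?_)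
      exact (tendsto_Gt (hf.nonneg hr (hγ t ht)) en_pos en_tendsto).mul_const _
  have h2 := hE (fun t => (t, r)) (fun t => pd2 g (t, r)) (fun t ht => (seg2_mem hr ht).1)
    (by fun_prop) hg.bd2 (fun t ht => by
      have := (pd2_contDiffAt (hg.diff _ (seg2_mem hr ht))).continuousAt
      exact (ContinuousAt.comp (f := fun t : ℝ => ((t, r) : ℝ × ℝ)) this
        (by fun_prop)).continuousWithinAt)
  have h1 := hE (fun t => (r, t)) (fun t => pd1 g (r, t)) (fun t ht => (seg1_mem hr ht).1)
    (by fun_prop) hg.bd1 (fun t ht => by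
      have := (pd1_contDiffAt (hg.diff _ (seg1_mem hr ht))).continuousAt
      exact (ContinuousAt.comp (f := fun t : ℝ => ((r, t) : ℝ × ℝ)) this
        (by fun_prop)).continuousWithinAt)
  have heq := tendsto_nhds_unique hL ((h2.add h1).congr fun n =>
    (trunc_identity hr hf hg (en_pos n)).2.symm)
  have hlap : EqOn (fun p => dot f g p + f p * lap2 g p) (fun p => dot f g p - μ' * (f p * g p))
      (GamR r) := fun p hp => by simp only [hg.eqn p hp]; ring
  rw [setIntegral_congr_fun (measurableSet_GamR r) hlap,
    integral_sub (hf.dot_integrable hr hg) (hfg.const_mul _), integral_const_mul] at heq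
  linarith

/-! ### Sine coefficients along an arm -/

/-- The `n`-th sine coefficient of `v` on the cross section `{x} × I` of the horizontal arm. -/
def cf (v : ℝ × ℝ → ℝ) (n : ℤ) (x : ℝ) : ℝ := ∫ y in Ioo (-1 : ℝ) 0, v (x, y) * sin (n * π * (y + 1))

lemma arm_mem_KK {R x y : ℝ} (hx : x ∈ Icc 0 R) (hy : y ∈ Icc (-1 : ℝ) 0) :
    ((x, y) : ℝ × ℝ) ∈ KK R := by
  rw [mem_KK]
  exact ⟨by simp only; linarith [hx.1], hy.1, hx.2, by simp only; linarith [hy.2, hx.1, hx.2], Or.inr hy.2⟩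

lemma arm_mem_Gam {x y : ℝ} (hx : 0 ≤ x) (hy : y ∈ Ioo (-1 : ℝ) 0) : ((x, y) : ℝ × ℝ) ∈ Gam := by
  rw [mem_Gam]
  exact ⟨by simp only; linarith, hy.1, Or.inr hy.2⟩

/-- Green's identity on the rectangle `(x₀, R) × (-1 + δ, -δ)` for `v` and the separated function
`sinh (κ (x - x₀)) sin (m (y + 1 - δ))`, which vanishes on three sides. -/
lemma green_arm {R μ : ℝ} {v : ℝ × ℝ → ℝ} (hv : Good R μ 0 v) {m κ x₀ δ : ℝ}
    (hx₀ : 0 ≤ x₀) (hx : x₀ < R) (hδ : 0 < δ) (hδ' : δ < 1 / 2) (hm : sin (m * (1 - 2 * δ)) = 0) :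
    (m ^ 2 - κ ^ 2 - μ) * (∫ p in Icc (x₀, -1 + δ) (R, -δ),
        sinh (κ * (p.1 - x₀)) * sin (m * (p.2 + 1 - δ)) * v p) =
      (∫ x in x₀..R, -(v (x, -δ) * (sinh (κ * (x - x₀)) * (m * cos (m * (1 - 2 * δ)))))) -
      (∫ x in x₀..R, -(v (x, -1 + δ) * (sinh (κ * (x - x₀)) * m))) +
      (∫ y in (-1 + δ)..(-δ), -(v (R, y) * (κ * cosh (κ * (R - x₀)) * sin (m * (y + 1 - δ))))) -
      ∫ y in (-1 + δ)..(-δ), -(v (x₀, y) * (κ * sin (m * (y + 1 - δ)))) := by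
  set S : ℝ → ℝ := fun x => sinh (κ * (x - x₀)) with hS
  set S' : ℝ → ℝ := fun x => κ * cosh (κ * (x - x₀)) with hS'
  set φ : ℝ → ℝ := fun y => sin (m * (y + 1 - δ)) with hφ
  set φ' : ℝ → ℝ := fun y => m * cos (m * (y + 1 - δ)) with hφ'
  have dS : ∀ x, HasDerivAt S (S' x) x := fun x => by
    have h1 : HasDerivAt (fun x : ℝ => κ * (x - x₀)) κ x := by
      simpa using ((hasDerivAt_id x).sub_const x₀).const_mul κ
    exact ((hasDerivAt_sinh _).comp x h1).congr_deriv (by simp only [hS']; ring)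
  have dS' : ∀ x, HasDerivAt S' (κ ^ 2 * S x) x := fun x => by
    have h1 : HasDerivAt (fun x : ℝ => κ * (x - x₀)) κ x := by
      simpa using ((hasDerivAt_id x).sub_const x₀).const_mul κ
    exact (((hasDerivAt_cosh _).comp x h1).const_mul κ).congr_deriv (by simp only [hS]; ring)
  have dφ : ∀ x, HasDerivAt φ (φ' x) x := fun x => by
    have h1 : HasDerivAt (fun x : ℝ => m * (x + 1 - δ)) m x := by
      simpa using (((hasDerivAt_id x).add_const (1 : ℝ)).sub_const δ).const_mul m
    exact ((hasDerivAt_sin _).comp x h1).congr_deriv (by simp only [hφ']; ring)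
  have dφ' : ∀ x, HasDerivAt φ' (-m ^ 2 * φ x) x := fun x => by
    have h1 : HasDerivAt (fun x : ℝ => m * (x + 1 - δ)) m x := by
      simpa using (((hasDerivAt_id x).add_const (1 : ℝ)).sub_const δ).const_mul m
    exact (((hasDerivAt_cos _).comp x h1).const_mul m).congr_deriv (by simp only [hφ]; ring)
  have cS : Continuous S := continuous_iff_continuousAt.2 fun x => (dS x).continuousAt
  have cφ : Continuous φ := continuous_iff_continuousAt.2 fun x => (dφ x).continuousAt
  have cS' : Continuous S' := continuous_iff_continuousAt.2 fun x => (dS' x).continuousAt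
  have cφ' : Continuous φ' := continuous_iff_continuousAt.2 fun x => (dφ' x).continuousAt
  have hsub : ∀ p ∈ Icc (x₀, -1 + δ) (R, -δ), p ∈ KK R ∩ Gam := by
    intro p hp
    rw [Icc_prod_eq] at hp
    obtain ⟨⟨h1, h2⟩, h3, h4⟩ := hp
    simp only at h1 h2 h3 h4
    exact ⟨arm_mem_KK (x := p.1) (y := p.2) ⟨by linarith, h2⟩ ⟨by linarith, by linarith⟩,
      arm_mem_Gam (x := p.1) (y := p.2) (by linarith) ⟨by linarith, by linarith⟩⟩
  have hopen : ∀ p ∈ Ioo x₀ R ×ˢ Ioo (-1 + δ) (-δ), p ∈ Icc (x₀, -1 + δ) (R, -δ) := by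
    intro p hp
    rw [Icc_prod_eq]
    exact prod_mono Ioo_subset_Icc_self Ioo_subset_Icc_self hp
  have fS : ∀ p : ℝ × ℝ, HasFDerivAt (fun p : ℝ × ℝ => S p.1) (S' p.1 • ContinuousLinearMap.fst ℝ ℝ ℝ) p :=
    fun p => (dS p.1).comp_hasFDerivAt p hasFDerivAt_fst
  have fS' : ∀ p : ℝ × ℝ, HasFDerivAt (fun p : ℝ × ℝ => S' p.1) ((κ ^ 2 * S p.1) • ContinuousLinearMap.fst ℝ ℝ ℝ) p :=
    fun p => (dS' p.1).comp_hasFDerivAt p hasFDerivAt_fst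
  have fφ : ∀ p : ℝ × ℝ, HasFDerivAt (fun p : ℝ × ℝ => φ p.2) (φ' p.2 • ContinuousLinearMap.snd ℝ ℝ ℝ) p :=
    fun p => (dφ p.2).comp_hasFDerivAt p hasFDerivAt_snd
  have fφ' : ∀ p : ℝ × ℝ, HasFDerivAt (fun p : ℝ × ℝ => φ' p.2) ((-m ^ 2 * φ p.2) • ContinuousLinearMap.snd ℝ ℝ ℝ) p :=
    fun p => (dφ' p.2).comp_hasFDerivAt p hasFDerivAt_snd
  have hvd : ∀ p ∈ Icc (x₀, -1 + δ) (R, -δ), HasFDerivAt v (fderiv ℝ v p) p := fun p hp =>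
    ((hv.diff p (hsub p hp)).differentiableAt (by norm_num)).hasFDerivAt
  have hv1 : ∀ p ∈ Icc (x₀, -1 + δ) (R, -δ), HasFDerivAt (pd1 v) (fderiv ℝ (pd1 v) p) p := fun p hp =>
    ((pd1_contDiffAt (hv.diff p (hsub p hp))).differentiableAt (by norm_num)).hasFDerivAt
  have hv2 : ∀ p ∈ Icc (x₀, -1 + δ) (R, -δ), HasFDerivAt (pd2 v) (fderiv ℝ (pd2 v) p) p := fun p hp =>
    ((pd2_contDiffAt (hv.diff p (hsub p hp))).differentiableAt (by norm_num)).hasFDerivAt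
  have D1 := fun p hp => (((fS p).mul (fφ p)).mul (hv1 p hp)).sub ((hvd p hp).mul ((fS' p).mul (fφ p)))
  have D2 := fun p hp => (((fS p).mul (fφ p)).mul (hv2 p hp)).sub ((hvd p hp).mul ((fS p).mul (fφ' p)))
  have hdiv := integral_divergence_prod_Icc_of_hasFDerivAt_of_le
    (fun p => S p.1 * φ p.2 * pd1 v p - v p * (S' p.1 * φ p.2))
    (fun p => S p.1 * φ p.2 * pd2 v p - v p * (S p.1 * φ' p.2)) _ _ (x₀, -1 + δ) (R, -δ)
    (by constructor <;> simp only <;> linarith)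
    (fun p hp => (D1 p hp).continuousAt.continuousWithinAt)
    (fun p hp => (D2 p hp).continuousAt.continuousWithinAt)
    (fun p hp => D1 p (hopen p hp)) (fun p hp => D2 p (hopen p hp))
  have hform : ∀ p, ((S p.1 * φ p.2) • fderiv ℝ (pd1 v) p + pd1 v p • (S p.1 • φ' p.2 • ContinuousLinearMap.snd ℝ ℝ ℝ
      + φ p.2 • S' p.1 • ContinuousLinearMap.fst ℝ ℝ ℝ) - (v p • (S' p.1 • φ' p.2 • ContinuousLinearMap.snd ℝ ℝ ℝ
      + φ p.2 • (κ ^ 2 * S p.1) • ContinuousLinearMap.fst ℝ ℝ ℝ) + (S' p.1 * φ p.2) • fderiv ℝ v p)) (1, 0)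
      + ((S p.1 * φ p.2) • fderiv ℝ (pd2 v) p + pd2 v p • (S p.1 • φ' p.2 • ContinuousLinearMap.snd ℝ ℝ ℝ
      + φ p.2 • S' p.1 • ContinuousLinearMap.fst ℝ ℝ ℝ) - (v p • (S p.1 • (-m ^ 2 * φ p.2) • ContinuousLinearMap.snd ℝ ℝ ℝ
      + φ' p.2 • S' p.1 • ContinuousLinearMap.fst ℝ ℝ ℝ) + (S p.1 * φ' p.2) • fderiv ℝ v p)) (0, 1)
      = S p.1 * φ p.2 * lap2 v p + (m ^ 2 - κ ^ 2) * (S p.1 * φ p.2 * v p) := by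
    intro p
    simp only [lap2]
    simp [pd1, pd2]
    ring
  simp only [Pi.mul_apply, hform] at hdiv
  have hvc : ContinuousOn v (Icc (x₀, -1 + δ) (R, -δ)) := fun p hp => (hvd p hp).continuousAt.continuousWithinAt
  have hDc : ContinuousOn (fun p : ℝ × ℝ => S p.1 * φ p.2 * lap2 v p + (m ^ 2 - κ ^ 2) * (S p.1 * φ p.2 * v p))
      (Icc (x₀, -1 + δ) (R, -δ)) := by
    have h1 : ContinuousOn (fun p : ℝ × ℝ => S p.1 * φ p.2) (Icc (x₀, -1 + δ) (R, -δ)) := by fun_prop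
    have h2 : ContinuousOn (lap2 v) (Icc (x₀, -1 + δ) (R, -δ)) := fun p hp =>
      (lap2_continuousAt (hv.diff p (hsub p hp))).continuousWithinAt
    exact (h1.mul h2).add (continuousOn_const.mul (h1.mul hvc))
  have hdiv := hdiv (hDc.integrableOn_compact isCompact_Icc)
  have hae : ∫ p in Icc (x₀, -1 + δ) (R, -δ), (S p.1 * φ p.2 * lap2 v p + (m ^ 2 - κ ^ 2) * (S p.1 * φ p.2 * v p))
      = (m ^ 2 - κ ^ 2 - μ) * ∫ p in Icc (x₀, -1 + δ) (R, -δ), S p.1 * φ p.2 * v p := by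
    rw [← integral_const_mul]
    have hs : (Ioo x₀ R ×ˢ Ioo (-1 + δ) (-δ) : Set (ℝ × ℝ)) =ᵐ[volume] Icc (x₀, -1 + δ) (R, -δ) := by
      rw [Icc_prod_eq]
      exact Measure.set_prod_ae_eq Ioo_ae_eq_Icc Ioo_ae_eq_Icc
    rw [← setIntegral_congr_set hs, ← setIntegral_congr_set hs]
    refine setIntegral_congr_fun (measurableSet_Ioo.prod measurableSet_Ioo) fun p hp => ?_
    have hG : p ∈ GamR R := by
      rw [mem_GamR (hx₀.trans_lt hx)]
      obtain ⟨⟨h1, h2⟩, h3, h4⟩ := hp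
      exact ⟨by linarith, by linarith, h2, by linarith, Or.inr (by linarith)⟩
    simp only [hv.eqn p hG]; ring
  rw [hae] at hdiv
  refine hdiv.trans ?_
  have e1 : φ (-δ) = 0 := by simp only [hφ]; rw [← hm]; congr 1; ring
  have e2 : φ (-1 + δ) = 0 := by simp [hφ]
  have e3 : S x₀ = 0 := by simp [hS]
  have e4 : φ' (-δ) = m * cos (m * (1 - 2 * δ)) := by simp only [hφ']; congr 3; ring
  have e5 : φ' (-1 + δ) = m := by simp [hφ']
  have e6 : S' x₀ = κ := by simp [hS']
  simp only [e1, e2, e3, e4, e5, e6, mul_zero, zero_mul, zero_sub]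
  congr 2
  refine intervalIntegral.integral_congr_ae ((ae_of_all _) fun y hy => ?_)
  rw [uIoc_of_le (by linarith)] at hy
  have : pd1 v (R, y) = 0 := by
    have := hv.bd1 y ⟨by linarith [hy.1], by linarith [hy.2]⟩
    exact abs_eq_zero.1 (le_antisymm this (abs_nonneg _))
  rw [this]; simp [hS', hφ]

/-- The widths `1 / (n + 3)` of the layers removed near the walls. -/
def dn (n : ℕ) : ℝ := 1 / ((n : ℝ) + 3)

lemma dn_pos (n : ℕ) : 0 < dn n := by unfold dn; positivity

lemma dn_le (n : ℕ) : dn n ≤ 1 / 3 := by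
  unfold dn
  apply one_div_le_one_div_of_le (by norm_num)
  have : (0 : ℝ) ≤ n := by positivity
  linarith

lemma dn_tendsto : Tendsto dn atTop (nhds 0) := by
  refine squeeze_zero (fun n => (dn_pos n).le) (fun n => ?_) tendsto_one_div_add_atTop_nhds_zero_nat
  unfold dn
  apply one_div_le_one_div_of_le <;> [positivity; linarith]

/-- The rescaled frequency `m / (1 - 2 δ)`. -/
def mn (m : ℝ) (n : ℕ) : ℝ := m / (1 - 2 * dn n)

lemma mn_mul (m : ℝ) (n : ℕ) : mn m n * (1 - 2 * dn n) = m := by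
  unfold mn
  have := dn_le n
  rw [div_mul_cancel₀]; linarith

lemma mn_tendsto (m : ℝ) : Tendsto (mn m) atTop (nhds m) := by
  have h1 : Tendsto (fun n => 1 - 2 * dn n) atTop (nhds (1 - 2 * 0)) :=
    tendsto_const_nhds.sub (dn_tendsto.const_mul 2)
  have h2 := (tendsto_const_nhds (x := m)).div h1 (by norm_num)
  simp only [mul_zero, sub_zero, div_one] at h2
  exact h2

lemma abs_mn_le (m : ℝ) (n : ℕ) : |mn m n| ≤ 3 * |m| := by
  have h := dn_le n
  have h0 : (1 : ℝ) / 3 ≤ 1 - 2 * dn n := by linarith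
  unfold mn
  rw [abs_div, abs_of_pos (by linarith : 0 < 1 - 2 * dn n), div_le_iff₀ (by linarith)]
  nlinarith [abs_nonneg m]

lemma edge_limit {a : ℝ → ℝ} (ha : ContinuousOn a (Icc (-1) 0)) (m : ℝ) :
    Tendsto (fun n => ∫ y in (-1 + dn n)..(-dn n), a y * sin (mn m n * (y + 1 - dn n))) atTop
      (nhds (∫ y in Ioo (-1 : ℝ) 0, a y * sin (m * (y + 1)))) := by
  obtain ⟨M, hM⟩ := isCompact_Icc.exists_bound_of_continuousOn ha
  have hrew : ∀ n, ∫ y in (-1 + dn n)..(-dn n), a y * sin (mn m n * (y + 1 - dn n)) =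
      ∫ y in Ioo (-1 : ℝ) 0, (Ioc (-1 + dn n) (-dn n)).indicator
        (fun y => a y * sin (mn m n * (y + 1 - dn n))) y := by
    intro n
    have h1 := dn_pos n
    have h2 := dn_le n
    rw [intervalIntegral.integral_of_le (by linarith), setIntegral_indicator measurableSet_Ioc]
    congr 2
    ext y
    simp only [mem_Ioc, mem_inter_iff, mem_Ioo]
    constructor
    · rintro ⟨h3, h4⟩; exact ⟨⟨by linarith, by linarith⟩, h3, h4⟩
    · exact fun h => h.2
  simp_rw [hrew]
  refine tendsto_integral_of_dominated_convergence (fun _ => M) (fun n => ?_)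
    (integrableOn_const (by simp)) (fun n => ?_) ?_
  · refine AEStronglyMeasurable.indicator ?_ measurableSet_Ioc
    refine (ContinuousOn.mul (ha.mono Ioo_subset_Icc_self) ?_).aestronglyMeasurable measurableSet_Ioo
    fun_prop
  · refine (ae_restrict_iff' measurableSet_Ioo).2 (Eventually.of_forall fun y hy => ?_)
    refine (norm_indicator_le_norm_self _ _).trans ?_
    rw [norm_mul]
    refine (mul_le_of_le_one_right (norm_nonneg _) (abs_sin_le_one _)).trans
      (hM y (Ioo_subset_Icc_self hy))
  · refine (ae_restrict_iff' measurableSet_Ioo).2 (Eventually.of_forall fun y hy => ?_)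
    have h1 : Tendsto (fun n => a y * sin (mn m n * (y + 1 - dn n))) atTop
        (nhds (a y * sin (m * (y + 1 - 0)))) :=
      tendsto_const_nhds.mul ((continuous_sin.tendsto _).comp
        ((mn_tendsto m).mul (tendsto_const_nhds.sub dn_tendsto)))
    rw [sub_zero] at h1
    refine h1.congr' ?_
    have e1 : ∀ᶠ n in atTop, dn n < y + 1 := dn_tendsto.eventually_lt_const (by linarith [hy.1])
    have e2 : ∀ᶠ n in atTop, dn n < -y := dn_tendsto.eventually_lt_const (by linarith [hy.2])
    filter_upwards [e1, e2] with n h1 h2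
    rw [indicator_of_mem]
    exact ⟨by linarith, by linarith⟩

/-- Along the arm every sine coefficient solves `c'' = κ² c` with `c'(R) = 0`. -/
lemma coef_eq {R μ : ℝ} {v : ℝ × ℝ → ℝ} (hv : Good R μ 0 v) (k : ℤ) {κ : ℝ} (hκ : 0 < κ)
    (hκ2 : κ ^ 2 = (k * π) ^ 2 - μ) {x₀ : ℝ} (hx₀ : 0 ≤ x₀) (hx : x₀ < R) :
    cf v k x₀ = cosh (κ * (R - x₀)) * cf v k R := by
  have hR : 0 < R := hx₀.trans_lt hx
  obtain ⟨M, hM0, hM⟩ := hv.exists_bound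
  set m : ℝ := k * π with hm
  have hS : ∀ x ∈ Icc x₀ R, |sinh (κ * (x - x₀))| ≤ sinh (κ * (R - x₀)) := by
    intro x hx'
    have h1 : 0 ≤ κ * (x - x₀) := mul_nonneg hκ.le (by linarith [hx'.1])
    rw [abs_of_nonneg (sinh_nonneg_iff.2 h1), sinh_le_sinh]
    have := hx'.2
    gcongr
  set s := sinh (κ * (R - x₀)) with hs
  have hs0 : 0 ≤ s := (abs_nonneg _).trans (hS x₀ ⟨le_rfl, hx.le⟩)
  have hid := fun n => green_arm hv (m := mn m n) (κ := κ) hx₀ hx (dn_pos n)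
    (by linarith [dn_le n]) (by rw [mn_mul, hm]; exact sin_int_mul_pi k)
  -- the bulk term
  have hL : Tendsto (fun n => (mn m n ^ 2 - κ ^ 2 - μ) * (∫ p in Icc (x₀, -1 + dn n) (R, -dn n),
        sinh (κ * (p.1 - x₀)) * sin (mn m n * (p.2 + 1 - dn n)) * v p)) atTop (nhds 0) := by
    have h1 : Tendsto (fun n => mn m n ^ 2 - κ ^ 2 - μ) atTop (nhds 0) := by
      have := (((mn_tendsto m).pow 2).sub_const (κ ^ 2)).sub_const μ
      rwa [hκ2, show m ^ 2 - (m ^ 2 - μ) - μ = 0 by ring, ← hκ2] at this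
    refine h1.zero_mul_isBoundedUnder_le ?_
    refine isBoundedUnder_of ⟨s * M * volume.real (Icc (x₀, (-1 : ℝ)) (R, 0)), fun n => ?_⟩
    have hsub : Icc (x₀, -1 + dn n) (R, -dn n) ⊆ Icc (x₀, (-1 : ℝ)) (R, 0) := by
      refine Icc_subset_Icc ⟨le_rfl, ?_⟩ ⟨le_rfl, ?_⟩ <;> simp only <;> linarith [dn_pos n]
    have h2 := norm_setIntegral_le_of_norm_le_const (μ := volume) (s := Icc (x₀, -1 + dn n) (R, -dn n))
      (f := fun p : ℝ × ℝ => sinh (κ * (p.1 - x₀)) * sin (mn m n * (p.2 + 1 - dn n)) * v p) (C := s * M)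
      isCompact_Icc.measure_lt_top (fun p hp => by
        have hp' := hsub hp
        rw [Icc_prod_eq] at hp'
        rw [norm_mul, norm_mul]
        have hk : p ∈ KK R := arm_mem_KK (x := p.1) (y := p.2) ⟨by linarith [hp'.1.1], hp'.1.2⟩ hp'.2
        refine mul_le_mul ?_ (hM p hk) (norm_nonneg _) hs0
        exact (mul_le_of_le_one_right (norm_nonneg _) (abs_sin_le_one _)).trans (hS _ hp'.1))
    refine h2.trans ?_
    gcongr
    exact isCompact_Icc.measure_lt_top.ne
  -- the wall terms vanish because `v` does
  have hW : ∀ (τ : ℕ → ℝ) (y₀ : ℝ) (q : ℕ → ℝ), (∀ n, τ n ∈ Icc (-1 : ℝ) 0) →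
      Tendsto τ atTop (nhds y₀) → y₀ ∈ Icc (-1 : ℝ) 0 → (∀ x ∈ Icc x₀ R, v (x, y₀) = 0) →
      (∀ n, |q n| ≤ 3 * |m|) →
      Tendsto (fun n => ∫ x in x₀..R, -(v (x, τ n) * (sinh (κ * (x - x₀)) * q n))) atTop (nhds 0) := by
    intro τ y₀ q hτ hτl hy₀ hz hq
    have : Tendsto (fun n => ∫ x in x₀..R, -(v (x, τ n) * (sinh (κ * (x - x₀)) * q n))) atTop
        (nhds (∫ x in x₀..R, (0 : ℝ))) := by
      refine intervalIntegral.tendsto_integral_filter_of_dominated_convergence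
        (fun _ => M * (s * (3 * |m|))) (Eventually.of_forall fun n => ?_)
        (Eventually.of_forall fun n => ae_of_all _ fun x hx' => ?_)
        intervalIntegrable_const (ae_of_all _ fun x hx' => ?_)
      · rw [uIoc_of_le hx.le]
        refine ContinuousOn.aestronglyMeasurable ?_ measurableSet_Ioc
        refine ContinuousOn.neg (ContinuousOn.mul ?_ (by fun_prop))
        exact hv.cont.comp (by fun_prop) fun x hx' => arm_mem_KK ⟨by linarith [hx'.1], hx'.2⟩ (hτ n)
      · rw [uIoc_of_le hx.le] at hx'
        rw [norm_neg, norm_mul, norm_mul]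
        exact mul_le_mul (hM _ (arm_mem_KK ⟨by linarith [hx'.1], hx'.2⟩ (hτ n)))
          (mul_le_mul (hS x ⟨hx'.1.le, hx'.2⟩) (hq n) (norm_nonneg _) hs0) (by positivity) hM0
      · rw [uIoc_of_le hx.le] at hx'
        have hv0 : Tendsto (fun n => v (x, τ n)) atTop (nhds 0) := by
          rw [← hz x ⟨hx'.1.le, hx'.2⟩]
          have hxI : x ∈ Icc 0 R := ⟨by linarith [hx'.1], hx'.2⟩
          refine (hv.cont _ (arm_mem_KK hxI hy₀)).tendsto.comp (tendsto_nhdsWithin_iff.2 ⟨?_, ?_⟩)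
          · exact tendsto_const_nhds.prodMk_nhds hτl
          · exact Eventually.of_forall fun n => arm_mem_KK hxI (hτ n)
        have := (hv0.zero_mul_isBoundedUnder_le (g := fun n => sinh (κ * (x - x₀)) * q n)
          (isBoundedUnder_of ⟨s * (3 * |m|), fun n => by
            simp only [Function.comp, norm_mul]
            exact mul_le_mul (hS x ⟨hx'.1.le, hx'.2⟩) (hq n) (norm_nonneg _) hs0⟩)).neg
        simpa using this
    simpa using this
  have hT := hW (fun n => -dn n) 0 (fun n => mn m n * cos (mn m n * (1 - 2 * dn n)))
    (fun n => ⟨by linarith [dn_le n], by linarith [dn_pos n]⟩) (by simpa using dn_tendsto.neg)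
    (by norm_num) (fun x hx' => hv.zero _ (arm_mem_KK ⟨by linarith [hx'.1], hx'.2⟩ (by norm_num))
      (fun h => by rw [mem_Gam] at h; rcases h.2.2 with h | h <;> simp only at h <;> linarith [hx'.1]))
    (fun n => by
      rw [abs_mul]
      exact (mul_le_of_le_one_right (abs_nonneg _) (abs_cos_le_one _)).trans (abs_mn_le m n))
  have hB := hW (fun n => -1 + dn n) (-1) (fun n => mn m n)
    (fun n => ⟨by linarith [dn_pos n], by linarith [dn_le n]⟩)
    (by simpa using dn_tendsto.const_add (-1))
    (by norm_num) (fun x hx' => hv.zero _ (arm_mem_KK ⟨by linarith [hx'.1], hx'.2⟩ (by norm_num))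
      (fun h => by rw [mem_Gam] at h; exact lt_irrefl _ h.2.1))
    (fun n => abs_mn_le m n)
  have hvs : ∀ x ∈ Icc 0 R, ContinuousOn (fun y => v (x, y)) (Icc (-1) 0) := fun x hx' =>
    hv.cont.comp (by fun_prop) fun y hy => arm_mem_KK hx' hy
  have h3 := ((edge_limit (hvs R ⟨hR.le, le_rfl⟩) m).const_mul (-(κ * cosh (κ * (R - x₀)))))
  have h4 := ((edge_limit (hvs x₀ ⟨hx₀, hx.le⟩) m).const_mul (-κ))
  have hfin := tendsto_nhds_unique (hL.congr hid) (((hT.sub hB).add (h3.congr fun n => by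
      rw [← intervalIntegral.integral_const_mul]; congr 1; ext y; ring)).sub (h4.congr fun n => by
      rw [← intervalIntegral.integral_const_mul]; congr 1; ext y; ring))
  have : κ * (cf v k x₀ - cosh (κ * (R - x₀)) * cf v k R) = 0 := by
    simp only [cf]
    linarith
  rcases mul_eq_zero.1 this with h | h
  · exact absurd h hκ.ne'
  · linarith

/-! ### Sine series and decay near the end of an arm -/

/-- Pointwise convergence of the (two-sided) sine series on `[0, 1]`. -/
lemma hasSum_sine {φ : ℝ → ℝ} (hc : ContinuousOn φ (Icc 0 1)) (h0 : φ 0 = 0) (h1 : φ 1 = 0)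
    {b : ℤ → ℝ} (hb : ∀ n : ℤ, b n = ∫ s in (0 : ℝ)..1, φ s * sin (n * π * s)) (hs : Summable b)
    {s : ℝ} (hs' : s ∈ Ico (0 : ℝ) 1) : HasSum (fun n : ℤ => b n * sin (n * π * s)) (φ s) := by
  have : Fact ((0 : ℝ) < 2) := ⟨by norm_num⟩
  -- the odd extension
  set Φ : ℝ → ℝ := fun s => φ (max s 0) - φ (max (-s) 0) with hΦ
  have hΦp : ∀ s, 0 ≤ s → Φ s = φ s := fun s h => by
    simp only [hΦ, max_eq_left h, max_eq_right (by linarith : -s ≤ 0), h0, sub_zero]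
  have hΦn : ∀ s, 0 ≤ s → Φ (-s) = -φ s := fun s h => by
    simp only [hΦ, neg_neg, max_eq_left h, max_eq_right (by linarith : -s ≤ 0), h0, zero_sub]
  have hΦc : ContinuousOn Φ (Icc (-1) 1) := by
    refine ContinuousOn.sub (hc.comp (by fun_prop) fun s hs => ?_)
      (hc.comp (by fun_prop) fun s hs => ?_)
    · exact ⟨le_max_right _ _, max_le hs.2 (by norm_num)⟩
    · exact ⟨le_max_right _ _, max_le (by linarith [hs.1]) (by norm_num)⟩
  have hcont : ContinuousOn (fun s => (Φ s : ℂ)) (Icc (-1) (-1 + 2)) := by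
    rw [show (-1 : ℝ) + 2 = 1 by norm_num]
    exact Complex.continuous_ofReal.comp_continuousOn hΦc
  let f : C(AddCircle (2 : ℝ), ℂ) := ⟨AddCircle.liftIco 2 (-1) (fun s => (Φ s : ℂ)),
    AddCircle.liftIco_continuous (by
      rw [show (-1 : ℝ) + 2 = 1 by norm_num, hΦp 1 (by norm_num), hΦn 1 (by norm_num), h1]; simp) hcont⟩
  have hco : ∀ n : ℤ, fourierCoeff f n = -Complex.I * b n := by
    intro n
    have e1 : fourierCoeff f n = fourierCoeffOn (by norm_num : (-1 : ℝ) < -1 + 2) (fun s => (Φ s : ℂ)) n :=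
      fourierCoeff_liftIco_eq _ n
    rw [e1, fourierCoeffOn_eq_integral]
    have hg : Continuous fun x : ℝ => (fourier (-n) (x : AddCircle ((-1 + 2) - (-1 : ℝ))) : ℂ) :=
      (map_continuous (fourier (-n))).comp (AddCircle.continuous_mk' _)
    have hIntg : ∀ a c : ℝ, a ∈ Icc (-1 : ℝ) 1 → c ∈ Icc (-1 : ℝ) 1 → IntervalIntegrable
        (fun x : ℝ => (fourier (-n) (x : AddCircle ((-1 + 2) - (-1 : ℝ))) : ℂ) • (Φ x : ℂ)) volume a c := by
      intro a c ha hc'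
      refine ContinuousOn.intervalIntegrable (hg.continuousOn.smul
        ((Complex.continuous_ofReal.comp_continuousOn hΦc).mono ?_))
      exact ordConnected_Icc.uIcc_subset ha hc'
    rw [show (-1 : ℝ) + 2 = 1 by norm_num] at *
    rw [← intervalIntegral.integral_add_adjacent_intervals (hIntg (-1) 0 (by norm_num) (by norm_num))
      (hIntg 0 1 (by norm_num) (by norm_num))]
    have e2 := intervalIntegral.integral_comp_neg (a := 0) (b := 1)
      (fun x : ℝ => (fourier (-n) (x : AddCircle (1 - (-1 : ℝ))) : ℂ) • (Φ x : ℂ))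
    rw [neg_zero] at e2
    have hIntg2 : IntervalIntegrable (fun x : ℝ => (fourier (-n) ((-x : ℝ) : AddCircle (1 - (-1 : ℝ))) : ℂ)
        • (Φ (-x) : ℂ)) volume 0 1 := by
      have := (hIntg 0 (-1) (by norm_num) (by norm_num)).comp_mul_left (c := -1)
      simpa using this
    rw [← e2, ← intervalIntegral.integral_add hIntg2 (hIntg 0 1 (by norm_num) (by norm_num)), hb n,
      ← intervalIntegral.integral_ofReal, ← intervalIntegral.integral_const_mul,
      ← intervalIntegral.integral_smul]
    refine intervalIntegral.integral_congr fun x hx => ?_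
    rw [uIcc_of_le (by norm_num)] at hx
    simp only [fourier_coe_apply, hΦp x hx.1, hΦn x hx.1, Complex.ofReal_mul, Complex.ofReal_sin]
    have e3 : Complex.sin (((n * π * x : ℝ) : ℂ)) =
      (Complex.exp (-(n * π * x) * Complex.I) - Complex.exp ((n * π * x) * Complex.I)) * Complex.I / 2 := by
      simp [Complex.sin]
    push_cast at e3 ⊢
    rw [e3]
    have e4 : (2 * (π : ℂ) * Complex.I * -(n : ℂ) * -(x : ℂ) / (1 - -1)) = (n * π * x) * Complex.I := by
      ring
    have e5 : (2 * (π : ℂ) * Complex.I * -(n : ℂ) * (x : ℂ) / (1 - -1)) = -(n * π * x) * Complex.I := by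
      ring
    rw [e4, e5]
    have hI := Complex.I_sq
    simp only [smul_eq_mul, Complex.real_smul]
    push_cast
    linear_combination ((φ x : ℂ)/2 * (Complex.exp (-(n * π * x) * Complex.I) - Complex.exp ((n * π * x) * Complex.I))) * hI
  have hsum : Summable (fourierCoeff f) := by
    simp_rw [funext hco]
    exact (Complex.ofRealCLM.summable hs).mul_left _
  have key := has_pointwise_sum_fourier_series_of_summable hsum ((s : ℝ) : AddCircle (2 : ℝ))
  have ef : f ((s : ℝ) : AddCircle (2 : ℝ)) = (φ s : ℂ) := by
    rw [← hΦp s hs'.1]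
    exact AddCircle.liftIco_coe_apply (f := fun s => (Φ s : ℂ)) ⟨by linarith [hs'.1], by linarith [hs'.2]⟩
  rw [ef] at key
  have key2 := Complex.reCLM.hasSum key
  simp only [Complex.reCLM_apply, Complex.ofReal_re] at key2
  convert key2 using 2 with n
  rw [hco, fourier_coe_apply, show (2 * (π : ℂ) * Complex.I * (n : ℂ) * (s : ℂ) / ((2 : ℝ) : ℂ)) =
    ((n * π * s : ℝ) : ℂ) * Complex.I by push_cast; ring, Complex.exp_mul_I]
  generalize (n * π * s : ℝ) = θ
  rw [← Complex.ofReal_cos, ← Complex.ofReal_sin]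
  simp [-Complex.ofReal_cos, -Complex.ofReal_sin]

lemma sinh_le_mul_exp {x : ℝ} : sinh x ≤ x * exp x := by
  have h1 : exp (-x) = exp x * exp (-2 * x) := by rw [← exp_add]; ring_nf
  have h2 := add_one_le_exp (-2 * x)
  rw [sinh_eq, h1]
  nlinarith [exp_pos x]

lemma cosh_le_exp {x : ℝ} (hx : 0 ≤ x) : cosh x ≤ exp x := by
  have : exp (-x) ≤ exp x := exp_le_exp.2 (by linarith)
  rw [cosh_eq]; linarith

lemma summable_sq_exp : Summable fun n : ℤ => ((n : ℝ) ^ 2 + 1) * exp (-|(n : ℝ)|) := by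
  have h : Summable fun n : ℕ => ((n : ℝ) ^ 2 + 1) * exp (-(n : ℝ)) := by
    have h2 := (Real.summable_pow_mul_exp_neg_nat_mul 2 one_pos).add
      (Real.summable_pow_mul_exp_neg_nat_mul 0 one_pos)
    refine h2.congr fun n => ?_
    rw [show -1 * (n : ℝ) = -n by ring]; ring
  refine Summable.of_nat_of_neg ?_ ?_
  · simpa using h
  · simpa using h

/-- The constant `∑ (n² + 1) e^{-|n|}`. -/
def Ksum : ℝ := ∑' n : ℤ, ((n : ℝ) ^ 2 + 1) * exp (-|(n : ℝ)|)

lemma cf_eq (v : ℝ × ℝ → ℝ) (n : ℤ) (x : ℝ) :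
    cf v n x = ∫ s in (0 : ℝ)..1, v (x, s - 1) * sin (n * π * s) := by
  have := intervalIntegral.integral_comp_sub_right (a := 0) (b := 1)
    (fun y => v (x, y) * sin (n * π * (y + 1))) 1
  simp only [sub_add_cancel, zero_sub, sub_self] at this
  rw [this, cf, intervalIntegral.integral_of_le (by norm_num), integral_Ioc_eq_integral_Ioo]

section
variable {R μ Λ : ℝ} {v : ℝ × ℝ → ℝ}

lemma Good.slice_cont (hv : Good R μ 0 v) {x : ℝ} (hx : x ∈ Icc 0 R) :
    ContinuousOn (fun y => v (x, y)) (Icc (-1) 0) :=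
  hv.cont.comp (by fun_prop) fun _ hy => arm_mem_KK hx hy

lemma cf_sq_le (hv : Good R μ 0 v) (n : ℤ) {x : ℝ} (hx : x ∈ Icc 0 R) :
    cf v n x ^ 2 ≤ ∫ y in Ioo (-1 : ℝ) 0, v (x, y) ^ 2 := by
  have hc := hv.slice_cont hx
  have hc1 : ContinuousOn (fun y => v (x, y) * sin (n * π * (y + 1))) (Icc (-1) 0) :=
    hc.mul (by fun_prop)
  have i1 := (hc1.integrableOn_Icc (μ := volume)).mono_set Ioo_subset_Icc_self
  have i2 := ((hc1.pow 2).integrableOn_Icc (μ := volume)).mono_set Ioo_subset_Icc_self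
  have i3 := ((hc.pow 2).integrableOn_Icc (μ := volume)).mono_set Ioo_subset_Icc_self
  have h := sq_integral_le i1 i2
  refine h.trans ?_
  simp only [measureReal_restrict_apply_univ, volume_real_Ioo, sub_neg_eq_add, zero_add,
    max_eq_left zero_le_one, one_mul]
  refine integral_mono i2 i3 fun y => ?_
  simp only [mul_pow]
  exact mul_le_of_le_one_right (sq_nonneg _) (sin_sq_le_one _)

lemma coef_eq' (hv : Good R μ 0 v) (k : ℤ) {κ : ℝ} (hκ : 0 < κ)
    (hκ2 : κ ^ 2 = (k * π) ^ 2 - μ) {x : ℝ} (hx : x ∈ Icc 0 R) :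
    cf v k x = cosh (κ * (R - x)) * cf v k R := by
  rcases hx.2.lt_or_eq with h | h
  · exact coef_eq hv k hκ hκ2 hx.1 h
  · simp [h]

/-- The coefficient at the end of the arm decays exponentially in `R`, because the coefficients on
the cross sections `0 < x < 1/4` are bounded by the `L²` norm of `v` and are `cosh (κ (R - x))` times
the one at the end. -/
lemma coef_bound (hR : 1 ≤ R) (hv : Good R μ 0 v) (hn : ∫ p in GamR R, v p ^ 2 ≤ 1) (k : ℤ) {κ : ℝ}
    (hκ : 0 < κ) (hκ2 : κ ^ 2 = (k * π) ^ 2 - μ) : |cf v k R| ≤ 4 * exp (-(κ * (R - 1 / 4))) := by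
  have hR0 : 0 < R := by linarith
  have hsub : Ioo (0 : ℝ) (1 / 4) ×ˢ Ioo (-1 : ℝ) 0 ⊆ GamR R := by
    rintro ⟨x, y⟩ ⟨hx, hy⟩
    rw [mem_GamR hR0]
    exact ⟨by linarith [hx.1], hy.1, by linarith [hx.2], by linarith [hy.2], Or.inr hy.2⟩
  have hi : IntegrableOn (fun p => v p ^ 2) (GamR R) := integrableOn_of_KK hR0 (hv.cont.pow 2)
  have h1 : ∫ p in Ioo (0 : ℝ) (1 / 4) ×ˢ Ioo (-1 : ℝ) 0, v p ^ 2 ≤ 1 :=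
    (setIntegral_mono_set hi (Eventually.of_forall fun _ => sq_nonneg _)
      (Eventually.of_forall hsub)).trans hn
  have hi2 := hi.mono_set hsub
  rw [Measure.volume_eq_prod] at hi2 h1
  rw [setIntegral_prod _ hi2] at h1
  set c := cosh (κ * (R - 1 / 4)) with hc
  have h2 : ∫ x in Ioo (0 : ℝ) (1 / 4), (c * |cf v k R|) ^ 2 ≤
      ∫ x in Ioo (0 : ℝ) (1 / 4), ∫ y in Ioo (-1 : ℝ) 0, v (x, y) ^ 2 := by
    rw [IntegrableOn, ← Measure.prod_restrict] at hi2
    refine setIntegral_mono_on (integrableOn_const (by simp)) hi2.integral_prod_left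
      measurableSet_Ioo fun x hx => ?_
    have hx' : x ∈ Icc 0 R := ⟨hx.1.le, by linarith [hx.2]⟩
    refine le_trans ?_ (cf_sq_le hv k hx')
    rw [coef_eq' hv k hκ hκ2 hx', mul_pow, mul_pow, sq_abs]
    gcongr
    rw [hc, cosh_le_cosh, abs_of_nonneg (by nlinarith), abs_of_nonneg (by nlinarith [hx'.2])]
    gcongr
    exact hx.2.le
  have h3 : (1 / 4) * (c * |cf v k R|) ^ 2 ≤ 1 := by
    have := h2.trans h1
    simpa using this
  have h4 : c * |cf v k R| ≤ 2 := by nlinarith [abs_nonneg (cf v k R), cosh_pos (κ * (R - 1 / 4))]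
  have h5 : exp (κ * (R - 1 / 4)) / 2 ≤ c := by
    rw [hc, cosh_eq]; linarith [exp_pos (-(κ * (R - 1 / 4)))]
  rw [exp_neg, ← div_eq_mul_inv, le_div_iff₀ (exp_pos _)]
  nlinarith [abs_nonneg (cf v k R)]

/-- The decay rate of the `k`-th mode. -/
def kap (μ : ℝ) (k : ℤ) : ℝ := √((k * π) ^ 2 - μ)

lemma int_sq_ge {k : ℤ} (hk : k ≠ 0) : (1 : ℝ) ≤ |(k : ℝ)| := by
  exact_mod_cast Int.one_le_abs hk

lemma kap_facts (hμ : 0 ≤ μ) (hμΛ : μ ≤ Λ) (hΛ : Λ < π ^ 2) {k : ℤ} (hk : k ≠ 0) :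
    0 < kap μ k ∧ kap μ k ^ 2 = (k * π) ^ 2 - μ ∧ √(π ^ 2 - Λ) ≤ kap μ k ∧
      2 * (|(k : ℝ)| - 1) ≤ kap μ k ∧ kap μ k ^ 2 ≤ 16 * (k : ℝ) ^ 2 := by
  have h1 := int_sq_ge hk
  have h2 : (k : ℝ) ^ 2 = |(k : ℝ)| ^ 2 := (sq_abs _).symm
  set a := |(k : ℝ)|
  have hpi := pi_gt_three
  have hpi4 := pi_lt_four
  have h3 : π ^ 2 ≤ (k * π) ^ 2 := by
    have h0 : 1 ≤ a ^ 2 := by nlinarith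
    rw [mul_pow, h2]; nlinarith [mul_nonneg (sub_nonneg.2 h0) (sq_nonneg π)]
  have h4 : 0 < (k * π) ^ 2 - μ := by linarith
  refine ⟨sqrt_pos.2 h4, sq_sqrt h4.le, sqrt_le_sqrt (by linarith), ?_, ?_⟩
  · refine le_sqrt_of_sq_le ?_
    rw [mul_pow (k : ℝ), h2]
    have : μ ≤ π ^ 2 := by linarith
    nlinarith [mul_nonneg (by linarith : 0 ≤ a - 1) (by nlinarith : 0 ≤ π ^ 2 - 4)]
  · rw [kap, sq_sqrt h4.le, mul_pow]
    have h0 : π ^ 2 ≤ 16 := by nlinarith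
    nlinarith [mul_nonneg (sub_nonneg.2 h0) (sq_nonneg (k : ℝ))]

/-- The prefactor in the decay of the modes near the end of the arm. -/
def Bc (Λ R : ℝ) : ℝ := 4 * exp (1 + √(π ^ 2 - Λ)) * exp (-R * √(π ^ 2 - Λ))

lemma Bc_pos : 0 < Bc Λ R := by unfold Bc; positivity

/-- Uniform control of all modes: the prefactor contains the decay `e^{-R √(π² - Λ)}` of the first
mode, the rest is summable in `k`. -/
lemma mode_bound (hR : 1 ≤ R) (hμ : 0 ≤ μ) (hμΛ : μ ≤ Λ) (hΛ : Λ < π ^ 2) (hv : Good R μ 0 v)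
    (hn : ∫ p in GamR R, v p ^ 2 ≤ 1) {k : ℤ} (hk : k ≠ 0) :
    exp (kap μ k / 4) * |cf v k R| ≤ Bc Λ R * exp (-|(k : ℝ)|) := by
  obtain ⟨h1, h2, h3, h4, -⟩ := kap_facts hμ hμΛ hΛ hk
  have h5 := coef_bound hR hv hn k h1 h2
  calc exp (kap μ k / 4) * |cf v k R| ≤ exp (kap μ k / 4) * (4 * exp (-(kap μ k * (R - 1 / 4)))) := by
        gcongr
    _ = 4 * exp (kap μ k / 4 + -(kap μ k * (R - 1 / 4))) := by rw [exp_add]; ring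
    _ ≤ 4 * exp ((1 + √(π ^ 2 - Λ)) + -R * √(π ^ 2 - Λ) + -|(k : ℝ)|) := by
        refine mul_le_mul_of_nonneg_left (exp_le_exp.2 ?_) (by norm_num)
        nlinarith [mul_le_mul_of_nonneg_right h3 (by linarith : 0 ≤ R - 1)]
    _ = Bc Λ R * exp (-|(k : ℝ)|) := by rw [exp_add, exp_add, Bc]; ring

lemma cf_zero (x : ℝ) : cf v 0 x = 0 := by simp [cf]

lemma cf_near (hR : 1 ≤ R) (hμ : 0 ≤ μ) (hμΛ : μ ≤ Λ) (hΛ : Λ < π ^ 2) (hv : Good R μ 0 v)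
    (hn : ∫ p in GamR R, v p ^ 2 ≤ 1) (k : ℤ) {x : ℝ} (hx : x ∈ Icc (R - 1 / 4) R) :
    |cf v k x| ≤ Bc Λ R * (((k : ℝ) ^ 2 + 1) * exp (-|(k : ℝ)|)) := by
  have hB : 0 < Bc Λ R := Bc_pos
  by_cases hk : k = 0
  · subst hk; rw [cf_zero]; simp; exact hB.le
  obtain ⟨h1, h2, h3, h4, -⟩ := kap_facts hμ hμΛ hΛ hk
  rw [coef_eq' hv k h1 h2 ⟨by linarith [hx.1], hx.2⟩, abs_mul, abs_of_pos (cosh_pos _)]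
  have h5 : cosh (kap μ k * (R - x)) ≤ exp (kap μ k / 4) := by
    refine (cosh_le_exp (by nlinarith [hx.2])).trans (exp_le_exp.2 (by nlinarith [hx.1]))
  calc _ ≤ exp (kap μ k / 4) * |cf v k R| := by gcongr
    _ ≤ Bc Λ R * exp (-|(k : ℝ)|) := mode_bound hR hμ hμΛ hΛ hv hn hk
    _ ≤ _ := by
      gcongr
      nlinarith [sq_nonneg (k : ℝ), exp_pos (-|(k : ℝ)|)]

/-- Lipschitz bound with a constant proportional to `h`, as `c'` vanishes at the end of the arm. -/
lemma cf_lip (hR : 1 ≤ R) (hμ : 0 ≤ μ) (hμΛ : μ ≤ Λ) (hΛ : Λ < π ^ 2) (hv : Good R μ 0 v)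
    (hn : ∫ p in GamR R, v p ^ 2 ≤ 1) (k : ℤ) {h : ℝ} (hh : h ∈ Ioc (0 : ℝ) (1 / 8)) {x x' : ℝ}
    (hx : x ∈ Icc (R - 2 * h) R) (hx' : x' ∈ Icc (R - 2 * h) R) :
    |cf v k x - cf v k x'| ≤ 32 * h * Bc Λ R * |x - x'| * (((k : ℝ) ^ 2 + 1) * exp (-|(k : ℝ)|)) := by
  have hB : 0 < Bc Λ R := Bc_pos
  have hh0 := hh.1
  have hh1 := hh.2
  by_cases hk : k = 0
  · subst hk; rw [cf_zero, cf_zero]; simp; positivity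
  obtain ⟨h1, h2, h3, h4, h6⟩ := kap_facts hμ hμΛ hΛ hk
  rw [coef_eq' hv k h1 h2 ⟨by linarith [hx.1], hx.2⟩, coef_eq' hv k h1 h2 ⟨by linarith [hx'.1], hx'.2⟩,
    ← sub_mul, abs_mul]
  set κ := kap μ k
  have hlip : ‖cosh (κ * (R - x)) - cosh (κ * (R - x'))‖ ≤
      (κ ^ 2 * (2 * h) * exp (κ / 4)) * ‖x - x'‖ := by
    refine Convex.norm_image_sub_le_of_norm_hasDerivWithin_le (s := Icc (R - 2 * h) R)
      (f := fun x => cosh (κ * (R - x))) (f' := fun x => sinh (κ * (R - x)) * (κ * -1))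
      (fun y hy => ?_) (fun y hy => ?_) (convex_Icc _ _) hx' hx
    · exact ((hasDerivAt_cosh _).comp y (((hasDerivAt_id y).const_sub R).const_mul κ)).hasDerivWithinAt
    · have e0 : 0 ≤ κ * (R - y) := mul_nonneg h1.le (by linarith [hy.2])
      have e1 : κ * (R - y) ≤ κ * (2 * h) := by
        have := hy.1
        gcongr; linarith
      have e2 : κ * (R - y) ≤ κ / 4 := e1.trans (by nlinarith)
      rw [norm_mul, Real.norm_eq_abs, Real.norm_eq_abs, abs_of_nonneg (sinh_nonneg_iff.2 e0), mul_neg_one,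
        abs_neg, abs_of_pos h1]
      calc sinh (κ * (R - y)) * κ ≤ (κ * (R - y) * exp (κ * (R - y))) * κ := by
            gcongr; exact sinh_le_mul_exp
        _ ≤ (κ * (2 * h) * exp (κ / 4)) * κ := by gcongr
        _ = _ := by ring
  rw [Real.norm_eq_abs, Real.norm_eq_abs] at hlip
  have hm := mode_bound hR hμ hμΛ hΛ hv hn hk
  calc _ ≤ ((κ ^ 2 * (2 * h) * exp (κ / 4)) * |x - x'|) * |cf v k R| := by gcongr
    _ = κ ^ 2 * ((2 * h) * |x - x'|) * (exp (κ / 4) * |cf v k R|) := by ring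
    _ ≤ (16 * ((k : ℝ) ^ 2 + 1)) * ((2 * h) * |x - x'|) * (Bc Λ R * exp (-|(k : ℝ)|)) := by
        gcongr
        linarith
    _ = _ := by ring

lemma hasSum_slice (hR : 1 ≤ R) (hμ : 0 ≤ μ) (hμΛ : μ ≤ Λ) (hΛ : Λ < π ^ 2) (hv : Good R μ 0 v)
    (hn : ∫ p in GamR R, v p ^ 2 ≤ 1) {x : ℝ} (hx : x ∈ Icc (R - 1 / 4) R) {y : ℝ}
    (hy : y ∈ Ioo (-1 : ℝ) 0) :
    HasSum (fun k : ℤ => cf v k x * sin (k * π * (y + 1))) (v (x, y)) := by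
  have hx' : x ∈ Icc 0 R := ⟨by linarith [hx.1], hx.2⟩
  have hs : Summable fun k : ℤ => cf v k x :=
    Summable.of_norm_bounded (summable_sq_exp.mul_left (Bc Λ R))
      fun k => cf_near hR hμ hμΛ hΛ hv hn k hx
  have hz : ∀ y ∈ Icc (-1 : ℝ) 0, y ∉ Ioo (-1 : ℝ) 0 → v (x, y) = 0 := by
    intro y hy hy'
    refine hv.zero _ (arm_mem_KK hx' hy) fun h => hy' ?_
    rw [mem_Gam] at h
    refine ⟨h.2.1, ?_⟩
    rcases h.2.2 with h | h
    · simp only at h; linarith [hx'.1]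
    · exact h
  have := hasSum_sine (φ := fun s => v (x, s - 1)) (b := fun k => cf v k x)
    ((hv.slice_cont hx').comp (by fun_prop) fun s hs => ⟨by linarith [hs.1], by linarith [hs.2]⟩)
    (hz _ (by norm_num) (by norm_num)) (hz _ (by norm_num) (by norm_num)) (fun k => cf_eq v k x) hs
    (s := y + 1) ⟨by linarith [hy.1], by linarith [hy.2]⟩
  simpa using this

lemma value_near (hR : 1 ≤ R) (hμ : 0 ≤ μ) (hμΛ : μ ≤ Λ) (hΛ : Λ < π ^ 2) (hv : Good R μ 0 v)
    (hn : ∫ p in GamR R, v p ^ 2 ≤ 1) {x : ℝ} (hx : x ∈ Icc (R - 1 / 4) R) {y : ℝ}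
    (hy : y ∈ Ioo (-1 : ℝ) 0) : |v (x, y)| ≤ Bc Λ R * Ksum := by
  refine (hasSum_slice hR hμ hμΛ hΛ hv hn hx hy).norm_le_of_bounded
    (summable_sq_exp.hasSum.mul_left (Bc Λ R)) fun k => ?_
  rw [norm_mul]
  exact (mul_le_of_le_one_right (norm_nonneg _) (abs_sin_le_one _)).trans
    (cf_near hR hμ hμΛ hΛ hv hn k hx)

/-- The normal derivative on the cross section at distance `h` from the end. -/
lemma flux_near (hR : 1 ≤ R) (hμ : 0 ≤ μ) (hμΛ : μ ≤ Λ) (hΛ : Λ < π ^ 2) (hv : Good R μ 0 v)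
    (hn : ∫ p in GamR R, v p ^ 2 ≤ 1) {h : ℝ} (hh : h ∈ Ioc (0 : ℝ) (1 / 8)) {y : ℝ}
    (hy : y ∈ Ioo (-1 : ℝ) 0) : |pd1 v (R - h, y)| ≤ 32 * h * Bc Λ R * Ksum := by
  have hB : 0 < Bc Λ R := Bc_pos
  have hh0 := hh.1
  have hh1 := hh.2
  have hK : 0 ≤ Ksum := tsum_nonneg fun k => by positivity
  have hd : HasDerivAt (fun x => v (x, y)) (pd1 v (R - h, y)) (R - h) := by
    have h1 : DifferentiableAt ℝ v (R - h, y) := (hv.diff _ ⟨arm_mem_KK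
      ⟨by linarith, by linarith⟩ ⟨hy.1.le, hy.2.le⟩, arm_mem_Gam (by linarith) hy⟩).differentiableAt
      (by norm_num)
    exact h1.hasFDerivAt.comp_hasDerivAt (R - h) ((hasDerivAt_id _).prodMk (hasDerivAt_const _ y))
  refine hd.le_of_lip' (by positivity) ?_
  filter_upwards [Ioo_mem_nhds (by linarith : R - 2 * h < R - h) (by linarith : R - h < R)] with x hx
  have hx1 : x ∈ Icc (R - 1 / 4) R := ⟨by linarith [hx.1], hx.2.le⟩
  have hx2 : R - h ∈ Icc (R - 1 / 4) R := ⟨by linarith, by linarith⟩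
  have hsum := (hasSum_slice hR hμ hμΛ hΛ hv hn hx1 hy).sub (hasSum_slice hR hμ hμΛ hΛ hv hn hx2 hy)
  have := hsum.norm_le_of_bounded
    (summable_sq_exp.hasSum.mul_left (32 * h * Bc Λ R * |x - (R - h)|)) fun k => by
      rw [← sub_mul, norm_mul]
      exact (mul_le_of_le_one_right (norm_nonneg _) (abs_sin_le_one _)).trans
        (cf_lip hR hμ hμΛ hΛ hv hn k hh ⟨hx.1.le, hx.2.le⟩ ⟨by linarith, by linarith⟩)
  refine this.trans (le_of_eq ?_)
  rw [← Ksum, Real.norm_eq_abs]; ring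
end

/-! ### Neumann bracketing -/

/-- Integrating the one-dimensional Dirichlet inequality over the cross sections of an arm. -/
lemma arm_ineq {X : Set ℝ} (hX : MeasurableSet X) {u ud : ℝ × ℝ → ℝ}
    (hi : IntegrableOn (fun p => u p ^ 2) (X ×ˢ Ioo (-1) 0))
    (hid : IntegrableOn (fun p => ud p ^ 2) (X ×ˢ Ioo (-1) 0))
    (hc : ∀ x ∈ X, ContinuousOn (fun y => u (x, y)) (Icc (-1) 0))
    (h0 : ∀ x ∈ X, u (x, -1) = 0) (h1 : ∀ x ∈ X, u (x, 0) = 0)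
    (hd : ∀ x ∈ X, ∀ y ∈ Ioo (-1 : ℝ) 0, HasDerivAt (fun y => u (x, y)) (ud (x, y)) y) :
    π ^ 2 * ∫ p in X ×ˢ Ioo (-1) 0, u p ^ 2 ≤ ∫ p in X ×ˢ Ioo (-1) 0, ud p ^ 2 := by
  rw [Measure.volume_eq_prod] at *
  rw [setIntegral_prod _ hi, setIntegral_prod _ hid, ← integral_const_mul]
  rw [IntegrableOn, ← Measure.prod_restrict] at hi hid
  refine integral_mono_ae (hi.integral_prod_left.const_mul _) hid.integral_prod_left ?_
  filter_upwards [hid.prod_right_ae, ae_restrict_mem hX] with x hx hxX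
  exact poincare_dirichlet (hc x hxX) (h0 x hxX) (h1 x hxX) (hd x hxX) hx

/-- For a function of mean zero on the square, the two marginals are orthogonal. -/
lemma marginals {g : ℝ × ℝ → ℝ} (hg : Continuous g)
    (hm : ∫ p in Ioo (-1 : ℝ) 0 ×ˢ Ioo (-1 : ℝ) 0, g p = 0) :
    (∫ y in Ioo (-1 : ℝ) 0, (∫ x in Ioo (-1 : ℝ) 0, g (x, y)) ^ 2) +
      (∫ x in Ioo (-1 : ℝ) 0, (∫ y in Ioo (-1 : ℝ) 0, g (x, y)) ^ 2) ≤
      ∫ p in Ioo (-1 : ℝ) 0 ×ˢ Ioo (-1 : ℝ) 0, g p ^ 2 := by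
  set F : ℝ → ℝ := fun y => ∫ x in Ioo (-1 : ℝ) 0, g (x, y) with hF
  set H : ℝ → ℝ := fun x => ∫ y in Ioo (-1 : ℝ) 0, g (x, y) with hH
  have hFc : Continuous F := by
    have := intervalIntegral.continuous_parametric_intervalIntegral_of_continuous' (μ := volume)
      (f := fun y x => g (x, y)) (by unfold Function.uncurry; fun_prop) (-1) 0
    simpa only [intervalIntegral.integral_of_le (by norm_num : (-1 : ℝ) ≤ 0), integral_Ioc_eq_integral_Ioo]
      using this
  have hHc : Continuous H := by
    have := intervalIntegral.continuous_parametric_intervalIntegral_of_continuous' (μ := volume)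
      (f := fun x y => g (x, y)) (by unfold Function.uncurry; fun_prop) (-1) 0
    simpa only [intervalIntegral.integral_of_le (by norm_num : (-1 : ℝ) ≤ 0), integral_Ioc_eq_integral_Ioo]
      using this
  have hIntg : ∀ φ : ℝ × ℝ → ℝ, Continuous φ → IntegrableOn φ (Ioo (-1 : ℝ) 0 ×ˢ Ioo (-1 : ℝ) 0)
      (volume.prod volume) := fun φ hφ =>
    (hφ.continuousOn.integrableOn_compact (isCompact_Icc.prod isCompact_Icc)).mono_set
      (prod_mono Ioo_subset_Icc_self Ioo_subset_Icc_self)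
  rw [Measure.volume_eq_prod] at *
  rw [setIntegral_prod _ (hIntg g hg)] at hm
  have hm' : ∫ x in Ioo (-1 : ℝ) 0, H x = 0 := hm
  have hm2 : ∫ y in Ioo (-1 : ℝ) 0, F y = 0 := by
    have h3 := hIntg g hg
    rw [IntegrableOn, ← Measure.prod_restrict] at h3
    exact (integral_integral_swap (f := fun x y => g (x, y)) h3).symm.trans hm
  have e1 : ∫ p in Ioo (-1 : ℝ) 0 ×ˢ Ioo (-1 : ℝ) 0, g p * F p.2 ∂(volume.prod volume) =
      ∫ y in Ioo (-1 : ℝ) 0, F y ^ 2 := by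
    have i1 := hIntg (fun p => g p * F p.2) (by fun_prop)
    rw [IntegrableOn, ← Measure.prod_restrict] at i1
    rw [← Measure.prod_restrict, integral_prod_symm _ i1]
    refine integral_congr_ae (ae_of_all _ fun y => ?_)
    simp only [integral_mul_const]
    exact (sq (F y)).symm
  have e2 : ∫ p in Ioo (-1 : ℝ) 0 ×ˢ Ioo (-1 : ℝ) 0, g p * H p.1 ∂(volume.prod volume) =
      ∫ x in Ioo (-1 : ℝ) 0, H x ^ 2 := by
    rw [setIntegral_prod _ (hIntg (fun p => g p * H p.1) (by fun_prop))]
    refine integral_congr_ae (ae_of_all _ fun x => ?_)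
    simp only [integral_mul_const]
    exact (sq (H x)).symm
  have e3 : ∫ p in Ioo (-1 : ℝ) 0 ×ˢ Ioo (-1 : ℝ) 0, F p.2 ^ 2 ∂(volume.prod volume) =
      ∫ y in Ioo (-1 : ℝ) 0, F y ^ 2 := by
    rw [setIntegral_prod _ (hIntg (fun p => F p.2 ^ 2) (by fun_prop))]
    simp
  have e4 : ∫ p in Ioo (-1 : ℝ) 0 ×ˢ Ioo (-1 : ℝ) 0, H p.1 ^ 2 ∂(volume.prod volume) =
      ∫ x in Ioo (-1 : ℝ) 0, H x ^ 2 := by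
    rw [setIntegral_prod _ (hIntg (fun p => H p.1 ^ 2) (by fun_prop))]
    simp
  have e5 : ∫ p in Ioo (-1 : ℝ) 0 ×ˢ Ioo (-1 : ℝ) 0, H p.1 * F p.2 ∂(volume.prod volume) = 0 := by
    rw [setIntegral_prod _ (hIntg (fun p => H p.1 * F p.2) (by fun_prop))]
    simp [integral_const_mul, hm2]
  have hpos : 0 ≤ ∫ p in Ioo (-1 : ℝ) 0 ×ˢ Ioo (-1 : ℝ) 0, (g p - F p.2 - H p.1) ^ 2 ∂(volume.prod volume) :=
    integral_nonneg fun _ => sq_nonneg _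
  have hexp : ∫ p in Ioo (-1 : ℝ) 0 ×ˢ Ioo (-1 : ℝ) 0, (g p - F p.2 - H p.1) ^ 2 ∂(volume.prod volume) =
      (∫ p in Ioo (-1 : ℝ) 0 ×ˢ Ioo (-1 : ℝ) 0, g p ^ 2 ∂(volume.prod volume)) -
      2 * (∫ p in Ioo (-1 : ℝ) 0 ×ˢ Ioo (-1 : ℝ) 0, g p * F p.2 ∂(volume.prod volume)) -
      2 * (∫ p in Ioo (-1 : ℝ) 0 ×ˢ Ioo (-1 : ℝ) 0, g p * H p.1 ∂(volume.prod volume)) +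
      (∫ p in Ioo (-1 : ℝ) 0 ×ˢ Ioo (-1 : ℝ) 0, F p.2 ^ 2 ∂(volume.prod volume)) +
      (∫ p in Ioo (-1 : ℝ) 0 ×ˢ Ioo (-1 : ℝ) 0, H p.1 ^ 2 ∂(volume.prod volume)) +
      2 * (∫ p in Ioo (-1 : ℝ) 0 ×ˢ Ioo (-1 : ℝ) 0, H p.1 * F p.2 ∂(volume.prod volume)) := by
    rw [← integral_const_mul, ← integral_const_mul, ← integral_const_mul,
      ← integral_sub (hIntg _ (by fun_prop)) (hIntg _ (by fun_prop)),
      ← integral_sub (hIntg _ (by fun_prop)) (hIntg _ (by fun_prop)),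
      ← integral_add (hIntg _ (by fun_prop)) (hIntg _ (by fun_prop)),
      ← integral_add (hIntg _ (by fun_prop)) (hIntg _ (by fun_prop)),
      ← integral_add (hIntg _ (by fun_prop)) (hIntg _ (by fun_prop))]
    congr 1; ext p; ring
  rw [hexp, e1, e2, e3, e4, e5] at hpos
  linarith

/-- The corner square, with Neumann conditions, has second eigenvalue `π²`. -/
lemma corner_ineq {f : ℝ × ℝ → ℝ} (hc : ContinuousOn f (Icc (-1) 0 ×ˢ Icc (-1) 0))
    (hd : ∀ p ∈ Ioo (-1 : ℝ) 0 ×ˢ Ioo (-1 : ℝ) 0, DifferentiableAt ℝ f p)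
    (h1 : IntegrableOn (fun p => pd1 f p ^ 2) (Ioo (-1 : ℝ) 0 ×ˢ Ioo (-1 : ℝ) 0))
    (h2 : IntegrableOn (fun p => pd2 f p ^ 2) (Ioo (-1 : ℝ) 0 ×ˢ Ioo (-1 : ℝ) 0))
    (hm : ∫ p in Ioo (-1 : ℝ) 0 ×ˢ Ioo (-1 : ℝ) 0, f p = 0) :
    π ^ 2 * ∫ p in Ioo (-1 : ℝ) 0 ×ˢ Ioo (-1 : ℝ) 0, f p ^ 2 ≤
      (∫ p in Ioo (-1 : ℝ) 0 ×ˢ Ioo (-1 : ℝ) 0, pd1 f p ^ 2) +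
      ∫ p in Ioo (-1 : ℝ) 0 ×ˢ Ioo (-1 : ℝ) 0, pd2 f p ^ 2 := by
  -- a globally continuous extension of `f`
  set c : ℝ → ℝ := fun t => max (-1) (min t 0) with hcdef
  have hc1 : ∀ t, c t ∈ Icc (-1 : ℝ) 0 := fun t => ⟨le_max_left _ _, max_le (by norm_num) (min_le_right _ _)⟩
  have hc2 : ∀ t ∈ Ioo (-1 : ℝ) 0, c t = t := fun t ht => by
    simp only [hcdef, min_eq_left ht.2.le, max_eq_right ht.1.le]
  set g : ℝ × ℝ → ℝ := fun p => f (c p.1, c p.2) with hg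
  have hgc : Continuous g := by
    rw [← continuousOn_univ]
    exact hc.comp (by fun_prop) fun p _ => ⟨hc1 _, hc1 _⟩
  have hgf : ∀ x ∈ Ioo (-1 : ℝ) 0, ∀ y ∈ Ioo (-1 : ℝ) 0, g (x, y) = f (x, y) := fun x hx y hy => by
    simp only [hg, hc2 x hx, hc2 y hy]
  have hQ : MeasurableSet (Ioo (-1 : ℝ) 0 ×ˢ Ioo (-1 : ℝ) 0) := measurableSet_Ioo.prod measurableSet_Ioo
  have hgf' : ∀ p ∈ Ioo (-1 : ℝ) 0 ×ˢ Ioo (-1 : ℝ) 0, g p = f p := fun p hp => hgf _ hp.1 _ hp.2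
  have hmar := marginals hgc (by rw [setIntegral_congr_fun hQ hgf']; exact hm)
  rw [setIntegral_congr_fun hQ (g := fun p => f p ^ 2) (fun p hp => by simp only [hgf' p hp])] at hmar
  have hFe : ∫ y in Ioo (-1 : ℝ) 0, (∫ x in Ioo (-1 : ℝ) 0, g (x, y)) ^ 2 =
      ∫ y in Ioo (-1 : ℝ) 0, (∫ x in Ioo (-1 : ℝ) 0, f (x, y)) ^ 2 :=
    setIntegral_congr_fun measurableSet_Ioo fun y hy => by
      rw [setIntegral_congr_fun measurableSet_Ioo fun x hx => hgf x hx y hy]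
  have hHe : ∫ x in Ioo (-1 : ℝ) 0, (∫ y in Ioo (-1 : ℝ) 0, g (x, y)) ^ 2 =
      ∫ x in Ioo (-1 : ℝ) 0, (∫ y in Ioo (-1 : ℝ) 0, f (x, y)) ^ 2 :=
    setIntegral_congr_fun measurableSet_Ioo fun x hx => by
      rw [setIntegral_congr_fun measurableSet_Ioo fun y hy => hgf x hx y hy]
  rw [hFe, hHe] at hmar
  have hfi : IntegrableOn (fun p => f p ^ 2) (Ioo (-1 : ℝ) 0 ×ˢ Ioo (-1 : ℝ) 0) :=
    ((hc.pow 2).integrableOn_compact (isCompact_Icc.prod isCompact_Icc)).mono_set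
      (prod_mono Ioo_subset_Icc_self Ioo_subset_Icc_self)
  have hFi : IntegrableOn (fun y => (∫ x in Ioo (-1 : ℝ) 0, f (x, y)) ^ 2) (Ioo (-1 : ℝ) 0) := by
    have hFc : Continuous fun y => (∫ x in Ioo (-1 : ℝ) 0, g (x, y)) ^ 2 := by
      have := intervalIntegral.continuous_parametric_intervalIntegral_of_continuous' (μ := volume)
        (f := fun y x => g (x, y)) (by unfold Function.uncurry; fun_prop) (-1) 0
      simp only [intervalIntegral.integral_of_le (by norm_num : (-1 : ℝ) ≤ 0),
        integral_Ioc_eq_integral_Ioo] at this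
      exact this.pow 2
    refine (((hFc.continuousOn (s := Icc (-1) 0)).integrableOn_Icc (μ := volume)).mono_set
      Ioo_subset_Icc_self).congr_fun (fun y hy => ?_) measurableSet_Ioo
    simp only; rw [setIntegral_congr_fun measurableSet_Ioo fun x hx => hgf x hx y hy]
  have hHi : IntegrableOn (fun x => (∫ y in Ioo (-1 : ℝ) 0, f (x, y)) ^ 2) (Ioo (-1 : ℝ) 0) := by
    have hFc : Continuous fun x => (∫ y in Ioo (-1 : ℝ) 0, g (x, y)) ^ 2 := by
      have := intervalIntegral.continuous_parametric_intervalIntegral_of_continuous' (μ := volume)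
        (f := fun x y => g (x, y)) (by unfold Function.uncurry; fun_prop) (-1) 0
      simp only [intervalIntegral.integral_of_le (by norm_num : (-1 : ℝ) ≤ 0),
        integral_Ioc_eq_integral_Ioo] at this
      exact this.pow 2
    refine (((hFc.continuousOn (s := Icc (-1) 0)).integrableOn_Icc (μ := volume)).mono_set
      Ioo_subset_Icc_self).congr_fun (fun x hx => ?_) measurableSet_Ioo
    simp only; rw [setIntegral_congr_fun measurableSet_Ioo fun y hy => hgf x hx y hy]
  rw [Measure.volume_eq_prod] at *
  rw [IntegrableOn, ← Measure.prod_restrict] at h1 h2 hfi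
  have k1 : π ^ 2 * ((∫ p in Ioo (-1 : ℝ) 0 ×ˢ Ioo (-1 : ℝ) 0, f p ^ 2 ∂(volume.prod volume)) -
      ∫ x in Ioo (-1 : ℝ) 0, (∫ y in Ioo (-1 : ℝ) 0, f (x, y)) ^ 2) ≤
      ∫ p in Ioo (-1 : ℝ) 0 ×ˢ Ioo (-1 : ℝ) 0, pd2 f p ^ 2 ∂(volume.prod volume) := by
    rw [← Measure.prod_restrict, integral_prod _ hfi, integral_prod _ h2,
      ← integral_sub hfi.integral_prod_left hHi, ← integral_const_mul]
    refine integral_mono_ae ((hfi.integral_prod_left.sub hHi).const_mul _) h2.integral_prod_left ?_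
    filter_upwards [h2.prod_right_ae, ae_restrict_mem measurableSet_Ioo] with x hx hxX
    refine poincare_neumann (g := fun y => f (x, y)) (g' := fun y => pd2 f (x, y))
      (hc.comp (by fun_prop) fun y hy => ⟨Ioo_subset_Icc_self hxX, hy⟩) (fun y hy => ?_) hx
    exact (hd (x, y) ⟨hxX, hy⟩).hasFDerivAt.comp_hasDerivAt y
      ((hasDerivAt_const _ x).prodMk (hasDerivAt_id _))
  have k2 : π ^ 2 * ((∫ p in Ioo (-1 : ℝ) 0 ×ˢ Ioo (-1 : ℝ) 0, f p ^ 2 ∂(volume.prod volume)) -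
      ∫ y in Ioo (-1 : ℝ) 0, (∫ x in Ioo (-1 : ℝ) 0, f (x, y)) ^ 2) ≤
      ∫ p in Ioo (-1 : ℝ) 0 ×ˢ Ioo (-1 : ℝ) 0, pd1 f p ^ 2 ∂(volume.prod volume) := by
    rw [← Measure.prod_restrict, integral_prod_symm _ hfi, integral_prod_symm _ h1,
      ← integral_sub hfi.integral_prod_right hFi, ← integral_const_mul]
    refine integral_mono_ae ((hfi.integral_prod_right.sub hFi).const_mul _) h1.integral_prod_right ?_
    filter_upwards [h1.prod_left_ae, ae_restrict_mem measurableSet_Ioo] with y hy hyX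
    refine poincare_neumann (g := fun x => f (x, y)) (g' := fun x => pd1 f (x, y))
      (hc.comp (by fun_prop) fun x hx => ⟨hx, Ioo_subset_Icc_self hyX⟩) (fun x hx => ?_) hy
    exact (hd (x, y) ⟨hx, hyX⟩).hasFDerivAt.comp_hasDerivAt x
      ((hasDerivAt_id _).prodMk (hasDerivAt_const _ y))
  nlinarith [mul_le_mul_of_nonneg_left hmar (sq_nonneg π)]

/-- Functions of finite energy on `Γ_r`, regular up to the ends and vanishing on the walls. -/
structure Reg (r : ℝ) (f : ℝ × ℝ → ℝ) : Prop where
  diff : ∀ p ∈ KK r ∩ Gam, ContDiffAt ℝ 1 f p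
  cont : ContinuousOn f (KK r)
  zero : ∀ p ∈ KK r, p ∉ Gam → f p = 0
  int : IntegrableOn (dot f f) (GamR r)

section
variable {r : ℝ} {f : ℝ × ℝ → ℝ}

lemma dot_swap (f g : ℝ × ℝ → ℝ) (p : ℝ × ℝ) :
    dot (f ∘ Prod.swap) (g ∘ Prod.swap) p = dot f g p.swap := by
  simp only [dot, pd1_swap, pd2_swap]; ring

lemma integrableOn_GamR_swap (hr : 0 < r) {φ : ℝ × ℝ → ℝ} (h : IntegrableOn φ (GamR r)) :
    IntegrableOn (fun p => φ p.swap) (GamR r) := by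
  have hm : MeasurePreserving (Prod.swap : ℝ × ℝ → ℝ × ℝ) volume volume :=
    Measure.measurePreserving_swap
  have h2 := (hm.integrableOn_comp_preimage (MeasurableEquiv.prodComm.measurableEmbedding)).2 h
  have e : Prod.swap ⁻¹' (GamR r) = GamR r := by
    ext p; exact swap_mem_GamR hr
  rwa [e] at h2

lemma Reg.swap (hr : 0 < r) (h : Reg r f) : Reg r (f ∘ Prod.swap) := by
  refine ⟨fun p hp => ?_, ?_, fun p hp hG => ?_, ?_⟩
  · exact ContDiffAt.comp p (h.diff p.swap ⟨swap_mem_KK.2 hp.1, swap_mem_Gam.2 hp.2⟩)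
      (swapL.contDiff.contDiffAt)
  · exact h.cont.comp continuous_swap.continuousOn fun p hp => swap_mem_KK.2 hp
  · exact h.zero _ (swap_mem_KK.2 hp) fun hh => hG (swap_mem_Gam.1 hh)
  · rw [show dot (f ∘ Prod.swap) (f ∘ Prod.swap) = fun p => dot f f p.swap from
      funext fun p => dot_swap f f p]
    exact integrableOn_GamR_swap hr h.int

lemma Good.reg {μ F : ℝ} (hr : 0 < r) (h : Good r μ F f) : Reg r f :=
  ⟨fun p hp => (h.diff p hp).of_le (by norm_num), h.cont, h.zero, h.grad_integrable hr⟩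

lemma contDiffAt_fderiv_apply {p : ℝ × ℝ} (h : ContDiffAt ℝ 1 f p) (e : ℝ × ℝ) :
    ContinuousAt (fun q => fderiv ℝ f q e) p := by
  have h1 : ContDiffAt ℝ 0 (fderiv ℝ f) p := h.fderiv_right (by norm_num)
  exact h1.continuousAt.clm_apply continuousAt_const

lemma Reg.mem (hr : 0 < r) {p : ℝ × ℝ} (hp : p ∈ GamR r) : p ∈ KK r ∩ Gam :=
  ⟨GamR_subset_KK hr hp, hp.1⟩

lemma Reg.pd1_cont (hr : 0 < r) (h : Reg r f) : ContinuousOn (pd1 f) (GamR r) := fun p hp =>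
  (contDiffAt_fderiv_apply (h.diff p (Reg.mem hr hp)) _).continuousWithinAt

lemma Reg.pd2_cont (hr : 0 < r) (h : Reg r f) : ContinuousOn (pd2 f) (GamR r) := fun p hp =>
  (contDiffAt_fderiv_apply (h.diff p (Reg.mem hr hp)) _).continuousWithinAt

lemma Reg.pd1_int (hr : 0 < r) (h : Reg r f) : IntegrableOn (fun p => pd1 f p ^ 2) (GamR r) := by
  refine h.int.mono' (((h.pd1_cont hr).pow 2).aestronglyMeasurable (measurableSet_GamR r))
    (Eventually.of_forall fun p => ?_)
  rw [Real.norm_eq_abs, abs_of_nonneg (sq_nonneg _)]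
  simp only [dot]; nlinarith [sq_nonneg (pd2 f p)]

lemma Reg.pd2_int (hr : 0 < r) (h : Reg r f) : IntegrableOn (fun p => pd2 f p ^ 2) (GamR r) := by
  refine h.int.mono' (((h.pd2_cont hr).pow 2).aestronglyMeasurable (measurableSet_GamR r))
    (Eventually.of_forall fun p => ?_)
  rw [Real.norm_eq_abs, abs_of_nonneg (sq_nonneg _)]
  simp only [dot]; nlinarith [sq_nonneg (pd1 f p)]

lemma Reg.sq_int (hr : 0 < r) (h : Reg r f) : IntegrableOn (fun p => f p ^ 2) (GamR r) :=
  integrableOn_of_KK hr (h.cont.pow 2)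

/-- Decomposition of `Γ_r` into the corner square and the two arms. -/
lemma GamR_decomp (hr : 0 < r) : GamR r = (Ioo (-1) 0 ×ˢ Ioo (-1) 0) ∪
    ((Ico 0 r ×ˢ Ioo (-1) 0) ∪ (Ioo (-1) 0 ×ˢ Ico 0 r)) := by
  ext ⟨x, y⟩
  rw [mem_GamR hr]
  simp only [mem_union, mem_prod, mem_Ioo, mem_Ico]
  constructor
  · rintro ⟨h1, h2, h3, h4, h5⟩
    by_cases hx : x < 0
    · by_cases hy : y < 0
      · exact Or.inl ⟨⟨h1, hx⟩, h2, hy⟩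
      · exact Or.inr (Or.inr ⟨⟨h1, hx⟩, not_lt.1 hy, h4⟩)
    · rcases h5 with h | h
      · exact absurd h hx
      · exact Or.inr (Or.inl ⟨⟨not_lt.1 hx, h3⟩, h2, h⟩)
  · rintro (⟨⟨h1, h2⟩, h3, h4⟩ | ⟨⟨h1, h2⟩, h3, h4⟩ | ⟨⟨h1, h2⟩, h3, h4⟩)
    · exact ⟨h1, h3, by linarith, by linarith, Or.inl h2⟩
    · exact ⟨by linarith, h3, h2, by linarith, Or.inr h4⟩
    · exact ⟨h1, by linarith, by linarith, h4, Or.inl h2⟩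

lemma corner_subset (hr : 0 < r) : Ioo (-1 : ℝ) 0 ×ˢ Ioo (-1 : ℝ) 0 ⊆ GamR r := by
  rw [GamR_decomp hr]; exact subset_union_left

lemma arm1_subset (hr : 0 < r) : Ico (0 : ℝ) r ×ˢ Ioo (-1 : ℝ) 0 ⊆ GamR r := by
  rw [GamR_decomp hr]; exact subset_union_left.trans subset_union_right

lemma arm2_subset (hr : 0 < r) : Ioo (-1 : ℝ) 0 ×ˢ Ico (0 : ℝ) r ⊆ GamR r := by
  rw [GamR_decomp hr]; exact subset_union_right.trans subset_union_right

lemma integral_decomp (hr : 0 < r) {φ : ℝ × ℝ → ℝ} (h : IntegrableOn φ (GamR r)) :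
    ∫ p in GamR r, φ p = (∫ p in Ioo (-1 : ℝ) 0 ×ˢ Ioo (-1 : ℝ) 0, φ p) +
      ((∫ p in Ico (0 : ℝ) r ×ˢ Ioo (-1 : ℝ) 0, φ p) + ∫ p in Ico (0 : ℝ) r ×ˢ Ioo (-1 : ℝ) 0, φ p.swap) := by
  have e1 : ∫ p in Ico (0 : ℝ) r ×ˢ Ioo (-1 : ℝ) 0, φ p.swap =
      ∫ p in Ioo (-1 : ℝ) 0 ×ˢ Ico (0 : ℝ) r, φ p := by
    rw [Measure.volume_eq_prod]; exact setIntegral_prod_swap _ _ φ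
  have hA : MeasurableSet (Ico (0 : ℝ) r ×ˢ Ioo (-1 : ℝ) 0) := measurableSet_Ico.prod measurableSet_Ioo
  have hA2 : MeasurableSet (Ioo (-1 : ℝ) 0 ×ˢ Ico (0 : ℝ) r) := measurableSet_Ioo.prod measurableSet_Ico
  have i1 := h.mono_set (arm1_subset hr)
  have i2 := h.mono_set (arm2_subset hr)
  rw [e1, ← setIntegral_union _ hA2 i1 i2, ← setIntegral_union _ (hA.union hA2)
    (h.mono_set (corner_subset hr)) (i1.union i2), ← GamR_decomp hr]
  · rw [Set.disjoint_left]
    rintro ⟨x, y⟩ ⟨h1, h2⟩ (⟨h3, h4⟩ | ⟨h3, h4⟩)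
    · exact absurd h3.1 (not_le.2 h1.2)
    · exact absurd h4.1 (not_le.2 h2.2)
  · rw [Set.disjoint_left]
    rintro ⟨x, y⟩ ⟨h1, h2⟩ ⟨h3, h4⟩
    exact absurd h1.1 (not_le.2 h3.2)

lemma Reg.arm (hr : 0 < r) (h : Reg r f) :
    π ^ 2 * ∫ p in Ico (0 : ℝ) r ×ˢ Ioo (-1 : ℝ) 0, f p ^ 2 ≤
      ∫ p in Ico (0 : ℝ) r ×ˢ Ioo (-1 : ℝ) 0, dot f f p := by
  have hs := arm1_subset hr
  refine (arm_ineq measurableSet_Ico ((h.sq_int hr).mono_set hs) ((h.pd2_int hr).mono_set hs)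
    (fun x hx => h.cont.comp (by fun_prop) fun y hy => arm_mem_KK ⟨hx.1, hx.2.le⟩ hy)
    (fun x hx => h.zero _ (arm_mem_KK ⟨hx.1, hx.2.le⟩ (by norm_num)) fun hG => ?_)
    (fun x hx => h.zero _ (arm_mem_KK ⟨hx.1, hx.2.le⟩ (by norm_num)) fun hG => ?_)
    (fun x hx y hy => ?_)).trans ?_
  · rw [mem_Gam] at hG; exact lt_irrefl _ hG.2.1
  · rw [mem_Gam] at hG; rcases hG.2.2 with h | h <;> simp only at h <;> linarith [hx.1]
  · exact (((h.diff (x, y) (Reg.mem hr (hs ⟨hx, hy⟩))).differentiableAt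
      (by norm_num)).hasFDerivAt.comp_hasDerivAt y
      ((hasDerivAt_const _ x).prodMk (hasDerivAt_id _)))
  · refine integral_mono ((h.pd2_int hr).mono_set hs) (h.int.mono_set hs) fun p => ?_
    simp only [dot]; nlinarith [sq_nonneg (pd1 f p)]

/-- Neumann bracketing: on functions of mean zero on the corner square the energy is at least
`π²`. -/
lemma Reg.bracket (hr : 0 < r) (h : Reg r f)
    (hm : ∫ p in Ioo (-1 : ℝ) 0 ×ˢ Ioo (-1 : ℝ) 0, f p = 0) :
    π ^ 2 * ∫ p in GamR r, f p ^ 2 ≤ ∫ p in GamR r, dot f f p := by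
  have h1 := h.arm hr
  have h2 := (h.swap hr).arm hr
  simp only [dot_swap, Function.comp] at h2
  have hs := corner_subset hr
  have h3 := corner_ineq (f := f) (h.cont.mono fun p hp => by
      rw [mem_KK]
      exact ⟨hp.1.1, hp.2.1, hp.1.2.trans hr.le, hp.2.2.trans hr.le, Or.inl hp.1.2⟩)
    (fun p hp => (h.diff p (Reg.mem hr (hs hp))).differentiableAt (by norm_num))
    ((h.pd1_int hr).mono_set hs) ((h.pd2_int hr).mono_set hs) hm
  rw [← integral_add ((h.pd1_int hr).mono_set hs) ((h.pd2_int hr).mono_set hs)] at h3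
  have e3 : ∀ p, pd1 f p ^ 2 + pd2 f p ^ 2 = dot f f p := fun p => by simp only [dot]; ring
  simp only [e3] at h3
  rw [integral_decomp hr (h.sq_int hr), integral_decomp hr h.int]
  linarith

/-- Trace inequality at the end of the horizontal arm. -/
lemma Reg.trace (hr : 3 / 4 ≤ r) (h : Reg r f) :
    (∫ y in Ioo (-1 : ℝ) 0, |f (r, y)|) ^ 2 ≤ 4 * ∫ p in GamR r, (f p ^ 2 + dot f f p) := by
  have hr0 : 0 < r := by linarith
  set S := Ioo (r - 1 / 2) r ×ˢ Ioo (-1 : ℝ) 0 with hS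
  have hsub : S ⊆ GamR r := by
    rintro ⟨x, y⟩ ⟨hx, hy⟩
    rw [mem_GamR hr0]
    exact ⟨by linarith [hx.1], hy.1, hx.2, by linarith [hy.2], Or.inr hy.2⟩
  have hSm : MeasurableSet S := measurableSet_Ioo.prod measurableSet_Ioo
  have hvS : volume S < ⊤ := (measure_mono hsub).trans_lt (volume_GamR_lt_top hr0)
  have : IsFiniteMeasure (volume.restrict S) := ⟨by simpa using hvS⟩
  set G : ℝ × ℝ → ℝ := fun p => 2 * |f p| + |pd1 f p| with hG
  have hHi : IntegrableOn (fun p => f p ^ 2 + dot f f p) (GamR r) := (h.sq_int hr0).add h.int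
  have hGc : ContinuousOn G S := (continuousOn_const.mul
    ((h.cont.mono (hsub.trans (GamR_subset_KK hr0))).abs)).add (((h.pd1_cont hr0).mono hsub).abs)
  have hG2 : ∀ p, G p ^ 2 ≤ 8 * (f p ^ 2 + dot f f p) := fun p => by
    simp only [hG, dot]
    nlinarith [sq_abs (f p), sq_abs (pd1 f p), sq_nonneg (2 * |f p| - |pd1 f p|), sq_nonneg (pd2 f p),
      sq_nonneg (pd1 f p)]
  have hG2i : IntegrableOn (fun p => G p ^ 2) S :=
    ((hHi.mono_set hsub).const_mul 8).mono' ((hGc.pow 2).aestronglyMeasurable hSm)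
      (Eventually.of_forall fun p => by
        rw [Real.norm_eq_abs, abs_of_nonneg (sq_nonneg _)]; exact hG2 p)
  have hGi : IntegrableOn G S := by
    have hL2 : MemLp G 2 (volume.restrict S) :=
      (memLp_two_iff_integrable_sq (hGc.aestronglyMeasurable hSm)).2 hG2i
    exact hL2.integrable (by norm_num)
  have hvol : (volume.restrict S).real univ = 1 / 2 := by
    rw [measureReal_restrict_apply_univ, hS, Measure.volume_eq_prod, measureReal_prod_prod]
    simp [volume_real_Ioo]
  have h1 : (∫ p in S, G p) ^ 2 ≤ 4 * ∫ p in GamR r, (f p ^ 2 + dot f f p) := by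
    have e1 := sq_integral_le hGi hG2i
    rw [hvol] at e1
    have e2 : ∫ p in S, G p ^ 2 ≤ ∫ p in S, 8 * (f p ^ 2 + dot f f p) :=
      integral_mono hG2i ((hHi.mono_set hsub).const_mul 8) hG2
    rw [integral_const_mul] at e2
    have e3 : ∫ p in S, (f p ^ 2 + dot f f p) ≤ ∫ p in GamR r, (f p ^ 2 + dot f f p) :=
      setIntegral_mono_set hHi (Eventually.of_forall fun p =>
        add_nonneg (sq_nonneg _) (dot_self_nonneg f p)) (Eventually.of_forall hsub)
    linarith
  refine le_trans ?_ h1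
  refine pow_le_pow_left₀ (integral_nonneg fun _ => abs_nonneg _) ?_ 2
  rw [hS, Measure.volume_eq_prod] at hGi ⊢
  rw [IntegrableOn, ← Measure.prod_restrict] at hGi
  rw [← Measure.prod_restrict, integral_prod_symm _ hGi]
  have hci : IntegrableOn (fun y => |f (r, y)|) (Ioo (-1 : ℝ) 0) := by
    have hc : ContinuousOn (fun y => |f (r, y)|) (Icc (-1) 0) :=
      (h.cont.comp (by fun_prop) fun y hy => arm_mem_KK ⟨hr0.le, le_rfl⟩ hy).abs
    exact hc.integrableOn_Icc.mono_set Ioo_subset_Icc_self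
  refine setIntegral_mono_on hci hGi.integral_prod_right measurableSet_Ioo fun y hy => ?_
  have hmem : ∀ x ∈ Icc (r - 1 / 2) r, ((x, y) : ℝ × ℝ) ∈ KK r ∩ Gam := fun x hx =>
    ⟨arm_mem_KK ⟨by linarith [hx.1], hx.2⟩ ⟨hy.1.le, hy.2.le⟩, arm_mem_Gam (by linarith [hx.1]) hy⟩
  have hfd : ∀ x ∈ Icc (r - 1 / 2) r, HasDerivAt (fun x => f (x, y)) (pd1 f (x, y)) x := fun x hx =>
    ((h.diff _ (hmem x hx)).differentiableAt (by norm_num)).hasFDerivAt.comp_hasDerivAt x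
      ((hasDerivAt_id _).prodMk (hasDerivAt_const _ y))
  have hpc : ContinuousOn (fun x => pd1 f (x, y)) (Icc (r - 1 / 2) r) := fun x hx =>
    (ContinuousAt.comp (f := fun x : ℝ => (x, y)) (contDiffAt_fderiv_apply (h.diff _ (hmem x hx)) (1, 0))
      (by fun_prop)).continuousWithinAt
  have hfc : ContinuousOn (fun x => f (x, y)) (Icc (r - 1 / 2) r) := fun x hx =>
    (hfd x hx).continuousAt.continuousWithinAt
  have hle : r - 1 / 2 ≤ r := by linarith
  have hFTC := intervalIntegral.integral_eq_sub_of_hasDerivAt (a := r - 1 / 2) (b := r)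
    (f := fun x => (2 * (x - r) + 1) * f (x, y))
    (f' := fun x => 2 * f (x, y) + (2 * (x - r) + 1) * pd1 f (x, y)) (fun x hx => by
      rw [uIcc_of_le hle] at hx
      have hl : HasDerivAt (fun x => 2 * (x - r) + 1) 2 x := by
        simpa using (((hasDerivAt_id x).sub_const r).const_mul 2).add_const 1
      exact hl.mul (hfd x hx)) (ContinuousOn.intervalIntegrable (by
      rw [uIcc_of_le hle]
      exact (continuousOn_const.mul hfc).add (ContinuousOn.mul (by fun_prop) hpc)))
  have e1 : f (r, y) = ∫ x in (r - 1 / 2)..r, 2 * f (x, y) + (2 * (x - r) + 1) * pd1 f (x, y) := by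
    rw [hFTC]; ring
  rw [e1, ← integral_Ioc_eq_integral_Ioo, ← intervalIntegral.integral_of_le hle]
  rw [← Real.norm_eq_abs]
  refine (intervalIntegral.norm_integral_le_integral_norm hle).trans ?_
  refine intervalIntegral.integral_mono_on hle (ContinuousOn.intervalIntegrable ?_)
    (ContinuousOn.intervalIntegrable ?_) fun x hx => ?_
  · rw [uIcc_of_le hle]
    exact ((continuousOn_const.mul hfc).add (ContinuousOn.mul (by fun_prop) hpc)).norm
  · rw [uIcc_of_le hle]
    exact (continuousOn_const.mul hfc.abs).add hpc.abs
  · refine (norm_add_le _ _).trans ?_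
    simp only [norm_mul, Real.norm_eq_abs, hG, abs_two]
    have : |2 * (x - r) + 1| ≤ 1 := by rw [abs_le]; constructor <;> linarith [hx.1, hx.2]
    gcongr
    exact mul_le_of_le_one_left (abs_nonneg _) this

lemma Reg.trace2 (hr : 3 / 4 ≤ r) (h : Reg r f) :
    (∫ x in Ioo (-1 : ℝ) 0, |f (x, r)|) ^ 2 ≤ 4 * ∫ p in GamR r, (f p ^ 2 + dot f f p) := by
  have hr0 : 0 < r := by linarith
  have h1 := (h.swap hr0).trace hr
  rw [← setIntegral_GamR_swap hr0]
  simpa only [dot_swap, Function.comp, Prod.swap_prod_mk] using h1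
end

/-! ### Comparison of eigenfunctions on guides of different lengths -/

lemma le_of_sq_le_sq_real {a b : ℝ} (h : a ^ 2 ≤ b ^ 2) (hb : 0 ≤ b) : a ≤ b := (abs_le_of_sq_le_sq' h hb).2

/-- Cauchy–Schwarz for real integrals. -/
lemma integral_mul_sq_le {α : Type*} [MeasurableSpace α] {μ : Measure α} {f g : α → ℝ}
    (hf : Integrable (fun x => f x ^ 2) μ) (hg : Integrable (fun x => g x ^ 2) μ)
    (hfg : Integrable (fun x => f x * g x) μ) :
    (∫ x, f x * g x ∂μ) ^ 2 ≤ (∫ x, f x ^ 2 ∂μ) * ∫ x, g x ^ 2 ∂μ := by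
  have key : ∀ t : ℝ, 0 ≤ (∫ x, f x ^ 2 ∂μ) * (t * t) + (2 * ∫ x, f x * g x ∂μ) * t + ∫ x, g x ^ 2 ∂μ := by
    intro t
    have h1 : 0 ≤ ∫ x, (t * f x + g x) ^ 2 ∂μ := integral_nonneg fun _ => sq_nonneg _
    have e : ∫ x, (t * f x + g x) ^ 2 ∂μ = ∫ x, ((t * t) * f x ^ 2 + (2 * t) * (f x * g x)) + g x ^ 2 ∂μ := by
      congr 1; ext x; ring
    have hi : Integrable (fun x => (t * t) * f x ^ 2 + (2 * t) * (f x * g x)) μ :=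
      (hf.const_mul _).add (hfg.const_mul _)
    rw [e, integral_add hi hg, integral_add (hf.const_mul _) (hfg.const_mul _), integral_const_mul,
      integral_const_mul] at h1
    linarith
  have := discrim_le_zero key
  rw [discrim] at this
  linarith

section
variable {r μ μ' F F' a b : ℝ} {V u : ℝ × ℝ → ℝ}

/-- Linear combinations `a V + b u`. -/
def comb (a b : ℝ) (V u : ℝ × ℝ → ℝ) : ℝ × ℝ → ℝ := fun p => a * V p + b * u p

lemma fderiv_comb {p : ℝ × ℝ} (hV : DifferentiableAt ℝ V p) (hu : DifferentiableAt ℝ u p) (e : ℝ × ℝ) :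
    fderiv ℝ (comb a b V u) p e = a * fderiv ℝ V p e + b * fderiv ℝ u p e := by
  have h := (hV.hasFDerivAt.const_mul a).add (hu.hasFDerivAt.const_mul b)
  have h2 : HasFDerivAt (comb a b V u) (a • fderiv ℝ V p + b • fderiv ℝ u p) p := h
  rw [h2.fderiv]; simp

lemma dot_comb {p : ℝ × ℝ} (hV : DifferentiableAt ℝ V p) (hu : DifferentiableAt ℝ u p) :
    dot (comb a b V u) (comb a b V u) p =
      a ^ 2 * dot V V p + (2 * a * b) * dot V u p + b ^ 2 * dot u u p := by
  simp only [dot, pd1, pd2, fderiv_comb hV hu]; ring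

lemma Good.differentiableAt (hr : 0 < r) (hV : Good r μ F V) {p : ℝ × ℝ} (hp : p ∈ GamR r) :
    DifferentiableAt ℝ V p := (hV.diff p (Reg.mem hr hp)).differentiableAt (by norm_num)

lemma comb_int (hr : 0 < r) (hV : Good r μ F V) (hu : Good r μ' F' u) :
    IntegrableOn (dot (comb a b V u) (comb a b V u)) (GamR r) ∧
    ∫ p in GamR r, dot (comb a b V u) (comb a b V u) p = a ^ 2 * (∫ p in GamR r, dot V V p) +
      (2 * a * b) * (∫ p in GamR r, dot V u p) + b ^ 2 * ∫ p in GamR r, dot u u p := by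
  have i1 := (hV.dot_integrable hr hV).const_mul (a ^ 2)
  have i2 := (hV.dot_integrable hr hu).const_mul (2 * a * b)
  have i3 := (hu.dot_integrable hr hu).const_mul (b ^ 2)
  have i4 : IntegrableOn (fun p => a ^ 2 * dot V V p + (2 * a * b) * dot V u p) (GamR r) := i1.add i2
  have i5 : IntegrableOn (fun p => a ^ 2 * dot V V p + (2 * a * b) * dot V u p + b ^ 2 * dot u u p)
    (GamR r) := i4.add i3
  have e : ∀ p ∈ GamR r, dot (comb a b V u) (comb a b V u) p =
      a ^ 2 * dot V V p + (2 * a * b) * dot V u p + b ^ 2 * dot u u p := fun p hp =>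
    dot_comb (hV.differentiableAt hr hp) (hu.differentiableAt hr hp)
  refine ⟨i5.congr_fun (fun p hp => (e p hp).symm) (measurableSet_GamR r), ?_⟩
  rw [setIntegral_congr_fun (measurableSet_GamR r) e, integral_add i4 i3, integral_add i1 i2,
    integral_const_mul, integral_const_mul, integral_const_mul]

lemma comb_reg (hr : 0 < r) (hV : Good r μ F V) (hu : Good r μ' F' u) : Reg r (comb a b V u) := by
  refine ⟨fun p hp => ?_, ?_, fun p hp hG => ?_, (comb_int hr hV hu).1⟩
  · exact (contDiffAt_const.mul ((hV.reg hr).diff p hp)).add (contDiffAt_const.mul ((hu.reg hr).diff p hp))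
  · exact (continuousOn_const.mul hV.cont).add (continuousOn_const.mul hu.cont)
  · simp only [comb, hV.zero p hp hG, hu.zero p hp hG]; ring

lemma comb_sq_int (hr : 0 < r) (hV : Good r μ F V) (hu : Good r μ' F' u) :
    ∫ p in GamR r, comb a b V u p ^ 2 = a ^ 2 * (∫ p in GamR r, V p ^ 2) +
      (2 * a * b) * (∫ p in GamR r, V p * u p) + b ^ 2 * ∫ p in GamR r, u p ^ 2 := by
  have i1 : IntegrableOn (fun p => a ^ 2 * V p ^ 2) (GamR r) :=
    (integrableOn_of_KK hr (hV.cont.pow 2)).const_mul (a ^ 2)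
  have i2 : IntegrableOn (fun p => (2 * a * b) * (V p * u p)) (GamR r) :=
    (integrableOn_of_KK hr (hV.cont.mul hu.cont)).const_mul (2 * a * b)
  have i3 : IntegrableOn (fun p => b ^ 2 * u p ^ 2) (GamR r) :=
    (integrableOn_of_KK hr (hu.cont.pow 2)).const_mul (b ^ 2)
  have i4 : IntegrableOn (fun p => a ^ 2 * V p ^ 2 + (2 * a * b) * (V p * u p)) (GamR r) := i1.add i2
  rw [← integral_const_mul, ← integral_const_mul, ← integral_const_mul]
  rw [← integral_add i1 i2, ← integral_add i4 i3]
  congr 1; ext p; simp only [comb]; ring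

/-- The boundary term in Green's identity. -/
def Edge (r : ℝ) (f V : ℝ × ℝ → ℝ) : ℝ := (∫ t in Ioo (-1 : ℝ) 0, f (t, r) * pd2 V (t, r)) +
      ∫ t in Ioo (-1 : ℝ) 0, f (r, t) * pd1 V (r, t)

lemma edge_zero (hu : Good r μ' 0 u) (f : ℝ × ℝ → ℝ) : Edge r f u = 0 := by
  have h1 : ∀ t ∈ Ioo (-1 : ℝ) 0, f (t, r) * pd2 u (t, r) = 0 := fun t ht => by
    rw [abs_nonpos_iff.1 (hu.bd2 t ht), mul_zero]
  have h2 : ∀ t ∈ Ioo (-1 : ℝ) 0, f (r, t) * pd1 u (r, t) = 0 := fun t ht => by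
    rw [abs_nonpos_iff.1 (hu.bd1 t ht), mul_zero]
  rw [Edge, setIntegral_congr_fun measurableSet_Ioo h1, setIntegral_congr_fun measurableSet_Ioo h2]
  simp

lemma edge_int1 (hr : 0 < r) {f : ℝ × ℝ → ℝ} (hf : Reg r f) (hV : Good r μ F V) :
    IntegrableOn (fun t => f (r, t) * pd1 V (r, t)) (Ioo (-1 : ℝ) 0) := by
  have hc : ContinuousOn (fun t => f (r, t)) (Icc (-1) 0) :=
    hf.cont.comp (by fun_prop) fun y hy => arm_mem_KK ⟨hr.le, le_rfl⟩ hy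
  have hi : IntegrableOn (fun t => |f (r, t)| * F) (Ioo (-1 : ℝ) 0) :=
    ((hc.abs.integrableOn_Icc).mono_set Ioo_subset_Icc_self).mul_const F
  refine hi.mono' (ContinuousOn.aestronglyMeasurable ?_ measurableSet_Ioo) ?_
  · refine (hc.mono Ioo_subset_Icc_self).mul fun t ht => ?_
    exact (ContinuousAt.comp (f := fun t : ℝ => (r, t)) (contDiffAt_fderiv_apply
      ((hV.reg hr).diff _ (seg1_mem hr ht)) (1, 0)) (by fun_prop)).continuousWithinAt
  · refine (ae_restrict_iff' measurableSet_Ioo).2 (Eventually.of_forall fun t ht => ?_)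
    rw [norm_mul]
    exact mul_le_mul_of_nonneg_left (hV.bd1 t ht) (abs_nonneg _)

lemma edge_int2 (hr : 0 < r) {f : ℝ × ℝ → ℝ} (hf : Reg r f) (hV : Good r μ F V) :
    IntegrableOn (fun t => f (t, r) * pd2 V (t, r)) (Ioo (-1 : ℝ) 0) := by
  have := edge_int1 hr (hf.swap hr) (hV.swap hr)
  simpa only [pd1_swap, Function.comp, Prod.swap_prod_mk] using this

lemma edge_comb (hr : 0 < r) (hV : Good r μ F V) (hu : Good r μ' F' u) :
    Edge r (comb a b V u) V = a * Edge r V V + b * Edge r u V := by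
  simp only [Edge, comb]
  have i1 := edge_int1 hr (hV.reg hr) hV
  have i2 := edge_int1 hr (hu.reg hr) hV
  have i3 := edge_int2 hr (hV.reg hr) hV
  have i4 := edge_int2 hr (hu.reg hr) hV
  have e1 : ∫ t in Ioo (-1 : ℝ) 0, (a * V (r, t) + b * u (r, t)) * pd1 V (r, t) =
      a * (∫ t in Ioo (-1 : ℝ) 0, V (r, t) * pd1 V (r, t)) +
      b * ∫ t in Ioo (-1 : ℝ) 0, u (r, t) * pd1 V (r, t) := by
    rw [← integral_const_mul, ← integral_const_mul, ← integral_add (i1.const_mul a) (i2.const_mul b)]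
    congr 1; ext t; ring
  have e2 : ∫ t in Ioo (-1 : ℝ) 0, (a * V (t, r) + b * u (t, r)) * pd2 V (t, r) =
      a * (∫ t in Ioo (-1 : ℝ) 0, V (t, r) * pd2 V (t, r)) +
      b * ∫ t in Ioo (-1 : ℝ) 0, u (t, r) * pd2 V (t, r) := by
    rw [← integral_const_mul, ← integral_const_mul, ← integral_add (i3.const_mul a) (i4.const_mul b)]
    congr 1; ext t; ring
  rw [e1, e2]; ring

lemma edge_le (hr : 3 / 4 ≤ r) {f : ℝ × ℝ → ℝ} (hf : Reg r f) (hV : Good r μ F V) :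
    |Edge r f V| ≤ 4 * F * √(∫ p in GamR r, (f p ^ 2 + dot f f p)) := by
  have hr0 : 0 < r := by linarith
  set H := ∫ p in GamR r, (f p ^ 2 + dot f f p) with hH
  have hF : 0 ≤ F := (abs_nonneg _).trans (hV.bd1 (-1 / 2) (by norm_num))
  have hH0 : 0 ≤ H := integral_nonneg fun p => add_nonneg (sq_nonneg _) (dot_self_nonneg f p)
  have one : ∀ {f V : ℝ × ℝ → ℝ} (_ : Reg r f) (_ : Good r μ F V),
      |∫ t in Ioo (-1 : ℝ) 0, f (r, t) * pd1 V (r, t)| ≤ F * ∫ t in Ioo (-1 : ℝ) 0, |f (r, t)| := by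
    intro f V hf hV
    have hc : ContinuousOn (fun t => f (r, t)) (Icc (-1) 0) :=
      hf.cont.comp (by fun_prop) fun y hy => arm_mem_KK ⟨hr0.le, le_rfl⟩ hy
    have hi : IntegrableOn (fun t => |f (r, t)|) (Ioo (-1 : ℝ) 0) :=
      hc.abs.integrableOn_Icc.mono_set Ioo_subset_Icc_self
    rw [← integral_const_mul]
    refine abs_integral_le_integral_abs.trans ?_
    refine setIntegral_mono_on (edge_int1 hr0 hf hV).abs (hi.const_mul F) measurableSet_Ioo fun t ht => ?_
    rw [abs_mul, mul_comm]
    exact mul_le_mul_of_nonneg_right (hV.bd1 t ht) (abs_nonneg _)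
  have h1 := one hf hV
  have h2 := one (hf.swap hr0) (hV.swap hr0)
  simp only [pd1_swap, Function.comp, Prod.swap_prod_mk] at h2
  have t1 := hf.trace hr
  have t2 := hf.trace2 hr
  have s1 : ∫ t in Ioo (-1 : ℝ) 0, |f (r, t)| ≤ 2 * √H := by
    refine le_of_sq_le_sq_real ?_ (by positivity)
    rw [mul_pow, sq_sqrt hH0]; linarith
  have s2 : ∫ t in Ioo (-1 : ℝ) 0, |f (t, r)| ≤ 2 * √H := by
    refine le_of_sq_le_sq_real ?_ (by positivity)
    rw [mul_pow, sq_sqrt hH0]; linarith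
  refine (abs_add_le _ _).trans ?_
  nlinarith [mul_le_mul_of_nonneg_left s1 hF, mul_le_mul_of_nonneg_left s2 hF]
end

section
variable {r μ μ' F F' a b Λ : ℝ} {V u : ℝ × ℝ → ℝ}

lemma pi_sq_lt_ten : π ^ 2 < 10 := by nlinarith [pi_lt_d2, pi_pos]

lemma dot_comm' (f g : ℝ × ℝ → ℝ) (p : ℝ × ℝ) : dot f g p = dot g f p := by
  simp only [dot]; ring

lemma comb_H (hr : 0 < r) (hV : Good r μ F V) (hu : Good r μ' F' u) :
    ∫ p in GamR r, (comb a b V u p ^ 2 + dot (comb a b V u) (comb a b V u) p) =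
    (∫ p in GamR r, comb a b V u p ^ 2) + ∫ p in GamR r, dot (comb a b V u) (comb a b V u) p :=
  integral_add ((comb_reg hr hV hu).sq_int hr) (comb_reg hr hV hu).int

lemma Reg.H_nonneg (f : ℝ × ℝ → ℝ) : 0 ≤ ∫ p in GamR r, (f p ^ 2 + dot f f p) :=
  integral_nonneg fun p => add_nonneg (sq_nonneg _) (dot_self_nonneg f p)

/-- The real arithmetic behind `diff_est`, with `A = ∫V²`, `N = ∫Vu`, `E`, `E'` the
boundary terms of `u` and `V` against the Neumann datum of `V`, and `φ`, `D`, `H` the squared `L²` norm,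
the Dirichlet integral and the squared `H¹` norm of `V - β u`. -/
lemma diff_arith {A N E E' F μ μ' β H D φ Λ : ℝ} (hF : 0 ≤ F) (hp10 : π ^ 2 < 10)
    (hμ0 : 0 ≤ μ') (hμΛ : μ' ≤ Λ) (hΛ : Λ < π ^ 2) (hA : A ≤ 1)
    (hNA : N ^ 2 ≤ A) (hmu : (μ - μ') * N = -E) (hmuF : |μ - μ'| ≤ 32 * F) (hβ0 : 0 ≤ β)
    (hbr : π ^ 2 * φ ≤ D) (hEf : |1 * E' + -β * E| ≤ 4 * F * √H) (hspl : H = φ + D)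
    (hf2 : φ = A + 2 * -β * N + (-β) ^ 2)
    (hH : H = A * (1 + μ) + E' + 2 * -β * (1 + μ') * N + (-β) ^ 2 * (1 + μ'))
    (hHp0 : 0 ≤ A * (1 + μ) + E' + 2 * (1 - 2 * β) * (1 + μ') * N + (1 - 2 * β) ^ 2 * (1 + μ'))
    (hVf : (A - β * N) ^ 2 ≤ A * φ) (hφ0 : 0 ≤ φ) (hHf0 : 0 ≤ H) :
    A * (1 + μ) + E' + 2 * -1 * (1 + μ') * N + (-1) ^ 2 * (1 + μ') ≤
      (5 * (36 * (1 + (1 + Λ) / (π ^ 2 - Λ)) * F + (1 - A))) ^ 2 := by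
  have hA0 : 0 ≤ A := by nlinarith
  have hs0 := sqrt_nonneg H
  have hs2 := sq_sqrt hHf0
  have hφH : φ ≤ H := by nlinarith [pi_pos]
  have hVf3 : |A - β * N| ≤ √H := by
    refine abs_le_of_sq_le_sq ?_ hs0
    rw [hs2]; nlinarith
  have hq : H - (1 + μ') * φ ≤ 36 * F * √H := by
    have e : H - (1 + μ') * φ = (μ - μ') * (A - β * N) + (1 * E' + -β * E) := by
      rw [hH, hf2]; linear_combination (β) * hmu
    rw [e]
    have h1 : (μ - μ') * (A - β * N) ≤ 32 * F * √H := by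
      refine (le_abs_self _).trans ?_
      rw [abs_mul]
      exact mul_le_mul hmuF hVf3 (abs_nonneg _) (by positivity)
    linarith [le_abs_self (1 * E' + -β * E)]
  have hgap : 0 < π ^ 2 - Λ := by linarith
  have hq2 : (π ^ 2 - Λ) * φ ≤ H - (1 + μ') * φ := by nlinarith
  set K := 1 + (1 + Λ) / (π ^ 2 - Λ) with hK
  have hK1 : 1 ≤ K := by
    have : 0 ≤ (1 + Λ) / (π ^ 2 - Λ) := div_nonneg (by linarith) hgap.le
    linarith
  have hHK : H ≤ K * (H - (1 + μ') * φ) := by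
    have h1 : (1 + μ') * φ ≤ (1 + Λ) / (π ^ 2 - Λ) * (H - (1 + μ') * φ) := by
      rw [div_mul_eq_mul_div, le_div_iff₀ hgap]
      have g1 := mul_le_mul_of_nonneg_left hq2 (show 0 ≤ 1 + Λ by linarith)
      have g2 : (1 + μ') * φ * (π ^ 2 - Λ) ≤ (1 + Λ) * ((π ^ 2 - Λ) * φ) := by
        rw [mul_assoc, mul_comm φ]
        exact mul_le_mul_of_nonneg_right (by linarith) (mul_nonneg hgap.le hφ0)
      exact g2.trans g1
    rw [hK]; linarith
  have hG : √H ≤ 36 * K * F := by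
    by_contra hc
    push Not at hc
    have h0 : 0 ≤ 36 * K * F := by positivity
    have h1 : H ≤ 36 * K * F * √H := by
      have := mul_le_mul_of_nonneg_left hq (by linarith : 0 ≤ K)
      linarith
    have h2 := mul_lt_mul_of_pos_right hc (h0.trans_lt hc)
    rw [← sq, hs2] at h2
    linarith
  have hsA : √A ^ 2 = A := sq_sqrt hA0
  have hsA0 := sqrt_nonneg A
  have hsA1 : √A ≤ 1 := sqrt_le_one.2 hA
  have hNs : N ≤ √A := le_sqrt_of_sq_le hNA
  have hβ1 : |√A - β| ≤ √H := by
    refine abs_le_of_sq_le_sq ?_ hs0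
    have := mul_le_mul_of_nonneg_left hNs hβ0
    rw [hs2]; linarith [show (√A - β) ^ 2 = A - 2 * (β * √A) + β ^ 2 by linear_combination hsA]
  have hβ2 : |β - 1| ≤ 36 * K * F + (1 - A) := by
    have h1 := abs_le.1 hβ1
    have h2 : 1 - √A ≤ 1 - A := by
      have := mul_le_mul_of_nonneg_left hsA1 hsA0
      rw [← sq, hsA] at this; linarith
    rw [abs_le]; constructor <;> linarith
  have hβ3 : (β - 1) ^ 2 ≤ (36 * K * F + (1 - A)) ^ 2 := by
    rw [← sq_abs (β - 1)]; exact pow_le_pow_left₀ (abs_nonneg _) hβ2 2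
  have hHG : H ≤ (36 * K * F + (1 - A)) ^ 2 := by
    rw [← hs2]; exact pow_le_pow_left₀ hs0 (by linarith) 2
  have fin : A * (1 + μ) + E' + 2 * -1 * (1 + μ') * N + (-1) ^ 2 * (1 + μ') ≤
      2 * H + 2 * ((β - 1) ^ 2 * (1 + μ')) := by
    rw [hH]; linarith
  have h11 : (β - 1) ^ 2 * (1 + μ') ≤ (36 * K * F + (1 - A)) ^ 2 * 11 :=
    mul_le_mul hβ3 (by linarith) (by linarith) (sq_nonneg _)
  have := sq_nonneg (36 * K * F + (1 - A))
  rw [mul_pow]; linarith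

set_option maxHeartbeats 1000000 in
/-- `H¹` distance on `Γ_r` between the eigenfunction `u` of the mixed problem and a solution `V` of
`-ΔV = μ V` with small Neumann data: it is controlled by the size `F` of the data and the defect
of normalisation. The part `f = V - β u` of `V` with vanishing mean on the corner square satisfies
the bracketing inequality, whose constant `π²` lies strictly above the eigenvalue. -/
lemma diff_est (hr : 3 / 4 ≤ r) (hV : Good r μ F V) (hu : Good r μ' 0 u)
    (hμ0 : 0 ≤ μ') (hμΛ : μ' ≤ Λ) (hΛ : Λ < π ^ 2) (hA : ∫ p in GamR r, V p ^ 2 ≤ 1)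
    (hB : ∫ p in GamR r, u p ^ 2 = 1) (hN : 1 / 2 ≤ ∫ p in GamR r, V p * u p) :
    ∫ p in GamR r, (comb 1 (-1) V u p ^ 2 + dot (comb 1 (-1) V u) (comb 1 (-1) V u) p) ≤
      (5 * (36 * (1 + (1 + Λ) / (π ^ 2 - Λ)) * F + (1 - ∫ p in GamR r, V p ^ 2))) ^ 2 := by
  have hr0 : 0 < r := by linarith
  have hF : 0 ≤ F := (abs_nonneg _).trans (hV.bd1 (-1 / 2) (by norm_num))
  have hp10 := pi_sq_lt_ten
  have wVu := weak_identity hr0 hV hu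
  have wuV := weak_identity hr0 hu hV
  have wVV := weak_identity hr0 hV hV
  have wuu := weak_identity hr0 hu hu
  change _ = _ + Edge r V u at wVu
  change _ = _ + Edge r u V at wuV
  change _ = _ + Edge r V V at wVV
  change _ = _ + Edge r u u at wuu
  have sq1 : ∀ g : ℝ × ℝ → ℝ, ∫ p in GamR r, g p * g p = ∫ p in GamR r, g p ^ 2 := fun g => by
    congr 1; ext p; ring
  have cm : ∫ p in GamR r, u p * V p = ∫ p in GamR r, V p * u p := by congr 1; ext p; ring
  have cd : ∫ p in GamR r, dot u V p = ∫ p in GamR r, dot V u p := by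
    congr 1; ext p; exact dot_comm' _ _ _
  rw [edge_zero hu] at wVu wuu
  rw [sq1] at wVV wuu
  rw [cm, cd] at wuV
  rw [hB] at wuu
  have hHc : ∀ c : ℝ, ∫ p in GamR r, (comb 1 c V u p ^ 2 + dot (comb 1 c V u) (comb 1 c V u) p) =
      (∫ p in GamR r, V p ^ 2) * (1 + μ) + Edge r V V +
        2 * c * (1 + μ') * (∫ p in GamR r, V p * u p) + c ^ 2 * (1 + μ') := by
    intro c
    rw [comb_H hr0 hV hu, comb_sq_int hr0 hV hu, (comb_int hr0 hV hu).2, wVu, wVV, wuu, hB]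
    ring
  have hH0 : ∀ c : ℝ, 0 ≤ ∫ p in GamR r, (comb 1 c V u p ^ 2 + dot (comb 1 c V u) (comb 1 c V u) p) :=
    fun c => Reg.H_nonneg _
  have hsq : ∀ c : ℝ, ∫ p in GamR r, comb 1 c V u p ^ 2 =
      (∫ p in GamR r, V p ^ 2) + 2 * c * (∫ p in GamR r, V p * u p) + c ^ 2 := by
    intro c; rw [comb_sq_int hr0 hV hu, hB]; ring
  -- the eigenvalue difference is controlled by the boundary data
  have hEu : |Edge r u V| ≤ 16 * F := by
    refine (edge_le hr (hu.reg hr0) hV).trans ?_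
    have e : ∫ p in GamR r, (u p ^ 2 + dot u u p) = 1 + μ' := by
      rw [integral_add ((hu.reg hr0).sq_int hr0) (hu.reg hr0).int, hB, wuu]; ring
    rw [e]
    have : √(1 + μ') ≤ 4 := by
      rw [sqrt_le_left (by norm_num)]; linarith
    nlinarith
  obtain ⟨N, hNd⟩ : ∃ N, N = ∫ p in GamR r, V p * u p := ⟨_, rfl⟩
  obtain ⟨A, hAd⟩ : ∃ A, A = ∫ p in GamR r, V p ^ 2 := ⟨_, rfl⟩
  obtain ⟨E, hEd⟩ : ∃ E, E = Edge r u V := ⟨_, rfl⟩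
  obtain ⟨E', hEd'⟩ : ∃ E', E' = Edge r V V := ⟨_, rfl⟩
  have hNA : N ^ 2 ≤ A := by
    have := integral_mul_sq_le ((hV.reg hr0).sq_int hr0) ((hu.reg hr0).sq_int hr0)
      (integrableOn_of_KK hr0 (hV.cont.mul hu.cont))
    rw [hB] at this
    rw [hNd, hAd]; linarith
  have hmu : (μ - μ') * N = -E := by rw [hNd, hEd]; linarith
  have hmuF : |μ - μ'| ≤ 32 * F := by
    have : |μ - μ'| * N ≤ 16 * F := by
      rw [← abs_of_nonneg (a := N) (by linarith), ← abs_mul, hmu, abs_neg, hEd]; exact hEu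
    nlinarith [abs_nonneg (μ - μ')]
  have iQ : ∀ {g : ℝ × ℝ → ℝ}, ContinuousOn g (KK r) →
      IntegrableOn g (Ioo (-1 : ℝ) 0 ×ˢ Ioo (-1 : ℝ) 0) := fun hg =>
    (integrableOn_of_KK hr0 hg).mono_set (corner_subset hr0)
  have hVQ : 0 ≤ ∫ p in Ioo (-1 : ℝ) 0 ×ˢ Ioo (-1 : ℝ) 0, V p :=
    setIntegral_nonneg (measurableSet_Ioo.prod measurableSet_Ioo) fun p hp =>
      (hV.pos p (corner_subset hr0 hp)).le
  have huQ : 0 < ∫ p in Ioo (-1 : ℝ) 0 ×ˢ Ioo (-1 : ℝ) 0, u p := by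
    rw [setIntegral_pos_iff_support_of_nonneg_ae]
    · have : Ioo (-1 : ℝ) 0 ×ˢ Ioo (-1 : ℝ) 0 ⊆ Function.support u ∩ Ioo (-1 : ℝ) 0 ×ˢ Ioo (-1 : ℝ) 0 :=
        fun p hp => ⟨(hu.pos p (corner_subset hr0 hp)).ne', hp⟩
      refine lt_of_lt_of_le ?_ (measure_mono this)
      refine (isOpen_Ioo.prod isOpen_Ioo).measure_pos _ ⟨(-1 / 2, -1 / 2), ?_⟩
      norm_num
    · exact (ae_restrict_iff' (measurableSet_Ioo.prod measurableSet_Ioo)).2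
        (Eventually.of_forall fun p hp => (hu.pos p (corner_subset hr0 hp)).le)
    · exact iQ hu.cont
  obtain ⟨β, hβ⟩ : ∃ β, β = (∫ p in Ioo (-1 : ℝ) 0 ×ˢ Ioo (-1 : ℝ) 0, V p) /
    ∫ p in Ioo (-1 : ℝ) 0 ×ˢ Ioo (-1 : ℝ) 0, u p := ⟨_, rfl⟩
  have hβ0 : 0 ≤ β := by rw [hβ]; positivity
  have hmean : ∫ p in Ioo (-1 : ℝ) 0 ×ˢ Ioo (-1 : ℝ) 0, comb 1 (-β) V u p = 0 := by
    simp only [comb]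
    rw [integral_add ((iQ hV.cont).const_mul 1) ((iQ hu.cont).const_mul (-β)), integral_const_mul,
      integral_const_mul, hβ]
    field_simp; ring
  have hreg : Reg r (comb 1 (-β) V u) := comb_reg hr0 hV hu
  have hbr := hreg.bracket hr0 hmean
  have hEf := edge_le hr hreg hV
  rw [edge_comb hr0 hV hu] at hEf
  have hspl := comb_H (a := 1) (b := -β) hr0 hV hu
  have hf2 := hsq (-β)
  have hH := hHc (-β)
  have hHm := hHc (-1)
  have hHp := hHc (1 - 2 * β)
  have hHp0 := hH0 (1 - 2 * β)
  have hVf : (∫ p in GamR r, V p * comb 1 (-β) V u p) ^ 2 ≤ (∫ p in GamR r, V p ^ 2) *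
      ∫ p in GamR r, comb 1 (-β) V u p ^ 2 :=
    integral_mul_sq_le ((hV.reg hr0).sq_int hr0) (hreg.sq_int hr0)
      (integrableOn_of_KK hr0 (hV.cont.mul hreg.cont))
  have hVf2 : ∫ p in GamR r, V p * comb 1 (-β) V u p = A - β * N := by
    have i1 : IntegrableOn (fun p => V p ^ 2) (GamR r) := (hV.reg hr0).sq_int hr0
    have i2 : IntegrableOn (fun p => (-β) * (V p * u p)) (GamR r) :=
      (integrableOn_of_KK hr0 (hV.cont.mul hu.cont)).const_mul (-β)
    have e : ∫ p in GamR r, V p * comb 1 (-β) V u p = ∫ p in GamR r, (V p ^ 2 + (-β) * (V p * u p)) := by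
      congr 1; ext p; simp only [comb]; ring
    rw [e, integral_add i1 i2, integral_const_mul, hAd, hNd]; ring
  have hφ0 : 0 ≤ ∫ p in GamR r, comb 1 (-β) V u p ^ 2 := integral_nonneg fun p => sq_nonneg _
  have hHf0 := hH0 (-β)
  rw [hVf2] at hVf
  rw [← hAd] at hA hVf hf2 hH hHm hHp ⊢
  rw [← hNd] at hN hf2 hH hHm hHp
  rw [← hEd'] at hEf hH hHm hHp
  rw [← hEd] at hEf
  rw [hHp] at hHp0
  rw [hHm]
  exact diff_arith hF hp10 hμ0 hμΛ hΛ hA hNA hmu hmuF hβ0 hbr hEf hspl hf2 hH hHp0 hVf hφ0 hHf0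
end

section
variable {r R h μ μ' Λ : ℝ} {V u : ℝ × ℝ → ℝ}

lemma tail_decomp (hr : 0 < r) (hR : r ≤ R) {φ : ℝ × ℝ → ℝ} (hi : IntegrableOn φ (GamR R)) :
    (∫ p in GamR R, φ p) - ∫ p in GamR r, φ p =
      (∫ p in Ico r R ×ˢ Ioo (-1 : ℝ) 0, φ p) + ∫ p in Ico r R ×ˢ Ioo (-1 : ℝ) 0, φ p.swap := by
  have hR0 : 0 < R := hr.trans_le hR
  have key : ∀ {ψ : ℝ × ℝ → ℝ}, IntegrableOn ψ (GamR R) →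
      ∫ p in Ico (0 : ℝ) R ×ˢ Ioo (-1 : ℝ) 0, ψ p =
      (∫ p in Ico (0 : ℝ) r ×ˢ Ioo (-1 : ℝ) 0, ψ p) + ∫ p in Ico r R ×ˢ Ioo (-1 : ℝ) 0, ψ p := by
    intro ψ hψ
    have e : Ico (0 : ℝ) R ×ˢ Ioo (-1 : ℝ) 0 =
        Ico (0 : ℝ) r ×ˢ Ioo (-1 : ℝ) 0 ∪ Ico r R ×ˢ Ioo (-1 : ℝ) 0 := by
      rw [← union_prod, Ico_union_Ico_eq_Ico hr.le hR]
    rw [e, setIntegral_union _ (measurableSet_Ico.prod measurableSet_Ioo)]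
    · exact hψ.mono_set (subset_trans (prod_mono (Ico_subset_Ico_right hR) subset_rfl) (arm1_subset hR0))
    · exact hψ.mono_set (subset_trans (prod_mono (Ico_subset_Ico_left hr.le) subset_rfl) (arm1_subset hR0))
    · rw [Set.disjoint_left]
      rintro ⟨x, y⟩ ⟨h1, h2⟩ ⟨h3, h4⟩
      exact absurd h3.1 (not_le.2 h1.2)
  rw [integral_decomp hR0 hi, integral_decomp hr (hi.mono_set (GamR_mono hr hR)), key hi,
    key (ψ := fun p => φ p.swap) (integrableOn_GamR_swap hR0 hi)]
  ring

/-- The mass of the eigenfunction within distance `h` of the two ends. -/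
lemma mass_tail (hR : 1 ≤ R) (hμ : 0 ≤ μ) (hμΛ : μ ≤ Λ) (hΛ : Λ < π ^ 2) (hV : Good R μ 0 V)
    (hn : ∫ p in GamR R, V p ^ 2 = 1) (hh : h ∈ Ioc (0 : ℝ) (1 / 8)) :
    1 - ∫ p in GamR (R - h), V p ^ 2 ≤ 2 * h * (Bc Λ R * Ksum) ^ 2 := by
  have hh0 := hh.1
  have hh1 := hh.2
  have hR0 : 0 < R := by linarith
  rw [← hn, tail_decomp (by linarith) (by linarith) ((hV.reg hR0).sq_int hR0)]
  have one : ∀ {V : ℝ × ℝ → ℝ} (_ : Good R μ 0 V) (_ : ∫ p in GamR R, V p ^ 2 = 1),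
      ∫ p in Ico (R - h) R ×ˢ Ioo (-1 : ℝ) 0, V p ^ 2 ≤ h * (Bc Λ R * Ksum) ^ 2 := by
    intro V hV hn
    have hvol : (volume : Measure (ℝ × ℝ)).real (Ico (R - h) R ×ˢ Ioo (-1 : ℝ) 0) = h := by
      rw [Measure.volume_eq_prod, measureReal_prod_prod, Real.volume_real_Ico_of_le (by linarith),
        Real.volume_real_Ioo_of_le (by norm_num)]
      ring
    have hlt : (volume : Measure (ℝ × ℝ)) (Ico (R - h) R ×ˢ Ioo (-1 : ℝ) 0) < ⊤ := by
      rw [Measure.volume_eq_prod, Measure.prod_prod, Real.volume_Ico, Real.volume_Ioo]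
      exact ENNReal.mul_lt_top ENNReal.ofReal_lt_top ENNReal.ofReal_lt_top
    have := norm_setIntegral_le_of_norm_le_const (μ := volume) (f := fun p : ℝ × ℝ => V p ^ 2)
      (C := (Bc Λ R * Ksum) ^ 2) hlt (fun p hp => by
        rw [norm_pow, Real.norm_eq_abs]
        exact pow_le_pow_left₀ (abs_nonneg _) (value_near hR hμ hμΛ hΛ hV hn.le
          (x := p.1) (y := p.2) ⟨by linarith [hp.1.1], hp.1.2.le⟩ hp.2) 2)
    rw [hvol] at this
    linarith [Real.le_norm_self (∫ p in Ico (R - h) R ×ˢ Ioo (-1 : ℝ) 0, V p ^ 2)]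
  have h1 := one hV hn
  have h2 := one (hV.swap hR0) (by
    rw [← hn]; exact setIntegral_GamR_swap hR0 (fun p => V p ^ 2))
  have h3 : ∫ p in Ico (R - h) R ×ˢ Ioo (-1 : ℝ) 0, V p.swap ^ 2 ≤ h * (Bc Λ R * Ksum) ^ 2 := h2
  linarith

/-- The constant in the estimate of the difference quotients. -/
def Cst (Λ : ℝ) : ℝ := 20 * exp (1 + √(π ^ 2 - Λ)) *
  (1152 * (1 + (1 + Λ) / (π ^ 2 - Λ)) * Ksum + 24 * Ksum ^ 2)

lemma Ksum_nonneg : 0 ≤ Ksum := tsum_nonneg fun k => by positivity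

lemma Cst_nonneg (h0 : 0 ≤ Λ) (hΛ : Λ < π ^ 2) : 0 ≤ Cst Λ := by
  have := Ksum_nonneg
  have : 0 < π ^ 2 - Λ := by linarith
  unfold Cst; positivity

lemma Bc_le (hR : 1 ≤ R) : Bc Λ R ≤ 12 := by
  unfold Bc
  rw [mul_assoc, ← exp_add]
  have : exp (1 + √(π ^ 2 - Λ) + -R * √(π ^ 2 - Λ)) ≤ exp 1 := by
    rw [exp_le_exp]; nlinarith [sqrt_nonneg (π ^ 2 - Λ)]
  linarith [exp_one_lt_d9]

/-- Quantitative Lipschitz estimate of the eigenfunction in the length of the guide. -/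
lemma diff_est' (hR : 1 ≤ R) (hμ : 0 ≤ μ) (hμΛ : μ ≤ Λ) (hμ' : 0 ≤ μ') (hμΛ' : μ' ≤ Λ)
    (hΛ : Λ < π ^ 2) (hh : h ∈ Ioc (0 : ℝ) (1 / 8)) (hV : Good R μ 0 V) (hu : Good (R - h) μ' 0 u)
    (hA : ∫ p in GamR R, V p ^ 2 = 1) (hB : ∫ p in GamR (R - h), u p ^ 2 = 1)
    (hN : 1 / 2 ≤ ∫ p in GamR (R - h), V p * u p) :
    Reg (R - h) (comb 1 (-1) V u) ∧
    ∫ p in GamR (R - h), (comb 1 (-1) V u p ^ 2 + dot (comb 1 (-1) V u) (comb 1 (-1) V u) p) ≤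
      (Cst Λ * h * exp (-R * √(π ^ 2 - Λ))) ^ 2 := by
  have hh0 := hh.1
  have hh1 := hh.2
  have hR0 : 0 < R := by linarith
  have hVr : Good (R - h) μ (32 * h * Bc Λ R * Ksum) V := by
    refine hV.restrict (by linarith) (by linarith) (fun t ht => flux_near hR hμ hμΛ hΛ hV hA.le hh ht)
      fun t ht => ?_
    have := flux_near hR hμ hμΛ hΛ (hV.swap hR0) (by
      rw [← hA]; exact (setIntegral_GamR_swap hR0 (fun p => V p ^ 2)).le) hh ht
    simpa only [pd1_swap, Function.comp, Prod.swap_prod_mk] using this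
  have hm := mass_tail hR hμ hμΛ hΛ hV hA hh
  have hm0 : ∫ p in GamR (R - h), V p ^ 2 ≤ 1 := by
    rw [← hA]
    exact setIntegral_mono_set ((hV.reg hR0).sq_int hR0) (Eventually.of_forall fun p => sq_nonneg _)
      (GamR_mono (by linarith) (by linarith)).eventuallyLE
  refine ⟨comb_reg (by linarith) hVr hu, ?_⟩
  refine (diff_est (by linarith) hVr hu hμ' hμΛ' hΛ hm0 hB hN).trans ?_
  have hK := Ksum_nonneg
  have hBp : 0 < Bc Λ R := Bc_pos
  have hg : 0 < π ^ 2 - Λ := by linarith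
  have hΛ0 : 0 ≤ Λ := hμ.trans hμΛ
  have hc : 0 ≤ 1 + (1 + Λ) / (π ^ 2 - Λ) := by positivity
  refine pow_le_pow_left₀ ?_ ?_ 2
  · have : 0 ≤ 36 * (1 + (1 + Λ) / (π ^ 2 - Λ)) * (32 * h * Bc Λ R * Ksum) := by positivity
    linarith
  · have h1 : 2 * h * (Bc Λ R * Ksum) ^ 2 ≤ 24 * h * Bc Λ R * Ksum ^ 2 := by
      have : 0 ≤ h * Bc Λ R * Ksum ^ 2 := by positivity
      nlinarith [Bc_le (Λ := Λ) hR]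
    have h2 : Cst Λ * h * exp (-R * √(π ^ 2 - Λ)) =
        5 * (36 * (1 + (1 + Λ) / (π ^ 2 - Λ)) * (32 * h * Bc Λ R * Ksum) + 24 * h * Bc Λ R * Ksum ^ 2) := by
      unfold Cst Bc; ring
    rw [h2]; linarith
end

/-! ### Passage to the limit in the difference quotients -/

/-- Fatou's lemma in the form used for passing to limits in upper bounds. -/
lemma fatou_le {α : Type*} [MeasurableSpace α] {m : Measure α} {f : ℕ → α → ENNReal} {g : α → ENNReal}
    {B : ENNReal} (hf : ∀ n, Measurable (f n)) (hg : ∀ x, g x ≤ liminf (fun n => f n x) atTop)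
    (hB : ∀ᶠ n in atTop, ∫⁻ x, f n x ∂m ≤ B) : ∫⁻ x, g x ∂m ≤ B :=
  (lintegral_mono hg).trans ((lintegral_liminf_le hf).trans (liminf_le_of_frequently_le' hB.frequently))

section
variable {r R M t : ℝ} {D w : ℝ × ℝ → ℝ} {e : ℝ × ℝ}

lemma seg_lt {a x t s : ℝ} (h1 : x < a) (h2 : x + t < a) (hs : s ∈ Icc (0 : ℝ) 1) : x + s * t < a := by
  rcases le_total t 0 with ht | ht
  · linarith [mul_nonpos_of_nonneg_of_nonpos hs.1 ht]
  · linarith [mul_le_of_le_one_left ht hs.2]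

lemma lt_seg {a x t s : ℝ} (h1 : a < x) (h2 : a < x + t) (hs : s ∈ Icc (0 : ℝ) 1) : a < x + s * t := by
  rcases le_total t 0 with ht | ht
  · linarith [mul_le_mul_of_nonpos_right hs.2 ht]
  · linarith [mul_nonneg hs.1 ht]

/-- `Γ_r` meets every line parallel to a coordinate axis in an interval. -/
lemma GamR_seg (hr : 0 < r) (he : e = (1, 0) ∨ e = (0, 1)) {p : ℝ × ℝ} (hp : p ∈ GamR r)
    (hq : p + t • e ∈ GamR r) {s : ℝ} (hs : s ∈ Icc (0 : ℝ) 1) : p + (s * t) • e ∈ GamR r := by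
  obtain ⟨x, y⟩ := p
  rw [mem_GamR hr] at *
  rcases he with rfl | rfl <;> simp at hp hq ⊢ <;> obtain ⟨a1, a2, a3, a4, a5⟩ := hp <;>
    obtain ⟨b1, b2, b3, b4, b5⟩ := hq
  · refine ⟨lt_seg a1 b1 hs, a2, seg_lt a3 b3 hs, a4, ?_⟩
    by_cases hy : y < 0
    · exact Or.inr hy
    · left
      have c1 := a5.resolve_right hy
      have c2 := b5.resolve_right hy
      exact seg_lt c1 c2 hs
  · refine ⟨a1, lt_seg a2 b2 hs, a3, seg_lt a4 b4 hs, ?_⟩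
    by_cases hy : x < 0
    · exact Or.inl hy
    · right
      have c1 := a5.resolve_left hy
      have c2 := b5.resolve_left hy
      exact seg_lt c1 c2 hs

/-- Squared difference quotient of `D` in direction `e`, set to zero unless both points are in `S`. -/
def dq (S : Set (ℝ × ℝ)) (D : ℝ × ℝ → ℝ) (e : ℝ × ℝ) (t : ℝ) : ℝ × ℝ → ENNReal :=
  (S ∩ (fun p => p + t • e) ⁻¹' S).indicator
    fun p => ENNReal.ofReal (((S.indicator D (p + t • e) - S.indicator D p) / t) ^ 2)

lemma measurable_dq {S : Set (ℝ × ℝ)} (hS : MeasurableSet S) (hD : Measurable (S.indicator D)) :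
    Measurable (dq S D e t) := by
  have h1 : Measurable fun p : ℝ × ℝ => p + t • e := by fun_prop
  refine Measurable.indicator ?_ (hS.inter (h1 hS))
  exact ((((hD.comp h1).sub hD).div_const t).pow_const 2).ennreal_ofReal

lemma dq_of_mem {S : Set (ℝ × ℝ)} {p : ℝ × ℝ} (h1 : p ∈ S) (h2 : p + t • e ∈ S) :
    dq S D e t p = ENNReal.ofReal (((D (p + t • e) - D p) / t) ^ 2) := by
  rw [dq, indicator_of_mem (show p ∈ S ∩ (fun p => p + t • e) ⁻¹' S from ⟨h1, h2⟩), indicator_of_mem h1,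
    indicator_of_mem h2]

lemma Reg.measurable_indicator (hr : 0 < r) (h : Reg r D) : Measurable ((GamR r).indicator D) := by
  classical
  rw [← piecewise_eq_indicator]
  exact (h.cont.mono (GamR_subset_KK hr)).measurable_piecewise continuousOn_const (measurableSet_GamR r)

/-- The derivative bound for difference quotients. -/
lemma dq_le (hr : 0 < r) (ht : 0 < t) (he : e = (1, 0) ∨ e = (0, 1)) (h : Reg r D) :
    ∫⁻ p, dq (GamR r) D e t p ≤ ∫⁻ p in GamR r, ENNReal.ofReal (fderiv ℝ D p e ^ 2) := by
  set g : ℝ × ℝ → ENNReal := (GamR r).indicator fun p => ENNReal.ofReal (fderiv ℝ D p e ^ 2) with hg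
  have hgm : Measurable g :=
    (((measurable_fderiv_apply_const ℝ D e).pow_const 2).ennreal_ofReal).indicator (measurableSet_GamR r)
  have hpt : ∀ p, dq (GamR r) D e t p ≤ ∫⁻ s in Ioc (0 : ℝ) 1, g (p + (s * t) • e) := by
    intro p
    by_cases hp : p ∈ GamR r ∩ (fun p => p + t • e) ⁻¹' GamR r
    swap
    · rw [dq, indicator_of_notMem hp]; exact zero_le
    have hseg : ∀ s ∈ Icc (0 : ℝ) 1, p + (s * t) • e ∈ GamR r := fun s hs => GamR_seg hr he hp.1 hp.2 hs
    rw [dq_of_mem hp.1 hp.2]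
    set φ : ℝ → ℝ := fun s => fderiv ℝ D (p + (s * t) • e) e with hφ
    have hc : ContinuousOn φ (Icc 0 1) := fun s hs =>
      (ContinuousAt.comp (f := fun s : ℝ => p + (s * t) • e) (contDiffAt_fderiv_apply
        (h.diff _ (Reg.mem hr (hseg s hs))) e) (by fun_prop)).continuousWithinAt
    have hd : ∀ s ∈ uIcc (0 : ℝ) 1, HasDerivAt (fun s : ℝ => D (p + (s * t) • e)) (t * φ s) s := by
      intro s hs
      rw [uIcc_of_le zero_le_one] at hs
      have h1 := ((h.diff _ (Reg.mem hr (hseg s hs))).differentiableAt (by norm_num)).hasFDerivAt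
      have h2 : HasDerivAt (fun s : ℝ => p + (s * t) • e) (t • e) s := by
        have := (((hasDerivAt_id s).mul_const t).smul_const e).const_add p
        simpa using this
      have h3 := h1.comp_hasDerivAt s h2
      rw [map_smul, smul_eq_mul] at h3
      exact h3
    have hi : IntervalIntegrable φ volume 0 1 := (by
      rw [← uIcc_of_le zero_le_one] at hc; exact hc.intervalIntegrable)
    have hFTC := intervalIntegral.integral_eq_sub_of_hasDerivAt hd (hi.const_mul t)
    rw [intervalIntegral.integral_const_mul] at hFTC
    have hi1 : IntegrableOn φ (Ioc 0 1) := hc.integrableOn_Icc.mono_set Ioc_subset_Icc_self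
    have hi2 : IntegrableOn (fun s => φ s ^ 2) (Ioc 0 1) :=
      (hc.pow 2).integrableOn_Icc.mono_set Ioc_subset_Icc_self
    have hCS := sq_integral_le (μ := volume.restrict (Ioc (0 : ℝ) 1)) hi1 hi2
    rw [measureReal_restrict_apply_univ, Real.volume_real_Ioc_of_le zero_le_one, sub_zero, one_mul,
      ← intervalIntegral.integral_of_le zero_le_one] at hCS
    have e1 : (D (p + t • e) - D p) / t = ∫ s in (0 : ℝ)..1, φ s := by
      rw [div_eq_iff ht.ne']
      simp only [one_mul, zero_mul, zero_smul, add_zero] at hFTC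
      rw [← hFTC]; ring
    rw [e1]
    refine (ENNReal.ofReal_le_ofReal hCS).trans ?_
    rw [ofReal_integral_eq_lintegral_ofReal hi2 (Eventually.of_forall fun s => sq_nonneg _)]
    refine setLIntegral_mono' measurableSet_Ioc fun s hs => ?_
    rw [hg, indicator_of_mem (hseg s ⟨hs.1.le, hs.2⟩)]
  refine (lintegral_mono hpt).trans ?_
  rw [lintegral_lintegral_swap]
  · have : ∀ s : ℝ, ∫⁻ p, g (p + (s * t) • e) = ∫⁻ p, g p := fun s => by
      rw [Measure.volume_eq_prod]
      exact lintegral_add_right_eq_self g ((s * t) • e)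
    simp only [this]
    rw [lintegral_const, Measure.restrict_apply_univ, Real.volume_Ioc, hg,
      lintegral_indicator (measurableSet_GamR r)]
    simp
  · refine (hgm.comp (by fun_prop : Measurable fun q : (ℝ × ℝ) × ℝ => q.1 + (q.2 * t) • e)).aemeasurable
end

section
variable {r R B : ℝ} {D : ℕ → ℝ × ℝ → ℝ} {w f : ℝ × ℝ → ℝ} {e : ℝ × ℝ} {rn : ℕ → ℝ}

lemma eventually_mem_GamR (hR : 0 < R) (hpos : ∀ n, 0 < rn n) (hlim : Tendsto rn atTop (nhds R))
    {p : ℝ × ℝ} (hp : p ∈ GamR R) : ∀ᶠ n in atTop, p ∈ GamR (rn n) := by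
  have h := (mem_GamR hR).1 hp
  filter_upwards [hlim.eventually (lt_mem_nhds h.2.2.1), hlim.eventually (lt_mem_nhds h.2.2.2.1)]
    with n h1 h2
  exact (mem_GamR (hpos n)).2 ⟨h.1, h.2.1, h1, h2, h.2.2.2.2⟩

lemma Reg.lint_le (hr : 0 < r) (h : Reg r f) (hb : ∫ p in GamR r, (f p ^ 2 + dot f f p) ≤ B) :
    ∫⁻ p in GamR r, ENNReal.ofReal (f p ^ 2 + dot f f p) ≤ ENNReal.ofReal B := by
  have hi : IntegrableOn (fun p => f p ^ 2 + dot f f p) (GamR r) := (h.sq_int hr).add h.int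
  rw [← ofReal_integral_eq_lintegral_ofReal hi
    (Eventually.of_forall fun p => add_nonneg (sq_nonneg _) (dot_self_nonneg f p))]
  exact ENNReal.ofReal_le_ofReal hb

lemma fderiv_sq_le_dot (he : e = (1, 0) ∨ e = (0, 1)) (f : ℝ × ℝ → ℝ) (p : ℝ × ℝ) :
    fderiv ℝ f p e ^ 2 ≤ f p ^ 2 + dot f f p := by
  simp only [dot, pd1, pd2]
  rcases he with rfl | rfl <;>
  nlinarith [sq_nonneg (f p), sq_nonneg (fderiv ℝ f p (1, 0)), sq_nonneg (fderiv ℝ f p (0, 1))]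

/-- Lower semicontinuity of the `H¹` norm along exhausting domains, under pointwise convergence.
No differentiability of the limit is assumed: where it fails, `fderiv` is zero. -/
lemma fatou_H1 (hR : 0 < R) (hpos : ∀ n, 0 < rn n) (hle : ∀ n, rn n ≤ R)
    (hlim : Tendsto rn atTop (nhds R)) (hreg : ∀ n, Reg (rn n) (D n)) (hB : 0 ≤ B)
    (hb : ∀ n, ∫ p in GamR (rn n), (D n p ^ 2 + dot (D n) (D n) p) ≤ B)
    (hw : ∀ p ∈ GamR R, Tendsto (fun n => D n p) atTop (nhds (w p))) :
    ∫ p in GamR R, (w p ^ 2 + gradSq2 w p) ≤ 3 * B := by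
  have hDm := fun n => (hreg n).measurable_indicator (hpos n)
  have hev := fun {p} hp => eventually_mem_GamR (p := p) hR hpos hlim hp
  have hwm : Measurable ((GamR R).indicator w) := by
    refine measurable_of_tendsto_metrizable hDm (tendsto_pi_nhds.2 fun p => ?_)
    by_cases hp : p ∈ GamR R
    · rw [indicator_of_mem hp]
      refine (hw p hp).congr' ?_
      filter_upwards [hev hp] with n hn
      rw [indicator_of_mem hn]
    · rw [indicator_of_notMem hp]
      refine tendsto_const_nhds.congr fun n => ?_
      rw [indicator_of_notMem fun h => hp (GamR_mono (hpos n) (hle n) h)]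
  have hl := fun n => (hreg n).lint_le (hpos n) (hb n)
  have h1 : ∫⁻ p, (GamR R).indicator (fun p => ENNReal.ofReal (w p ^ 2)) p ≤ ENNReal.ofReal B := by
    refine fatou_le (f := fun n p => ENNReal.ofReal ((GamR (rn n)).indicator (D n) p ^ 2))
      (fun n => ((hDm n).pow_const 2).ennreal_ofReal) (fun p => ?_) (Eventually.of_forall fun n => ?_)
    · by_cases hp : p ∈ GamR R
      swap
      · rw [indicator_of_notMem hp]; exact zero_le
      rw [indicator_of_mem hp]
      refine (Tendsto.liminf_eq ?_).ge
      refine Tendsto.congr' ?_ (ENNReal.tendsto_ofReal ((hw p hp).pow 2))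
      filter_upwards [hev hp] with n hn
      rw [indicator_of_mem hn]
    · refine le_trans ?_ (hl n)
      rw [← lintegral_indicator (measurableSet_GamR _)]
      refine lintegral_mono fun p => ?_
      by_cases hp : p ∈ GamR (rn n)
      · rw [indicator_of_mem hp, indicator_of_mem hp]
        exact ENNReal.ofReal_le_ofReal (le_add_of_nonneg_right (dot_self_nonneg _ _))
      · rw [indicator_of_notMem hp, indicator_of_notMem hp]; simp
  have h2 : ∀ e : ℝ × ℝ, e = (1, 0) ∨ e = (0, 1) → ∀ t : ℝ, 0 < t →
      ∫⁻ p, dq (GamR R) w e t p ≤ ENNReal.ofReal B := by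
    intro e he t ht
    refine fatou_le (f := fun n p => dq (GamR (rn n)) (D n) e t p)
      (fun n => measurable_dq (measurableSet_GamR _) (hDm n)) (fun p => ?_)
      (Eventually.of_forall fun n => ?_)
    · by_cases hp : p ∈ GamR R ∩ (fun p => p + t • e) ⁻¹' GamR R
      swap
      · rw [dq, indicator_of_notMem hp]; exact zero_le
      rw [dq_of_mem hp.1 hp.2]
      refine (Tendsto.liminf_eq ?_).ge
      refine Tendsto.congr' ?_ (ENNReal.tendsto_ofReal
        ((((hw _ hp.2).sub (hw p hp.1)).div_const t).pow 2))
      filter_upwards [hev hp.1, hev hp.2] with n hn hn2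
      rw [dq_of_mem hn hn2]
    · refine (dq_le (hpos n) ht he (hreg n)).trans (le_trans ?_ (hl n))
      exact lintegral_mono fun p => ENNReal.ofReal_le_ofReal (fderiv_sq_le_dot he _ _)
  have h3 : ∀ e : ℝ × ℝ, e = (1, 0) ∨ e = (0, 1) →
      ∫⁻ p, (GamR R).indicator (fun p => ENNReal.ofReal (fderiv ℝ w p e ^ 2)) p ≤ ENNReal.ofReal B := by
    intro e he
    refine fatou_le (f := fun k p => dq (GamR R) w e (en k) p)
      (fun n => measurable_dq (measurableSet_GamR _) hwm) (fun p => ?_)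
      (Eventually.of_forall fun k => h2 e he (en k) (en_pos k))
    by_cases hp : p ∈ GamR R
    swap
    · rw [indicator_of_notMem hp]; exact zero_le
    rw [indicator_of_mem hp]
    by_cases hd : DifferentiableAt ℝ w p
    swap
    · rw [fderiv_zero_of_not_differentiableAt hd]; simp
    refine (Tendsto.liminf_eq ?_).ge
    have hline : Tendsto (fun k => p + en k • e) atTop (nhds p) := by
      have := (en_tendsto.smul_const e).const_add p
      simpa using this
    have hder := hd.hasFDerivAt.hasLineDerivAt e
    have hs := hasDerivAt_iff_tendsto_slope_zero.1 hder
    have hen : Tendsto en atTop (nhdsWithin 0 {0}ᶜ) :=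
      tendsto_nhdsWithin_iff.2 ⟨en_tendsto, Eventually.of_forall fun k => (en_pos k).ne'⟩
    refine Tendsto.congr' ?_ (ENNReal.tendsto_ofReal ((hs.comp hen).pow 2))
    filter_upwards [hline.eventually ((isOpen_GamR R).mem_nhds hp)] with k hk
    rw [dq_of_mem hp hk]
    simp only [Function.comp, zero_add, zero_smul, add_zero, smul_eq_mul, div_eq_inv_mul]
  by_cases hIntg : IntegrableOn (fun p => w p ^ 2 + gradSq2 w p) (GamR R)
  swap
  · rw [integral_undef hIntg]; positivity
  have hnn : ∀ p, 0 ≤ w p ^ 2 + gradSq2 w p := fun p => by unfold gradSq2; positivity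
  rw [← ENNReal.ofReal_le_ofReal_iff (by positivity), ofReal_integral_eq_lintegral_ofReal hIntg
    (Eventually.of_forall hnn), ← lintegral_indicator (measurableSet_GamR _)]
  set i1 := (GamR R).indicator (fun p => ENNReal.ofReal (w p ^ 2)) with hi1
  set i2 := (GamR R).indicator (fun p => ENNReal.ofReal (fderiv ℝ w p (1, 0) ^ 2)) with hi2
  set i3 := (GamR R).indicator (fun p => ENNReal.ofReal (fderiv ℝ w p (0, 1) ^ 2)) with hi3
  have m2 : Measurable i2 := (((measurable_fderiv_apply_const ℝ w _).pow_const 2).ennreal_ofReal).indicator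
    (measurableSet_GamR R)
  have m3 : Measurable i3 := (((measurable_fderiv_apply_const ℝ w _).pow_const 2).ennreal_ofReal).indicator
    (measurableSet_GamR R)
  have e1 : ∀ p, (GamR R).indicator (fun p => ENNReal.ofReal (w p ^ 2 + gradSq2 w p)) p ≤
      i1 p + i2 p + i3 p := by
    intro p
    by_cases hp : p ∈ GamR R
    · rw [hi1, hi2, hi3, indicator_of_mem hp, indicator_of_mem hp, indicator_of_mem hp,
        indicator_of_mem hp, ← ENNReal.ofReal_add (by positivity) (by positivity),
        ← ENNReal.ofReal_add (by positivity) (by positivity), gradSq2, add_assoc]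
    · rw [indicator_of_notMem hp]; exact zero_le
  refine (lintegral_mono e1).trans ?_
  rw [lintegral_add_right _ m3, lintegral_add_right _ m2]
  have : ENNReal.ofReal (3 * B) = ENNReal.ofReal B + ENNReal.ofReal B + ENNReal.ofReal B := by
    rw [← ENNReal.ofReal_add hB hB, ← ENNReal.ofReal_add (by positivity) hB]; congr 1; ring
  rw [this]
  exact add_le_add (add_le_add h1 (h3 _ (Or.inl rfl))) (h3 _ (Or.inr rfl))
end

section
variable {r R c B : ℝ} {f : ℝ × ℝ → ℝ} {rn : ℕ → ℝ}

lemma fderiv_const_mul_apply {p : ℝ × ℝ} (hf : DifferentiableAt ℝ f p) (e : ℝ × ℝ) :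
    fderiv ℝ (fun q => c * f q) p e = c * fderiv ℝ f p e := by
  rw [fderiv_const_mul hf]; simp

lemma Reg.const_mul (hr : 0 < r) (h : Reg r f) : Reg r (fun p => c * f p) ∧
    ∫ p in GamR r, ((c * f p) ^ 2 + dot (fun p => c * f p) (fun p => c * f p) p) =
      c ^ 2 * ∫ p in GamR r, (f p ^ 2 + dot f f p) := by
  have e : ∀ p ∈ GamR r, dot (fun p => c * f p) (fun p => c * f p) p = c ^ 2 * dot f f p := by
    intro p hp
    have hd := (h.diff p (Reg.mem hr hp)).differentiableAt (by norm_num)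
    simp only [dot, pd1, pd2, fderiv_const_mul_apply hd]; ring
  refine ⟨⟨fun p hp => contDiffAt_const.mul (h.diff p hp), continuousOn_const.mul h.cont,
    fun p hp hG => by simp only [h.zero p hp hG, mul_zero], ?_⟩, ?_⟩
  · exact IntegrableOn.congr_fun (h.int.const_mul (c ^ 2)) (fun p hp => (e p hp).symm)
      (measurableSet_GamR r)
  · rw [← integral_const_mul]
    refine setIntegral_congr_fun (measurableSet_GamR r) fun p hp => ?_
    simp only [e p hp]; ring

/-- Nearby eigenfunctions are not orthogonal: a qualitative consequence of pointwise convergence. -/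
lemma overlap {v : ℝ → ℝ × ℝ → ℝ} (hv : ∀ R : ℝ, 0 < R → IsFirstEF R (v R)) (hR : 0 < R)
    (hpos : ∀ n, 0 < rn n) (hle : ∀ n, rn n ≤ R) (hlim : Tendsto rn atTop (nhds R))
    (hw : ∀ p, Tendsto (fun n => v (rn n) p) atTop (nhds (v R p))) :
    ∀ᶠ n in atTop, 1 / 2 ≤ ∫ p in GamR (rn n), v R p * v (rn n) p := by
  have hg := (hv R hR).good hR
  have hgn := fun n => (hv _ (hpos n)).good (hpos n)
  set F : ℕ → ℝ × ℝ → ENNReal := fun n p => ENNReal.ofReal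
    ((GamR R).indicator (v R) p * (GamR (rn n)).indicator (v (rn n)) p) with hF
  have hFm : ∀ n, Measurable (F n) := fun n =>
    (((hg.reg hR).measurable_indicator hR).mul
      (((hgn n).reg (hpos n)).measurable_indicator (hpos n))).ennreal_ofReal
  have hFi : ∀ n, ∫⁻ p, F n p = ENNReal.ofReal (∫ p in GamR (rn n), v R p * v (rn n) p) := by
    intro n
    have hi : IntegrableOn (fun p => v R p * v (rn n) p) (GamR (rn n)) :=
      integrableOn_of_KK (hpos n) ((hg.cont.mono (KK_mono (hle n))).mul (hgn n).cont)
    rw [ofReal_integral_eq_lintegral_ofReal hi ((ae_restrict_iff' (measurableSet_GamR _)).2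
      (Eventually.of_forall fun p hp => mul_nonneg (hg.pos p (GamR_mono (hpos n) (hle n) hp)).le
        ((hgn n).pos p hp).le)), ← lintegral_indicator (measurableSet_GamR _)]
    congr 1; ext p
    by_cases hp : p ∈ GamR (rn n)
    · simp only [hF]
      rw [indicator_of_mem hp, indicator_of_mem hp, indicator_of_mem (GamR_mono (hpos n) (hle n) hp)]
    · simp only [hF]
      rw [indicator_of_notMem hp, indicator_of_notMem hp, mul_zero, ENNReal.ofReal_zero]
  have hlow : (1 : ENNReal) ≤ liminf (fun n => ∫⁻ p, F n p) atTop := by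
    refine le_trans ?_ (lintegral_liminf_le hFm)
    have h1 : (1 : ENNReal) = ∫⁻ p, (GamR R).indicator (fun p => ENNReal.ofReal (v R p ^ 2)) p := by
      rw [lintegral_indicator (measurableSet_GamR _), ← ofReal_integral_eq_lintegral_ofReal
        ((hg.reg hR).sq_int hR) (Eventually.of_forall fun p => sq_nonneg _),
        (hv R hR).2.2.2.2.2.2.2, ENNReal.ofReal_one]
    rw [h1]
    refine lintegral_mono fun p => ?_
    by_cases hp : p ∈ GamR R
    swap
    · rw [indicator_of_notMem hp]; exact zero_le
    rw [indicator_of_mem hp]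
    refine (Tendsto.liminf_eq ?_).ge
    have ht := ENNReal.tendsto_ofReal ((tendsto_const_nhds (x := v R p)).mul (hw p))
    rw [← sq] at ht
    refine Tendsto.congr' ?_ ht
    filter_upwards [eventually_mem_GamR hR hpos hlim hp] with n hn
    simp only [hF]
    rw [indicator_of_mem hp, indicator_of_mem hn]
  have hlt : ENNReal.ofReal (1 / 2) < liminf (fun n => ∫⁻ p, F n p) atTop := by
    refine lt_of_lt_of_le ?_ hlow
    rw [← ENNReal.ofReal_one]
    exact (ENNReal.ofReal_lt_ofReal_iff one_pos).2 (by norm_num)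
  filter_upwards [eventually_lt_of_lt_liminf hlt] with n hn
  rw [hFi] at hn
  exact ((ENNReal.ofReal_lt_ofReal_iff' ).1 hn).1.le

lemma lamR_nonneg (R : ℝ) : 0 ≤ lamR R := by
  refine Real.sInf_nonneg ?_
  rintro x ⟨u, -, -, rfl⟩
  refine div_nonneg (integral_nonneg fun p => ?_) (integral_nonneg fun p => sq_nonneg _)
  show 0 ≤ gradSq2 u p
  unfold gradSq2; positivity

/-- The decay estimate, given the two spectral facts `λ₁(Γ) < π²` and `λ₁(Γ_R) ≤ λ₁(Γ)`: the left
difference quotients of `v` at `R` satisfy the bound uniformly, and the `H¹` norm is lower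
semicontinuous. -/
lemma decay_of_lam (hG : lamG < π ^ 2) (hL : ∀ R : ℝ, 0 < R → lamR R ≤ lamG)
    {v w : ℝ → ℝ × ℝ → ℝ} (hv : ∀ R : ℝ, 0 < R → IsFirstEF R (v R))
    (hw : ∀ R : ℝ, 0 < R → ∀ p : ℝ × ℝ, HasDerivAt (fun r => v r p) (w R p) R) (hR : 1 ≤ R) :
    √(∫ p in GamR R, ((w R p) ^ 2 + gradSq2 (w R) p)) ≤ (2 * Cst lamG) * exp (-R * omega) := by
  have hR0 : 0 < R := by linarith
  have hC := Cst_nonneg ((lamR_nonneg R).trans (hL R hR0)) hG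
  set h : ℕ → ℝ := fun n => en (n + 8) with hh
  have hh0 : ∀ n, 0 < h n := fun n => en_pos _
  have hh1 : ∀ n, h n ≤ 1 / 8 := fun n => by
    simp only [hh, en]
    refine one_div_le_one_div_of_le (by norm_num) ?_
    push_cast; have : (0 : ℝ) ≤ n := Nat.cast_nonneg n
    linarith
  have hht : Tendsto h atTop (nhds 0) := en_tendsto.comp (tendsto_add_atTop_nat 8)
  have hrt : Tendsto (fun n => R - h n) atTop (nhds R) := by
    simpa using tendsto_const_nhds.sub hht
  have hpt : ∀ p, Tendsto (fun n => v (R - h n) p) atTop (nhds (v R p)) := fun p =>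
    (hw R hR0 p).continuousAt.tendsto.comp hrt
  have hov := overlap hv hR0 (rn := fun n => R - h n) (fun n => by linarith [hh1 n])
    (fun n => by linarith [hh0 n]) hrt hpt
  obtain ⟨n0, hn0⟩ := eventually_atTop.1 hov
  set M := Cst lamG * exp (-R * √(π ^ 2 - lamG)) with hM
  have hM0 : 0 ≤ M := by positivity
  have key : ∀ n, Reg (R - h (n + n0)) (comb 1 (-1) (v R) (v (R - h (n + n0)))) ∧ _ := fun n =>
    diff_est' hR (lamR_nonneg R) (hL R hR0) (lamR_nonneg _)
      (hL (R - h (n + n0)) (by linarith [hh1 (n + n0)])) hG ⟨hh0 _, hh1 _⟩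
      ((hv R hR0).good hR0) ((hv _ (by linarith [hh1 (n + n0)])).good (by linarith [hh1 (n + n0)]))
      (hv R hR0).2.2.2.2.2.2.2 (hv _ (by linarith [hh1 (n + n0)])).2.2.2.2.2.2.2
      (hn0 (n + n0) (by omega))
  have hpos : ∀ n, 0 < R - h (n + n0) := fun n => by linarith [hh1 (n + n0)]
  have main := fatou_H1 (w := w R) (B := M ^ 2) (rn := fun n => R - h (n + n0))
    (D := fun n p => (h (n + n0))⁻¹ * comb 1 (-1) (v R) (v (R - h (n + n0))) p) hR0 hpos
    (fun n => by linarith [hh0 (n + n0)]) (hrt.comp (tendsto_add_atTop_nat n0))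
    (fun n => ((key n).1.const_mul (hpos n)).1) (by positivity) (fun n => ?_) (fun p _ => ?_)
  · rw [mul_comm 2, mul_assoc, mul_comm 2, ← mul_assoc]
    refine (sqrt_le_sqrt main).trans ?_
    rw [sqrt_le_left (by unfold omega; positivity)]
    have : Cst lamG * exp (-R * omega) = M := rfl
    rw [this]; nlinarith
  · rw [((key n).1.const_mul (hpos n)).2]
    have h1 := (key n).2
    have h2 : (0 : ℝ) ≤ (h (n + n0))⁻¹ ^ 2 := sq_nonneg _
    refine (mul_le_mul_of_nonneg_left h1 h2).trans (le_of_eq ?_)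
    have := (hh0 (n + n0)).ne'
    rw [hM]; field_simp
  · have hs := hasDerivAt_iff_tendsto_slope_zero.1 (hw R hR0 p)
    have hen : Tendsto (fun n => -h (n + n0)) atTop (nhdsWithin 0 {0}ᶜ) := by
      refine tendsto_nhdsWithin_iff.2 ⟨?_, Eventually.of_forall fun k => by
        simpa using (hh0 (k + n0)).ne'⟩
      simpa using (hht.comp (tendsto_add_atTop_nat n0)).neg
    refine (hs.comp hen).congr fun n => ?_
    simp only [Function.comp, comb, smul_eq_mul, ← sub_eq_add_neg]
    rw [inv_neg]; ring
end

/-! ### Comparison of the finite guide with the infinite one -/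

section
variable {R : ℝ} {u : ℝ × ℝ → ℝ}

lemma Gam_decomp (hR : 0 < R) : Gam = GamR R ∪ ((Ici R ×ˢ Ioo (-1) 0) ∪ (Ioo (-1) 0 ×ˢ Ici R)) := by
  ext ⟨x, y⟩
  rw [mem_union, mem_GamR hR, mem_Gam]
  simp only [mem_union, mem_prod, mem_Ioo, mem_Ici]
  constructor
  · rintro ⟨h1, h2, h3⟩
    by_cases hx : x < R
    · by_cases hy : y < R
      · exact Or.inl ⟨h1, h2, hx, hy, h3⟩
      · refine Or.inr (Or.inr ⟨⟨h1, ?_⟩, not_lt.1 hy⟩)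
        rcases h3 with h3 | h3 <;> linarith
    · refine Or.inr (Or.inl ⟨not_lt.1 hx, h2, ?_⟩)
      rcases h3 with h3 | h3 <;> linarith
  · rintro (⟨h1, h2, -, -, h3⟩ | ⟨h1, h2, h3⟩ | ⟨⟨h1, h2⟩, h3⟩)
    · exact ⟨h1, h2, h3⟩
    · exact ⟨by linarith, h2, Or.inr h3⟩
    · exact ⟨h1, by linarith, Or.inl h2⟩

lemma integral_Gam_decomp (hR : 0 < R) {φ : ℝ × ℝ → ℝ} (h : Integrable φ) :
    ∫ p in Gam, φ p = (∫ p in GamR R, φ p) +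
      ((∫ p in Ici R ×ˢ Ioo (-1 : ℝ) 0, φ p) + ∫ p in Ici R ×ˢ Ioo (-1 : ℝ) 0, φ p.swap) := by
  have e1 : ∫ p in Ici R ×ˢ Ioo (-1 : ℝ) 0, φ p.swap = ∫ p in Ioo (-1 : ℝ) 0 ×ˢ Ici R, φ p := by
    rw [Measure.volume_eq_prod]; exact setIntegral_prod_swap _ _ φ
  have hA : MeasurableSet (Ici R ×ˢ Ioo (-1 : ℝ) 0) := measurableSet_Ici.prod measurableSet_Ioo
  have hA2 : MeasurableSet (Ioo (-1 : ℝ) 0 ×ˢ Ici R) := measurableSet_Ioo.prod measurableSet_Ici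
  rw [e1, ← setIntegral_union _ hA2 h.integrableOn h.integrableOn,
    ← setIntegral_union _ (hA.union hA2) h.integrableOn h.integrableOn, ← Gam_decomp hR]
  · rw [Set.disjoint_left]
    rintro ⟨x, y⟩ hG hh
    have h1 := (mem_GamR hR).1 hG
    rcases hh with ⟨h3, h4⟩ | ⟨h3, h4⟩
    · exact absurd h1.2.2.1 (not_lt.2 h3)
    · exact absurd h1.2.2.2.1 (not_lt.2 h4)
  · rw [Set.disjoint_left]
    rintro ⟨x, y⟩ ⟨h1, h2⟩ ⟨h3, h4⟩
    exact absurd (h3.2.trans hR) (not_lt.2 h1)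

lemma contDiff_gradSq2 (hu : ContDiff ℝ 1 u) : Continuous (gradSq2 u) := by
  have h := hu.continuous_fderiv (by norm_num)
  unfold gradSq2; fun_prop

lemma compact_integrable (hu : ContDiff ℝ 1 u) (hc : HasCompactSupport u) :
    Integrable (fun p => u p ^ 2) ∧ Integrable (gradSq2 u) ∧ Integrable (fun p => pd2 u p ^ 2) := by
  have h := hu.continuous_fderiv (by norm_num)
  have hcu := hu.continuous
  have hf := hc.fderiv (𝕜 := ℝ)
  refine ⟨Continuous.integrable_of_hasCompactSupport (by fun_prop) ?_,
    (contDiff_gradSq2 hu).integrable_of_hasCompactSupport ?_,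
    Continuous.integrable_of_hasCompactSupport (by unfold pd2; fun_prop) ?_⟩
  · exact hc.comp_left (g := fun x : ℝ => x ^ 2) (by norm_num)
  · exact hf.comp_left (g := fun L : ℝ × ℝ →L[ℝ] ℝ => L (1, 0) ^ 2 + L (0, 1) ^ 2) (by simp)
  · exact hf.comp_left (g := fun L : ℝ × ℝ →L[ℝ] ℝ => L (0, 1) ^ 2) (by simp)

/-- The part of the horizontal arm beyond `R` carries energy at least `π²`. -/
lemma tail_ineq (hR : 0 < R) (hu : ContDiff ℝ 1 u) (hc : HasCompactSupport u)
    (hz : ∀ p, p ∉ Gam → u p = 0) :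
    π ^ 2 * ∫ p in Ici R ×ˢ Ioo (-1 : ℝ) 0, u p ^ 2 ≤ ∫ p in Ici R ×ˢ Ioo (-1 : ℝ) 0, gradSq2 u p := by
  obtain ⟨i1, i2, i3⟩ := compact_integrable hu hc
  have hcu := hu.continuous
  refine (arm_ineq (ud := pd2 u) measurableSet_Ici i1.integrableOn i3.integrableOn
    (fun x _ => by fun_prop) (fun x hx => hz _ ?_) (fun x hx => hz _ ?_) fun x hx y hy => ?_).trans
    (integral_mono i3.integrableOn i2.integrableOn fun p => ?_)
  · rw [mem_Gam]; rintro ⟨-, h, -⟩; exact absurd h (by norm_num)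
  · have : R ≤ x := hx
    rw [mem_Gam]; rintro ⟨-, -, h | h⟩
    · simp at h; linarith
    · simp at h
  · have h1 := (hu.differentiable (by norm_num) (x, y)).hasFDerivAt
    have h2 : HasDerivAt (fun y : ℝ => (x, y)) ((0 : ℝ), (1 : ℝ)) y :=
      (hasDerivAt_const y x).prodMk (hasDerivAt_id y)
    exact h1.comp_hasDerivAt y h2
  · simp only [gradSq2, pd2]; nlinarith [sq_nonneg (fderiv ℝ u p (1, 0))]

lemma gradSq2_swap (u : ℝ × ℝ → ℝ) (p : ℝ × ℝ) : gradSq2 (u ∘ Prod.swap) p = gradSq2 u p.swap := by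
  rw [gradSq2_eq_dot, gradSq2_eq_dot]; exact dot_swap _ _ _

lemma swap_tail_ineq (hR : 0 < R) (hu : ContDiff ℝ 1 u) (hc : HasCompactSupport u)
    (hz : ∀ p, p ∉ Gam → u p = 0) : π ^ 2 * ∫ p in Ici R ×ˢ Ioo (-1 : ℝ) 0, u p.swap ^ 2 ≤
      ∫ p in Ici R ×ˢ Ioo (-1 : ℝ) 0, gradSq2 u p.swap := by
  have h1 : ContDiff ℝ 1 (u ∘ Prod.swap) := hu.comp (contDiff_snd.prodMk contDiff_fst)
  have h2 : HasCompactSupport (u ∘ Prod.swap) :=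
    hc.comp_homeomorph (Homeomorph.prodComm ℝ ℝ)
  have := tail_ineq hR h1 h2 fun p hp => hz _ fun h => hp (by simpa using swap_mem_Gam.2 h)
  simp only [gradSq2_swap] at this
  exact this

/-- Cutting off the arms at `R` lowers a Rayleigh quotient below `π²`, because the removed parts
carry energy at least `π²`. -/
lemma lamR_le_of_trial (hR : 0 < R) (hu : ContDiff ℝ 1 u) (hc : HasCompactSupport u)
    (ht : tsupport u ⊆ Gam) (h0 : (∫ p in Gam, (u p) ^ 2) ≠ 0)
    (hlt : (∫ p in Gam, gradSq2 u p) / (∫ p in Gam, (u p) ^ 2) < π ^ 2) :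
    lamR R ≤ (∫ p in Gam, gradSq2 u p) / ∫ p in Gam, (u p) ^ 2 := by
  have hz : ∀ p, p ∉ Gam → u p = 0 := fun p hp => image_eq_zero_of_notMem_tsupport fun h => hp (ht h)
  obtain ⟨i1, i2, -⟩ := compact_integrable hu hc
  have d1 := integral_Gam_decomp hR i1
  have d2 := integral_Gam_decomp hR i2
  have t1 := tail_ineq hR hu hc hz
  have t2 := swap_tail_ineq hR hu hc hz
  have n1 : 0 ≤ ∫ p in GamR R, u p ^ 2 := integral_nonneg fun p => sq_nonneg _
  have n2 : 0 ≤ ∫ p in Ici R ×ˢ Ioo (-1 : ℝ) 0, u p ^ 2 := integral_nonneg fun p => sq_nonneg _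
  have n3 : 0 ≤ ∫ p in Ici R ×ˢ Ioo (-1 : ℝ) 0, u p.swap ^ 2 := integral_nonneg fun p => sq_nonneg _
  have n4 : 0 ≤ ∫ p in GamR R, gradSq2 u p := integral_nonneg fun p => by
    simp only [gradSq2, Pi.zero_apply]; positivity
  have hA : 0 < ∫ p in Gam, (u p) ^ 2 := lt_of_le_of_ne (integral_nonneg fun p => sq_nonneg _) h0.symm
  obtain ⟨ρ, hρ⟩ : ∃ ρ, ρ = (∫ p in Gam, gradSq2 u p) / ∫ p in Gam, (u p) ^ 2 := ⟨_, rfl⟩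
  rw [← hρ] at hlt ⊢
  rw [eq_div_iff h0] at hρ
  rw [d2, d1] at hρ
  rw [d1] at hA
  obtain ⟨T, hT⟩ : ∃ T, T = (∫ p in Ici R ×ˢ Ioo (-1 : ℝ) 0, u p ^ 2) +
    ∫ p in Ici R ×ˢ Ioo (-1 : ℝ) 0, u p.swap ^ 2 := ⟨_, rfl⟩
  have hT0 : 0 ≤ T := by linarith
  have key : (∫ p in GamR R, gradSq2 u p) + (π ^ 2 - ρ) * T ≤ ρ * ∫ p in GamR R, u p ^ 2 := by
    rw [hT]; linarith
  have hpos : 0 < ∫ p in GamR R, u p ^ 2 := by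
    refine lt_of_le_of_ne n1 fun h => ?_
    rw [← h] at key hA
    have : T ≤ 0 := by
      by_contra hc
      have := mul_pos (sub_pos.2 hlt) (not_le.1 hc)
      linarith
    linarith
  have hmem : lamR R ≤ (∫ p in GamR R, gradSq2 u p) / ∫ p in GamR R, u p ^ 2 := by
    refine csInf_le ⟨0, ?_⟩ ⟨u, ⟨hu, fun p hp => hz p (DirB_not_mem_Gam hp)⟩, hpos.ne', rfl⟩
    rintro x ⟨u, -, -, rfl⟩
    exact div_nonneg (integral_nonneg fun p => by simp only [gradSq2, Pi.zero_apply]; positivity)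
      (integral_nonneg fun p => sq_nonneg _)
  refine hmem.trans ?_
  rw [div_le_iff₀ hpos]
  linarith [mul_nonneg (sub_pos.2 hlt).le hT0]

/-- If some trial function beats the threshold `π²`, then both spectral facts follow: truncation with
a Neumann condition lowers the first eigenvalue, as the removed arms carry energy above `π²`. -/
lemma spectral_of_trial (htr : ∃ u : ℝ × ℝ → ℝ, ContDiff ℝ 1 u ∧ HasCompactSupport u ∧
    tsupport u ⊆ Gam ∧ (∫ p in Gam, (u p) ^ 2) ≠ 0 ∧
    (∫ p in Gam, gradSq2 u p) / (∫ p in Gam, (u p) ^ 2) < π ^ 2) :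
    lamG < π ^ 2 ∧ ∀ R : ℝ, 0 < R → lamR R ≤ lamG := by
  obtain ⟨u, hu, hc, ht, h0, hlt⟩ := htr
  refine ⟨lt_of_le_of_lt (csInf_le ⟨0, ?_⟩ ⟨u, hu, hc, ht, h0, rfl⟩) hlt, fun R hR => ?_⟩
  · rintro x ⟨u, -, -, -, -, rfl⟩
    exact div_nonneg (integral_nonneg fun p => by simp only [gradSq2, Pi.zero_apply]; positivity)
      (integral_nonneg fun p => sq_nonneg _)
  · refine le_csInf ⟨_, u, hu, hc, ht, h0, rfl⟩ ?_
    rintro x ⟨u', hu', hc', ht', h0', rfl⟩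
    by_cases hlt' : (∫ p in Gam, gradSq2 u' p) / (∫ p in Gam, (u' p) ^ 2) < π ^ 2
    · exact lamR_le_of_trial hR hu' hc' ht' h0' hlt'
    · exact (lamR_le_of_trial hR hu hc ht h0 hlt).trans (hlt.le.trans (not_lt.1 hlt'))
end

/-! ### A trial function below the threshold -/

section
variable {a s a' s' : ℝ → ℝ}

/-- The symmetric trial function `a(x) s(y) + s(x) a(y)`. -/
def trialU (a s : ℝ → ℝ) : ℝ × ℝ → ℝ := fun p => a p.1 * s p.2 + s p.1 * a p.2

lemma Continuous.int_cs {f : ℝ → ℝ} (hf : Continuous f) (hc : HasCompactSupport f) : Integrable f :=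
  hf.integrable_of_hasCompactSupport hc

/-- Product structure of the square integral of `f₁(x) g₁(y) + f₂(x) g₂(y)`. -/
lemma integral_sq_prod {f₁ g₁ f₂ g₂ : ℝ → ℝ} (h1 : Integrable fun x => f₁ x ^ 2)
    (h2 : Integrable fun x => g₁ x ^ 2) (h3 : Integrable fun x => f₂ x ^ 2)
    (h4 : Integrable fun x => g₂ x ^ 2) (h5 : Integrable fun x => f₁ x * f₂ x)
    (h6 : Integrable fun x => g₁ x * g₂ x) :
    Integrable (fun p : ℝ × ℝ => (f₁ p.1 * g₁ p.2 + f₂ p.1 * g₂ p.2) ^ 2) ∧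
    ∫ p : ℝ × ℝ, (f₁ p.1 * g₁ p.2 + f₂ p.1 * g₂ p.2) ^ 2 =
      (∫ x, f₁ x ^ 2) * (∫ x, g₁ x ^ 2) + 2 * ((∫ x, f₁ x * f₂ x) * ∫ x, g₁ x * g₂ x) +
      (∫ x, f₂ x ^ 2) * ∫ x, g₂ x ^ 2 := by
  have i1 : Integrable (fun p : ℝ × ℝ => f₁ p.1 ^ 2 * g₁ p.2 ^ 2) := h1.mul_prod h2
  have i2 : Integrable (fun p : ℝ × ℝ => 2 * ((f₁ p.1 * f₂ p.1) * (g₁ p.2 * g₂ p.2))) :=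
    (h5.mul_prod h6).const_mul 2
  have i3 : Integrable (fun p : ℝ × ℝ => f₂ p.1 ^ 2 * g₂ p.2 ^ 2) := h3.mul_prod h4
  have i4 : Integrable (fun p : ℝ × ℝ => f₁ p.1 ^ 2 * g₁ p.2 ^ 2 +
    2 * ((f₁ p.1 * f₂ p.1) * (g₁ p.2 * g₂ p.2))) := i1.add i2
  have i5 : Integrable (fun p : ℝ × ℝ => f₁ p.1 ^ 2 * g₁ p.2 ^ 2 +
    2 * ((f₁ p.1 * f₂ p.1) * (g₁ p.2 * g₂ p.2)) + f₂ p.1 ^ 2 * g₂ p.2 ^ 2) := i4.add i3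
  have e : (fun p : ℝ × ℝ => (f₁ p.1 * g₁ p.2 + f₂ p.1 * g₂ p.2) ^ 2) = fun p => f₁ p.1 ^ 2 * g₁ p.2 ^ 2 +
    2 * ((f₁ p.1 * f₂ p.1) * (g₁ p.2 * g₂ p.2)) + f₂ p.1 ^ 2 * g₂ p.2 ^ 2 := by ext p; ring
  rw [e]
  refine ⟨i5, ?_⟩
  rw [integral_add i4 i3, integral_add i1 i2, integral_const_mul, Measure.volume_eq_prod,
    integral_prod_mul (fun x => f₁ x ^ 2) (fun x => g₁ x ^ 2),
    integral_prod_mul (fun x => f₁ x * f₂ x) (fun x => g₁ x * g₂ x),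
    integral_prod_mul (fun x => f₂ x ^ 2) (fun x => g₂ x ^ 2)]

/-- The Rayleigh quotient of `trialU a s` in terms of one-dimensional integrals. -/
lemma trial_criterion (ha : ∀ x, HasDerivAt a (a' x) x) (hs : ∀ x, HasDerivAt s (s' x) x)
    (hca' : Continuous a') (hcs' : Continuous s') (sa : HasCompactSupport a) (ss : HasCompactSupport s)
    (ta : tsupport a ⊆ Ioi (-1)) (ts : tsupport s ⊆ Ioo (-1) 0)
    (hpos : 0 < (∫ x, a x * a x) * (∫ x, s x * s x) + (∫ x, s x * a x) ^ 2)
    (hneg : (∫ x, a' x * a' x) * (∫ x, s x * s x) + (∫ x, a x * a x) * (∫ x, s' x * s' x) +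
      2 * (∫ x, s' x * a' x) * (∫ x, s x * a x) <
      π ^ 2 * ((∫ x, a x * a x) * (∫ x, s x * s x) + (∫ x, s x * a x) ^ 2)) :
    ∃ u : ℝ × ℝ → ℝ, ContDiff ℝ 1 u ∧ HasCompactSupport u ∧
    tsupport u ⊆ Gam ∧ (∫ p in Gam, (u p) ^ 2) ≠ 0 ∧
    (∫ p in Gam, gradSq2 u p) / (∫ p in Gam, (u p) ^ 2) < π ^ 2 := by
  have da : deriv a = a' := funext fun x => (ha x).deriv
  have ds : deriv s = s' := funext fun x => (hs x).deriv
  have Ca : ContDiff ℝ 1 a := contDiff_one_iff_deriv.2 ⟨fun x => (ha x).differentiableAt, by rwa [da]⟩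
  have Cs : ContDiff ℝ 1 s := contDiff_one_iff_deriv.2 ⟨fun x => (hs x).differentiableAt, by rwa [ds]⟩
  have hca := Ca.continuous
  have hcs := Cs.continuous
  have sa' : HasCompactSupport a' := da ▸ sa.deriv
  have ss' : HasCompactSupport s' := ds ▸ ss.deriv
  have CU : ContDiff ℝ 1 (trialU a s) :=
    ((Ca.comp contDiff_fst).mul (Cs.comp contDiff_snd)).add
      ((Cs.comp contDiff_fst).mul (Ca.comp contDiff_snd))
  set T : Set (ℝ × ℝ) := (tsupport a ×ˢ tsupport s) ∪ (tsupport s ×ˢ tsupport a) with hT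
  have hTc : IsCompact T := (sa.isCompact.prod ss.isCompact).union (ss.isCompact.prod sa.isCompact)
  have hsup : Function.support (trialU a s) ⊆ T := by
    intro p hp
    by_contra hcon
    apply hp
    simp only [hT, mem_union, mem_prod, not_or, not_and_or] at hcon
    have z : ∀ {f : ℝ → ℝ} {x}, x ∉ tsupport f → f x = 0 := fun h => image_eq_zero_of_notMem_tsupport h
    have e1 : a p.1 * s p.2 = 0 := by rcases hcon.1 with h | h <;> simp [z h]
    have e2 : s p.1 * a p.2 = 0 := by rcases hcon.2 with h | h <;> simp [z h]
    simp only [trialU, e1, e2, add_zero]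
  have hUc : HasCompactSupport (trialU a s) := HasCompactSupport.of_support_subset_isCompact hTc hsup
  have htsT : tsupport (trialU a s) ⊆ T := closure_minimal hsup hTc.isClosed
  have hTG : T ⊆ Gam := by
    rintro ⟨x, y⟩ (⟨h1, h2⟩ | ⟨h1, h2⟩)
    · exact mem_Gam.2 ⟨ta h1, (ts h2).1, Or.inr (ts h2).2⟩
    · exact mem_Gam.2 ⟨(ts h1).1, ta h2, Or.inl (ts h1).2⟩
  have hUG := htsT.trans hTG
  have i1 : ∀ {f g : ℝ → ℝ}, Continuous f → Continuous g → HasCompactSupport f →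
      Integrable fun x => f x * g x := fun hf hg hs => (hf.mul hg).int_cs hs.mul_right
  have i2 : ∀ {f : ℝ → ℝ}, Continuous f → HasCompactSupport f → Integrable fun x => f x ^ 2 := by
    intro f hf hs
    simpa only [sq] using i1 hf hf hs
  have q : ∀ f : ℝ → ℝ, ∫ x, f x ^ 2 = ∫ x, f x * f x := fun f => by simp only [sq]
  have c : ∀ f g : ℝ → ℝ, ∫ x, f x * g x = ∫ x, g x * f x := fun f g => by simp only [mul_comm]
  have E1 : ∫ p in Gam, trialU a s p ^ 2 =
      2 * ((∫ x, a x * a x) * (∫ x, s x * s x) + (∫ x, s x * a x) ^ 2) := by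
    rw [setIntegral_eq_integral_of_forall_compl_eq_zero]
    · have := (integral_sq_prod (i2 hca sa) (i2 hcs ss) (i2 hcs ss) (i2 hca sa) (i1 hca hcs sa)
        (i1 hcs hca ss)).2
      simp only [trialU]
      rw [this, q a, q s, c a s]; ring
    · intro p hp
      rw [image_eq_zero_of_notMem_tsupport fun h => hp (hUG h)]; norm_num
  have f1 : ∀ p, fderiv ℝ (trialU a s) p (1, 0) = a' p.1 * s p.2 + s' p.1 * a p.2 := by
    rintro ⟨x, y⟩
    have h1 := (CU.differentiable (by norm_num) (x, y)).hasFDerivAt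
    have h2 : HasDerivAt (fun x : ℝ => (x, y)) ((1 : ℝ), (0 : ℝ)) x :=
      (hasDerivAt_id x).prodMk (hasDerivAt_const x y)
    have h3 : HasDerivAt (fun x => trialU a s (x, y)) (fderiv ℝ (trialU a s) (x, y) (1, 0)) x :=
      HasFDerivAt.comp_hasDerivAt (f := fun x : ℝ => (x, y)) x h1 h2
    have h4 : HasDerivAt (fun x => trialU a s (x, y)) (a' x * s y + s' x * a y) x :=
      ((ha x).mul_const (s y)).add ((hs x).mul_const (a y))
    exact h3.unique h4
  have f2 : ∀ p, fderiv ℝ (trialU a s) p (0, 1) = s p.1 * a' p.2 + a p.1 * s' p.2 := by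
    rintro ⟨x, y⟩
    have h1 := (CU.differentiable (by norm_num) (x, y)).hasFDerivAt
    have h2 : HasDerivAt (fun y : ℝ => (x, y)) ((0 : ℝ), (1 : ℝ)) y :=
      (hasDerivAt_const y x).prodMk (hasDerivAt_id y)
    have h3 : HasDerivAt (fun y => trialU a s (x, y)) (fderiv ℝ (trialU a s) (x, y) (0, 1)) y :=
      HasFDerivAt.comp_hasDerivAt (f := fun y : ℝ => (x, y)) y h1 h2
    have h4 : HasDerivAt (fun y => trialU a s (x, y)) (a x * s' y + s x * a' y) y :=
      ((hs y).const_mul (a x)).add ((ha y).const_mul (s x))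
    rw [h3.unique h4]; ring
  have E2 : ∫ p in Gam, gradSq2 (trialU a s) p =
      2 * ((∫ x, a' x * a' x) * (∫ x, s x * s x) + (∫ x, a x * a x) * (∫ x, s' x * s' x) +
      2 * (∫ x, s' x * a' x) * (∫ x, s x * a x)) := by
    rw [setIntegral_eq_integral_of_forall_compl_eq_zero]
    · have t1 := integral_sq_prod (i2 hca' sa') (i2 hcs ss) (i2 hcs' ss') (i2 hca sa) (i1 hca' hcs' sa')
        (i1 hcs hca ss)
      have t2 := integral_sq_prod (i2 hcs ss) (i2 hca' sa') (i2 hca sa) (i2 hcs' ss') (i1 hcs hca ss)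
        (i1 hca' hcs' sa')
      simp only [gradSq2, f1, f2]
      rw [integral_add t1.1 t2.1, t1.2, t2.2, q a, q s, q a', q s', c a' s']; ring
    · intro p hp
      have : fderiv ℝ (trialU a s) p = 0 := by
        by_contra h
        exact hp (hUG (support_fderiv_subset ℝ h))
      simp [gradSq2, this]
  refine ⟨trialU a s, CU, hUc, hUG, ?_, ?_⟩
  · rw [E1]; positivity
  · rw [E1, E2, div_lt_iff₀ (by positivity)]; linarith
end

lemma hasDerivAt_mul_abs (t : ℝ) : HasDerivAt (fun t : ℝ => t * |t|) (2 * |t|) t := by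
  rcases lt_trichotomy t 0 with h | h | h
  · have := (hasDerivAt_id' t).mul (hasDerivAt_abs_neg h)
    refine this.congr_deriv ?_
    rw [abs_of_neg h]; ring
  · subst h
    rw [hasDerivAt_iff_tendsto_slope_zero]
    have : Tendsto (fun t : ℝ => |t|) (nhdsWithin 0 {0}ᶜ) (nhds 0) := by
      have := (continuous_abs (G := ℝ)).tendsto 0
      simp only [abs_zero] at this
      exact this.mono_left nhdsWithin_le_nhds
    simp only [abs_zero, mul_zero]
    refine this.congr' ?_
    filter_upwards [self_mem_nhdsWithin] with t ht
    have : t ≠ 0 := ht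
    simp [this]
  · have := (hasDerivAt_id' t).mul (hasDerivAt_abs_pos h)
    refine this.congr_deriv ?_
    rw [abs_of_pos h]; ring

/-- Longitudinal profile of the trial function: two parabolas with the same vertex at `1/2`,
the right one flatter, so that it is positive exactly on `(-1, 5)`. -/
def A0 (x : ℝ) : ℝ := 9 / 4 - 5 / 9 * (x - 1 / 2) ^ 2 + 4 / 9 * ((x - 1 / 2) * |x - 1 / 2|)

/-- The derivative of `A0`. -/
def A0' (x : ℝ) : ℝ := -(10 / 9) * (x - 1 / 2) + 8 / 9 * |x - 1 / 2|

/-- Transversal profile of the trial function, positive exactly on `(-1, 0)`. -/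
def S0 (x : ℝ) : ℝ := (-x ^ 2 - x) + (-x ^ 2 - x) * |-x ^ 2 - x|

/-- The derivative of `S0`. -/
def S0' (x : ℝ) : ℝ := (-2 * x - 1) * (1 + 2 * |-x ^ 2 - x|)

lemma hasDerivAt_A0 (x : ℝ) : HasDerivAt A0 (A0' x) x := by
  have h0 : HasDerivAt (fun x : ℝ => x - 1 / 2) 1 x := (hasDerivAt_id x).sub_const _
  have h1 : HasDerivAt (fun x : ℝ => (x - 1 / 2) * |x - 1 / 2|) (2 * |x - 1 / 2| * 1) x :=
    HasDerivAt.comp (h := fun x : ℝ => x - 1 / 2) x (hasDerivAt_mul_abs (x - 1 / 2)) h0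
  have h2 := (((h0.pow 2).const_mul (5 / 9)).const_sub (9 / 4)).add (h1.const_mul (4 / 9))
  refine (h2.congr_deriv ?_)
  simp [A0']; ring

lemma hasDerivAt_S0 (x : ℝ) : HasDerivAt S0 (S0' x) x := by
  have h0 : HasDerivAt (fun x : ℝ => -x ^ 2 - x) (-2 * x - 1) x := by
    refine ((((hasDerivAt_id x).pow 2).neg).sub (hasDerivAt_id x)).congr_deriv ?_
    simp
  have h1 : HasDerivAt (fun x : ℝ => (-x ^ 2 - x) * |-x ^ 2 - x|)
      (2 * |-x ^ 2 - x| * (-2 * x - 1)) x :=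
    HasDerivAt.comp (h := fun x : ℝ => -x ^ 2 - x) x (hasDerivAt_mul_abs (-x ^ 2 - x)) h0
  refine (h0.add h1).congr_deriv ?_
  simp [S0']; ring

lemma continuous_A0 : Continuous A0 := by unfold A0; fun_prop
lemma continuous_A0' : Continuous A0' := by unfold A0'; fun_prop
lemma continuous_S0 : Continuous S0 := by unfold S0; fun_prop
lemma continuous_S0' : Continuous S0' := by unfold S0'; fun_prop

lemma A0_left {x : ℝ} (h : x ≤ 1 / 2) : A0 x = 2 + x - x ^ 2 := by
  rw [A0, abs_of_nonpos (by linarith)]; ring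
lemma A0_right {x : ℝ} (h : 1 / 2 ≤ x) : A0 x = 20 / 9 + x / 9 - x ^ 2 / 9 := by
  rw [A0, abs_of_nonneg (by linarith)]; ring
lemma A0'_left {x : ℝ} (h : x ≤ 1 / 2) : A0' x = 1 - 2 * x := by
  rw [A0', abs_of_nonpos (by linarith)]; ring
lemma A0'_right {x : ℝ} (h : 1 / 2 ≤ x) : A0' x = 1 / 9 - 2 / 9 * x := by
  rw [A0', abs_of_nonneg (by linarith)]; ring

lemma A0_pos_iff (x : ℝ) : 0 < A0 x ↔ x ∈ Ioo (-1 : ℝ) 5 := by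
  rcases le_total x (1 / 2) with h | h
  · rw [A0_left h, show 2 + x - x ^ 2 = (2 - x) * (1 + x) by ring,
      mul_pos_iff_of_pos_left (by linarith)]
    constructor
    · intro h'; constructor <;> linarith
    · intro h'; linarith [h'.1]
  · rw [A0_right h, show 20 / 9 + x / 9 - x ^ 2 / 9 = (x + 4) / 9 * (5 - x) by ring,
      mul_pos_iff_of_pos_left (by linarith)]
    constructor
    · intro h'; constructor <;> linarith
    · intro h'; linarith [h'.2]

lemma S0_pos_iff (x : ℝ) : 0 < S0 x ↔ x ∈ Ioo (-1 : ℝ) 0 := by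
  have e : S0 x = (1 + |-x ^ 2 - x|) * ((-x) * (x + 1)) := by unfold S0; ring
  rw [e, mul_pos_iff_of_pos_left (by positivity)]
  constructor
  · intro h
    constructor <;> nlinarith
  · rintro ⟨h1, h2⟩
    exact mul_pos (by linarith) (by linarith)

lemma S0_eq {x : ℝ} (h : x ∈ Icc (-1 : ℝ) 0) : S0 x = -x + 2 * x ^ 3 + x ^ 4 := by
  rw [S0, abs_of_nonneg (by nlinarith [h.1, h.2])]; ring
lemma S0'_eq {x : ℝ} (h : x ∈ Icc (-1 : ℝ) 0) : S0' x = -1 + 6 * x ^ 2 + 4 * x ^ 3 := by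
  rw [S0', abs_of_nonneg (by nlinarith [h.1, h.2])]; ring

lemma integral_poly8 (c0 c1 c2 c3 c4 c5 c6 c7 c8 l r : ℝ) :
    ∫ x in l..r, (c0 + c1 * x + c2 * x ^ 2 + c3 * x ^ 3 + c4 * x ^ 4 + c5 * x ^ 5 + c6 * x ^ 6 +
      c7 * x ^ 7 + c8 * x ^ 8) =
    c0 * (r - l) + c1 * (r ^ 2 - l ^ 2) / 2 + c2 * (r ^ 3 - l ^ 3) / 3 + c3 * (r ^ 4 - l ^ 4) / 4 +
      c4 * (r ^ 5 - l ^ 5) / 5 + c5 * (r ^ 6 - l ^ 6) / 6 + c6 * (r ^ 7 - l ^ 7) / 7 +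
      c7 * (r ^ 8 - l ^ 8) / 8 + c8 * (r ^ 9 - l ^ 9) / 9 := by
  have H : ∀ x : ℝ, HasDerivAt (fun x : ℝ => c0 * x + c1 / 2 * x ^ 2 + c2 / 3 * x ^ 3 +
      c3 / 4 * x ^ 4 + c4 / 5 * x ^ 5 + c5 / 6 * x ^ 6 + c6 / 7 * x ^ 7 + c7 / 8 * x ^ 8 +
      c8 / 9 * x ^ 9) (c0 + c1 * x + c2 * x ^ 2 + c3 * x ^ 3 + c4 * x ^ 4 + c5 * x ^ 5 +
      c6 * x ^ 6 + c7 * x ^ 7 + c8 * x ^ 8) x := by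
    intro x
    have p : ∀ (k : ℕ) (c : ℝ), HasDerivAt (fun x : ℝ => c * x ^ k) (c * (k * x ^ (k - 1))) x :=
      fun k c => (hasDerivAt_pow k x).const_mul c
    have p1 : HasDerivAt (fun x : ℝ => c0 * x) (c0 * 1) x := (hasDerivAt_id x).const_mul c0
    refine (((((((((p1.add (p 2 _)).add (p 3 _)).add (p 4 _)).add (p 5 _)).add (p 6 _)).add
      (p 7 _)).add (p 8 _)).add (p 9 _))).congr_deriv ?_
    norm_num; ring
  rw [intervalIntegral.integral_eq_sub_of_hasDerivAt (fun x _ => H x)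
    ((by fun_prop : Continuous _).intervalIntegrable _ _)]
  ring

lemma integral_poly8' {f : ℝ → ℝ} {l r : ℝ} (hlr : l ≤ r) (c0 c1 c2 c3 c4 c5 c6 c7 c8 : ℝ)
    (hf : ∀ x ∈ Icc l r, f x = c0 + c1 * x + c2 * x ^ 2 + c3 * x ^ 3 + c4 * x ^ 4 + c5 * x ^ 5 +
      c6 * x ^ 6 + c7 * x ^ 7 + c8 * x ^ 8) :
    ∫ x in l..r, f x =
    c0 * (r - l) + c1 * (r ^ 2 - l ^ 2) / 2 + c2 * (r ^ 3 - l ^ 3) / 3 + c3 * (r ^ 4 - l ^ 4) / 4 +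
      c4 * (r ^ 5 - l ^ 5) / 5 + c5 * (r ^ 6 - l ^ 6) / 6 + c6 * (r ^ 7 - l ^ 7) / 7 +
      c7 * (r ^ 8 - l ^ 8) / 8 + c8 * (r ^ 9 - l ^ 9) / 9 := by
  rw [← integral_poly8]
  apply intervalIntegral.integral_congr
  rw [uIcc_of_le hlr]
  exact hf

lemma int_SS : ∫ x in (-1 : ℝ)..0, S0 x * S0 x = 31 / 630 := by
  rw [integral_poly8' (by norm_num) 0 0 1 0 (-4) (-2) 4 4 1 (fun x hx => by rw [S0_eq hx]; ring)]
  norm_num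
lemma int_dS_dS : ∫ x in (-1 : ℝ)..0, S0' x * S0' x = 17 / 35 := by
  rw [integral_poly8' (by norm_num) 1 0 (-12) (-8) 36 48 16 0 0
    (fun x hx => by rw [S0'_eq hx]; ring)]
  norm_num
lemma int_SA : ∫ x in (-1 : ℝ)..0, S0 x * A0 x = 101 / 420 := by
  rw [integral_poly8' (by norm_num) 0 (-2) (-1) 5 4 (-1) (-1) 0 0
    (fun x hx => by rw [S0_eq hx, A0_left (by linarith [hx.2])]; ring)]
  norm_num
lemma int_dS_dA : ∫ x in (-1 : ℝ)..0, S0' x * A0' x = 2 / 5 := by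
  rw [integral_poly8' (by norm_num) (-1) 2 6 (-8) (-8) 0 0 0 0
    (fun x hx => by rw [S0'_eq hx, A0'_left (by linarith [hx.2])]; ring)]
  norm_num
lemma int_AA : ∫ x in (-1 : ℝ)..5, A0 x * A0 x = 81 / 5 := by
  have hc : Continuous fun x => A0 x * A0 x := continuous_A0.mul continuous_A0
  rw [← intervalIntegral.integral_add_adjacent_intervals (b := 1 / 2)
    (hc.intervalIntegrable _ _) (hc.intervalIntegrable _ _),
    integral_poly8' (by norm_num) 4 4 (-3) (-2) 1 0 0 0 0 (fun x hx => by rw [A0_left hx.2]; ring),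
    integral_poly8' (by norm_num) (400 / 81) (40 / 81) (-39 / 81) (-2 / 81) (1 / 81) 0 0 0 0
      (fun x hx => by rw [A0_right hx.1]; ring)]
  norm_num
lemma int_dA_dA : ∫ x in (-1 : ℝ)..5, A0' x * A0' x = 6 := by
  have hc : Continuous fun x => A0' x * A0' x := continuous_A0'.mul continuous_A0'
  rw [← intervalIntegral.integral_add_adjacent_intervals (b := 1 / 2)
    (hc.intervalIntegrable _ _) (hc.intervalIntegrable _ _),
    integral_poly8' (by norm_num) 1 (-4) 4 0 0 0 0 0 0 (fun x hx => by rw [A0'_left hx.2]; ring),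
    integral_poly8' (by norm_num) (1 / 81) (-4 / 81) (4 / 81) 0 0 0 0 0 0
      (fun x hx => by rw [A0'_right hx.1]; ring)]
  norm_num

lemma tendsto_integral_Ioo {F : ℕ → ℝ → ℝ} {f K : ℝ → ℝ} {l r : ℝ} (hlr : l ≤ r)
    (hF : ∀ n, Continuous (F n)) (hK : Continuous K) (h0 : ∀ n x, x ∉ Ioo l r → F n x = 0)
    (hb : ∀ n x, x ∈ Ioo l r → |F n x| ≤ K x)
    (hl : ∀ x ∈ Ioo l r, Tendsto (fun n => F n x) atTop (nhds (f x))) :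
    Tendsto (fun n => ∫ x, F n x) atTop (nhds (∫ x in l..r, f x)) := by
  have e : ∀ n, ∫ x, F n x = ∫ x in Ioo l r, F n x := fun n =>
    (setIntegral_eq_integral_of_forall_compl_eq_zero (h0 n)).symm
  simp only [e]
  rw [intervalIntegral.integral_of_le hlr, integral_Ioc_eq_integral_Ioo]
  refine tendsto_integral_of_dominated_convergence K (fun n => (hF n).aestronglyMeasurable)
    ((hK.integrableOn_Icc (a := l) (b := r)).mono_set Ioo_subset_Icc_self) (fun n => ?_) ?_
  · filter_upwards [ae_restrict_mem measurableSet_Ioo] with x hx using hb n x hx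
  · filter_upwards [ae_restrict_mem measurableSet_Ioo] with x hx using hl x hx

lemma tendsto_GtGt {P Q : ℝ → ℝ} {l r : ℝ} (hlr : l ≤ r) (hP : Continuous P) (hQ : Continuous Q)
    (Pp : ∀ x, 0 < P x ↔ x ∈ Ioo l r) (Qp : ∀ x ∈ Ioo l r, 0 < Q x) :
    Tendsto (fun n => ∫ x, Gt (en n) (P x) * Gt (en n) (Q x)) atTop
      (nhds (∫ x in l..r, P x * Q x)) := by
  refine tendsto_integral_Ioo hlr (K := fun x => P x * Q x)
    (fun n => ((continuous_Gt (en_pos n)).comp hP).mul ((continuous_Gt (en_pos n)).comp hQ))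
    (hP.mul hQ) ?_ ?_ ?_
  · intro n x hx
    rw [Gt_of_le, zero_mul]
    exact (not_lt.1 fun h => hx ((Pp x).1 h)).trans (en_pos n).le
  · intro n x hx
    have p := ((Pp x).2 hx).le
    have q := (Qp x hx).le
    rw [abs_of_nonneg (mul_nonneg (Gt_nonneg (en_pos n) _) (Gt_nonneg (en_pos n) _))]
    exact mul_le_mul (Gt_le (en_pos n) p) (Gt_le (en_pos n) q) (Gt_nonneg (en_pos n) _) p
  · intro x hx
    exact (tendsto_Gt ((Pp x).2 hx).le en_pos en_tendsto).mul
      (tendsto_Gt (Qp x hx).le en_pos en_tendsto)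

lemma tendsto_dGt_dGt {P Q P' Q' : ℝ → ℝ} {l r : ℝ} (hlr : l ≤ r) (hP : Continuous P)
    (hQ : Continuous Q) (hP' : Continuous P') (hQ' : Continuous Q')
    (Pp : ∀ x, 0 < P x ↔ x ∈ Ioo l r) (Qp : ∀ x ∈ Ioo l r, 0 < Q x) :
    Tendsto (fun n => ∫ x, (Gt' (en n) (P x) * P' x) * (Gt' (en n) (Q x) * Q' x)) atTop
      (nhds (∫ x in l..r, P' x * Q' x)) := by
  refine tendsto_integral_Ioo hlr (K := fun x => |P' x| * |Q' x|)
    (fun n => (((continuous_Gt' (en_pos n)).comp hP).mul hP').mul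
      (((continuous_Gt' (en_pos n)).comp hQ).mul hQ'))
    (hP'.abs.mul hQ'.abs) ?_ ?_ ?_
  · intro n x hx
    rw [Gt'_of_le (en_pos n), zero_mul, zero_mul]
    exact (not_lt.1 fun h => hx ((Pp x).1 h)).trans (en_pos n).le
  · intro n x hx
    have b : ∀ z y : ℝ, |Gt' (en n) z * y| ≤ |y| := by
      intro z y
      rw [abs_mul, abs_of_nonneg (Gt'_nonneg (en_pos n) z)]
      exact mul_le_of_le_one_left (abs_nonneg _) (Gt'_le_one z)
    rw [abs_mul]
    exact mul_le_mul (b _ _) (b _ _) (abs_nonneg _) (abs_nonneg _)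
  · intro x hx
    have p := (tendsto_Gt' ((Pp x).2 hx) en_tendsto).mul_const (P' x)
    have q := (tendsto_Gt' (Qp x hx) en_tendsto).mul_const (Q' x)
    simpa using p.mul q

lemma tsupport_Gt {P : ℝ → ℝ} {l r : ℝ} (hP : Continuous P)
    (Pp : ∀ x, 0 < P x ↔ x ∈ Ioo l r) (n : ℕ) :
    tsupport (fun x => Gt (en n) (P x)) ⊆ Ioo l r ∧
      HasCompactSupport fun x => Gt (en n) (P x) := by
  have h1 : tsupport (fun x => Gt (en n) (P x)) ⊆ {x | en n ≤ P x} := by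
    refine closure_minimal (fun x hx => ?_) (isClosed_le continuous_const hP)
    by_contra h
    exact hx (Gt_of_le (not_le.1 h).le)
  have h2 : tsupport (fun x => Gt (en n) (P x)) ⊆ Ioo l r := fun x hx =>
    (Pp x).1 ((en_pos n).trans_le (h1 hx))
  exact ⟨h2, isCompact_Icc.of_isClosed_subset (isClosed_tsupport _) (h2.trans Ioo_subset_Icc_self)⟩

/-- The trial functions `a(x) s(y) + s(x) a(y)` with `a`, `s` close to the profiles `A0`, `S0` have
Rayleigh quotient below `π²`. -/
lemma exists_trial : ∃ u : ℝ × ℝ → ℝ, ContDiff ℝ 1 u ∧ HasCompactSupport u ∧ tsupport u ⊆ Gam ∧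
    (∫ p in Gam, (u p) ^ 2) ≠ 0 ∧
    (∫ p in Gam, gradSq2 u p) / (∫ p in Gam, (u p) ^ 2) < π ^ 2 := by
  have Sp := S0_pos_iff
  have Ap := A0_pos_iff
  have SAp : ∀ x ∈ Ioo (-1 : ℝ) 0, 0 < A0 x := fun x hx =>
    (Ap x).2 ⟨hx.1, hx.2.trans (by norm_num)⟩
  have tAA := tendsto_GtGt (by norm_num) continuous_A0 continuous_A0 Ap fun x => (Ap x).2
  have tSS := tendsto_GtGt (by norm_num) continuous_S0 continuous_S0 Sp fun x => (Sp x).2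
  have tSA := tendsto_GtGt (by norm_num) continuous_S0 continuous_A0 Sp SAp
  have tAA' := tendsto_dGt_dGt (by norm_num) continuous_A0 continuous_A0 continuous_A0'
    continuous_A0' Ap fun x => (Ap x).2
  have tSS' := tendsto_dGt_dGt (by norm_num) continuous_S0 continuous_S0 continuous_S0'
    continuous_S0' Sp fun x => (Sp x).2
  have tSA' := tendsto_dGt_dGt (by norm_num) continuous_S0 continuous_A0 continuous_S0'
    continuous_A0' Sp SAp
  rw [int_AA] at tAA
  rw [int_SS] at tSS
  rw [int_SA] at tSA
  rw [int_dA_dA] at tAA'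
  rw [int_dS_dS] at tSS'
  rw [int_dS_dA] at tSA'
  have T1 := (tAA.mul tSS).add (tSA.pow 2)
  have T2 := ((tAA'.mul tSS).add (tAA.mul tSS')).add ((tSA'.const_mul 2).mul tSA)
  have hpi : (3.14 : ℝ) ^ 2 ≤ π ^ 2 := by
    have := Real.pi_gt_d2
    gcongr
  have hlim : (6 : ℝ) * (31 / 630) + 81 / 5 * (17 / 35) + 2 * (2 / 5) * (101 / 420) <
      π ^ 2 * (81 / 5 * (31 / 630) + (101 / 420) ^ 2) := by
    refine lt_of_lt_of_le ?_ (mul_le_mul_of_nonneg_right hpi (by norm_num))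
    norm_num
  have e1 := T1.eventually_const_lt (show (0 : ℝ) < 81 / 5 * (31 / 630) + (101 / 420) ^ 2 by norm_num)
  have e2 := T2.eventually_lt (T1.const_mul (π ^ 2)) hlim
  obtain ⟨n, h1, h2⟩ := (e1.and e2).exists
  have dv : ∀ {P P' : ℝ → ℝ}, (∀ x, HasDerivAt P (P' x) x) → ∀ x,
      HasDerivAt (fun x => Gt (en n) (P x)) (Gt' (en n) (P x) * P' x) x := fun h x =>
    (hasDerivAt_Gt (en_pos n) _).comp x (h x)
  have cv : ∀ {P P' : ℝ → ℝ}, Continuous P → Continuous P' →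
      Continuous fun x => Gt' (en n) (P x) * P' x := fun h h' =>
    ((continuous_Gt' (en_pos n)).comp h).mul h'
  exact trial_criterion (dv hasDerivAt_A0) (dv hasDerivAt_S0) (cv continuous_A0 continuous_A0')
    (cv continuous_S0 continuous_S0') (tsupport_Gt continuous_A0 Ap n).2
    (tsupport_Gt continuous_S0 Sp n).2
    ((tsupport_Gt continuous_A0 Ap n).1.trans Ioo_subset_Ioi_self)
    (tsupport_Gt continuous_S0 Sp n).1 h1 h2

/-- Lemma 2.8: let `R ↦ v_R` be the family of positive normalized
first eigenfunctions on `Γ_R` and `w_R = ∂_R v_R` its pointwise derivative in `R`.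
Then there is a constant `C` such that for all `R ≥ 1`,
`‖w_R‖_{H¹(Γ_R)} ≤ C e^{−Rω}` with `ω = √(π² − λ₁(Γ))`. -/
theorem deriv_eigenfunction_decay :
    ∀ v w : ℝ → (ℝ × ℝ → ℝ),
      (∀ R : ℝ, 0 < R → IsFirstEF R (v R)) →
      (∀ R : ℝ, 0 < R → ∀ p : ℝ × ℝ, HasDerivAt (fun r => v r p) (w R p) R) →
      ∃ C : ℝ, ∀ R : ℝ, 1 ≤ R →
        Real.sqrt (∫ p in GamR R, ((w R p) ^ 2 + gradSq2 (w R) p)) ≤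
          C * Real.exp (-R * omega) := by
  intro v w hv hw
  obtain ⟨hG, hL⟩ := spectral_of_trial exists_trial
  exact ⟨2 * Cst lamG, fun R hR => decay_of_lam hG hL hv hw hR⟩
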